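/- Let 1 ≤ p, q, r, s ≤ ∞ satisfy 1/p ≥ |1/r − 1/2| + 1/q' and q ≤ min{r, r', s, s'}. Then there exists a constant C > 0 such that for every Schwartz function a on ℝ^{2d} and every Schwartz function f on ℝ^d one has ‖a(x,D)f‖_{W(L^r,L^s)} ≤ C · ‖a‖_{M^{p,q}} · ‖f‖_{W(L^r,L^s)}. -/

import Mathlib

open MeasureTheory SchwartzMap Complex ENNReal NNReal

noncomputable section

/-- Mixed `L^p`-type norm of an `ℝ≥0∞`-valued function, with the usual
`essSup` modification when `p = ∞`. -/
def lqNorm {α : Type*} [MeasurableSpace α] (μ : Measure α) (p : ℝ≥0∞)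
    (f : α → ℝ≥0∞) : ℝ≥0∞ :=
  if p = ∞ then essSup f μ else (∫⁻ a, f a ^ p.toReal ∂μ) ^ (1 / p.toReal)

/-- Conjugate exponent in `ℝ≥0∞` : `1/p + 1/p' = 1`, with `1' = ∞`, `∞' = 1`. -/
def dualExp (p : ℝ≥0∞) : ℝ≥0∞ :=
  if p = 1 then ∞ else if p = ∞ then 1 else ENNReal.ofReal (p.toReal / (p.toReal - 1))

/-- `1/p` as a real number, with the convention `1/∞ = 0`. -/
def invR (p : ℝ≥0∞) : ℝ := (p⁻¹).toReal

/-- The Gaussian window `G(t) = exp(-π |t|²)` (as a complex-valued function). -/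
def gaussWin {ι : Type*} [Fintype ι] (t : EuclideanSpace ℝ ι) : ℂ :=
  Complex.exp (-(Real.pi * ‖t‖ ^ 2))

/-- Short-time Fourier transform with Gaussian window:
`V_G F (x, ω) = ∫ F t * conj (G (t - x)) * exp (-2πi ω⬝t) dt`. -/
def STFT {ι : Type*} [Fintype ι] (F : EuclideanSpace ℝ ι → ℂ)
    (x ω : EuclideanSpace ℝ ι) : ℂ :=
  ∫ t, F t * (starRingEnd ℂ) (gaussWin (t - x)) *
    Complex.exp (Complex.I * (-(2 * Real.pi * (inner ℝ ω t : ℝ))))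

/-- Modulation space norm `M^{p,q}`. -/
def modNorm {ι : Type*} [Fintype ι] (p q : ℝ≥0∞)
    (F : EuclideanSpace ℝ ι → ℂ) : ℝ≥0∞ :=
  lqNorm volume q fun ω => lqNorm volume p fun x => (‖STFT F x ω‖₊ : ℝ≥0∞)

/-- Wiener amalgam norm `W(𝓕 L^p, L^q)` (local component Fourier–Lebesgue). -/
def wFLNorm {ι : Type*} [Fintype ι] (p q : ℝ≥0∞)
    (F : EuclideanSpace ℝ ι → ℂ) : ℝ≥0∞ :=
  lqNorm volume q fun x => lqNorm volume p fun ω => (‖STFT F x ω‖₊ : ℝ≥0∞)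

/-- The unit cube `[0,1)^d`. -/
def unitCube (d : ℕ) : Set (EuclideanSpace ℝ (Fin d)) :=
  {x | ∀ i, x i ∈ Set.Ico (0 : ℝ) 1}

/-- Wiener amalgam norm
`‖f‖_{W(L^r,L^s)} = ( Σ_{n ∈ ℤ^d} ( ∫_{[0,1)^d} |f(x+n)|^r dx )^{s/r} )^{1/s}`. -/
def wNorm (d : ℕ) (r s : ℝ≥0∞) (f : EuclideanSpace ℝ (Fin d) → ℂ) : ℝ≥0∞ :=
  lqNorm (Measure.count : Measure (Fin d → ℤ)) s fun n =>
    lqNorm (volume.restrict (unitCube d)) r fun x =>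
      (‖f (x + show EuclideanSpace ℝ (Fin d) from WithLp.toLp 2 fun i => (n i : ℝ))‖₊ : ℝ≥0∞)

/-- Pairing `(x, ω) ∈ ℝ^d × ℝ^d ↦ ℝ^{2d}`. -/
def pairE {d : ℕ} (x ω : EuclideanSpace ℝ (Fin d)) :
    EuclideanSpace ℝ (Fin d ⊕ Fin d) :=
  WithLp.toLp 2 fun i => Sum.elim (fun j => x j) (fun j => ω j) i

/-- First (space) component of a point of `ℝ^{2d}`. -/
def xpart {d : ℕ} (z : EuclideanSpace ℝ (Fin d ⊕ Fin d)) :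
    EuclideanSpace ℝ (Fin d) := WithLp.toLp 2 fun i => z (Sum.inl i)

/-- Second (frequency) component of a point of `ℝ^{2d}`. -/
def wpart {d : ℕ} (z : EuclideanSpace ℝ (Fin d ⊕ Fin d)) :
    EuclideanSpace ℝ (Fin d) := WithLp.toLp 2 fun i => z (Sum.inr i)

/-- Fourier transform `f̂(ω) = ∫ f t e^{-2πi t⬝ω} dt`. -/
def fTrans {ι : Type*} [Fintype ι] (f : EuclideanSpace ℝ ι → ℂ)
    (ω : EuclideanSpace ℝ ι) : ℂ :=
  ∫ t, f t * Complex.exp (Complex.I * (-(2 * Real.pi * (inner ℝ t ω : ℝ))))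

/-- Kohn–Nirenberg operator `a(x,D) f (x) = ∫ a(x,ω) f̂(ω) e^{2πi x⬝ω} dω`. -/
def KNop {d : ℕ} (a : EuclideanSpace ℝ (Fin d ⊕ Fin d) → ℂ)
    (f : EuclideanSpace ℝ (Fin d) → ℂ) (x : EuclideanSpace ℝ (Fin d)) : ℂ :=
  ∫ ω, a (pairE x ω) * fTrans f ω *
    Complex.exp (Complex.I * (2 * Real.pi * (inner ℝ x ω : ℝ)))

/-- Weyl operator `L_σ f (x) = ∫∫ e^{2πi (x-y)⬝ω} σ((x+y)/2, ω) f(y) dy dω`. -/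
def weylOp {d : ℕ} (σ : EuclideanSpace ℝ (Fin d ⊕ Fin d) → ℂ)
    (f : EuclideanSpace ℝ (Fin d) → ℂ) (x : EuclideanSpace ℝ (Fin d)) : ℂ :=
  ∫ y, ∫ ω, Complex.exp (Complex.I * (2 * Real.pi * (inner ℝ (x - y) ω : ℝ))) *
    σ (pairE ((2 : ℝ)⁻¹ • (x + y)) ω) * f y

/-- Cross-Wigner distribution
`W(g,f)(x,ω) = ∫ g(x+t/2) conj(f(x−t/2)) e^{−2πi ω⬝t} dt`. -/
def wigner {d : ℕ} (g f : EuclideanSpace ℝ (Fin d) → ℂ)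
    (z : EuclideanSpace ℝ (Fin d ⊕ Fin d)) : ℂ :=
  ∫ t, g (xpart z + (2 : ℝ)⁻¹ • t) * (starRingEnd ℂ) (f (xpart z - (2 : ℝ)⁻¹ • t)) *
    Complex.exp (Complex.I * (-(2 * Real.pi * (inner ℝ (wpart z) t : ℝ))))

end


section GeneralLq

theorem lqNorm_eq_eLpNorm {α : Type*} [MeasurableSpace α] (μ : Measure α) {p : ℝ≥0∞}
    (hp : 1 ≤ p) (f : α → ℝ≥0∞) : lqNorm μ p f = eLpNorm f p μ := by
  have hp0 : p ≠ 0 := (zero_lt_one.trans_le hp).ne'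
  unfold lqNorm
  split_ifs with h
  · subst h
    simp [eLpNormEssSup]
  · rw [eLpNorm_eq_lintegral_rpow_enorm_toReal hp0 h]
    simp

theorem lq_of_ne_top {α : Type*} [MeasurableSpace α] (μ : Measure α) {p : ℝ≥0∞}
    (hp : p ≠ ∞) (f : α → ℝ≥0∞) :
    lqNorm μ p f = (∫⁻ a, f a ^ p.toReal ∂μ) ^ (1 / p.toReal) := by
  simp [lqNorm, hp]

theorem lq_top {α : Type*} [MeasurableSpace α] (μ : Measure α) (f : α → ℝ≥0∞) :
    lqNorm μ ∞ f = essSup f μ := by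
  simp [lqNorm]

theorem one_le_toReal {p : ℝ≥0∞} (hp : 1 ≤ p) (h : p ≠ ∞) : 1 ≤ p.toReal := by
  have := ENNReal.toReal_mono h hp
  simpa using this

theorem lq_mono_ae {α : Type*} [MeasurableSpace α] {μ : Measure α} {p : ℝ≥0∞}
    (hp : 1 ≤ p) {f g : α → ℝ≥0∞} (h : ∀ᵐ x ∂μ, f x ≤ g x) :
    lqNorm μ p f ≤ lqNorm μ p g := by
  rw [lqNorm_eq_eLpNorm μ hp, lqNorm_eq_eLpNorm μ hp]
  exact eLpNorm_mono_enorm_ae (by simpa using h)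

theorem lq_const_mul {α : Type*} [MeasurableSpace α] {μ : Measure α} {p : ℝ≥0∞}
    (hp : 1 ≤ p) {f : α → ℝ≥0∞} (hf : Measurable f) (c : ℝ≥0∞) :
    lqNorm μ p (fun x => c * f x) = c * lqNorm μ p f := by
  by_cases h : p = ∞
  · subst h
    rw [lq_top, lq_top, ENNReal.essSup_const_mul]
  · have := one_le_toReal hp h
    rw [lq_of_ne_top μ h, lq_of_ne_top μ h]
    simp_rw [ENNReal.mul_rpow_of_nonneg _ _ (by linarith : 0 ≤ p.toReal)]
    rw [lintegral_const_mul _ (hf.pow_const _), ENNReal.mul_rpow_of_nonneg _ _ (by positivity),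
      ← ENNReal.rpow_mul, mul_one_div_cancel (by linarith), ENNReal.rpow_one]

theorem lq_add_le {α : Type*} [MeasurableSpace α] {μ : Measure α} {p : ℝ≥0∞}
    (hp : 1 ≤ p) {f g : α → ℝ≥0∞} (hf : Measurable f) (hg : Measurable g) :
    lqNorm μ p (fun x => f x + g x) ≤ lqNorm μ p f + lqNorm μ p g := by
  rw [lqNorm_eq_eLpNorm μ hp, lqNorm_eq_eLpNorm μ hp, lqNorm_eq_eLpNorm μ hp]
  exact eLpNorm_add_le hf.aestronglyMeasurable hg.aestronglyMeasurable hp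

theorem lq_mono_exponent {α : Type*} [MeasurableSpace α] {μ : Measure α} [IsProbabilityMeasure μ]
    {p q : ℝ≥0∞} (hp : 1 ≤ p) (hpq : p ≤ q) {f : α → ℝ≥0∞} (hf : Measurable f) :
    lqNorm μ p f ≤ lqNorm μ q f := by
  rw [lqNorm_eq_eLpNorm μ hp, lqNorm_eq_eLpNorm μ (hp.trans hpq)]
  exact eLpNorm_le_eLpNorm_of_exponent_le hpq hf.aestronglyMeasurable

/-- Convolution inequality `L^1 * L^s ⊂ L^s`. -/
theorem lq_conv_le {X : Type*} [AddCommGroup X] [MeasurableSpace X] [MeasurableAdd₂ X]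
    [MeasurableNeg X] (μ : Measure X) [SFinite μ] [μ.IsAddLeftInvariant] [μ.IsNegInvariant]
    {s : ℝ≥0∞} (hs : 1 ≤ s) {c A : X → ℝ≥0∞} (hc : Measurable c) (hA : Measurable A) :
    lqNorm μ s (fun x => ∫⁻ y, c y * A (x - y) ∂μ) ≤ (∫⁻ y, c y ∂μ) * lqNorm μ s A := by
  by_cases h : s = ∞
  · subst h
    rw [lq_top, lq_top]
    refine essSup_le_of_ae_le _ (Filter.Eventually.of_forall fun x => ?_)
    have h1 : ∀ᵐ y ∂μ, A (x - y) ≤ essSup A μ :=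
      (Measure.measurePreserving_sub_left μ x).quasiMeasurePreserving.ae (ENNReal.ae_le_essSup A)
    rw [← lintegral_mul_const _ hc]
    refine lintegral_mono_ae ?_
    filter_upwards [h1] with y hy
    gcongr
  · have h1 := one_le_toReal hs h
    set t := s.toReal with ht
    have ht0 : 0 < t := by linarith
    rw [lq_of_ne_top μ h, lq_of_ne_top μ h]
    set C := ∫⁻ y, c y ∂μ
    have key : ∀ x, (∫⁻ y, c y * A (x - y) ∂μ) ^ t
        ≤ C ^ (t - 1) * ∫⁻ y, c y * A (x - y) ^ t ∂μ := by
      intro x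
      have hm : Measurable fun y => A (x - y) := hA.comp (measurable_const.sub measurable_id)
      have := ENNReal.lintegral_mul_norm_pow_le (μ := μ) (f := c)
        (g := fun y => c y * A (x - y) ^ t) hc.aemeasurable
        (hc.mul (hm.pow_const _)).aemeasurable (p := 1 - 1 / t) (q := 1 / t)
        (by rw [sub_nonneg, div_le_one ht0]; exact h1) (by positivity) (by ring)
      have e : ∀ y, c y ^ (1 - 1 / t) * (c y * A (x - y) ^ t) ^ (1 / t) = c y * A (x - y) := by
        intro y
        rw [ENNReal.mul_rpow_of_nonneg _ _ (by positivity), ← ENNReal.rpow_mul,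
          mul_one_div_cancel ht0.ne', ENNReal.rpow_one, ← mul_assoc,
          ← ENNReal.rpow_add_of_nonneg _ _ (by rw [sub_nonneg, div_le_one ht0]; exact h1)
            (by positivity)]
        simp
      simp_rw [e] at this
      calc _ ≤ (C ^ (1 - 1 / t) * (∫⁻ y, c y * A (x - y) ^ t ∂μ) ^ (1 / t)) ^ t := by
            gcongr
        _ = _ := by
            rw [ENNReal.mul_rpow_of_nonneg _ _ ht0.le, ← ENNReal.rpow_mul, ← ENNReal.rpow_mul,
              one_div_mul_cancel ht0.ne', ENNReal.rpow_one]
            congr 2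
            field_simp
    calc (∫⁻ x, (∫⁻ y, c y * A (x - y) ∂μ) ^ t ∂μ) ^ (1 / t)
        ≤ (∫⁻ x, C ^ (t - 1) * ∫⁻ y, c y * A (x - y) ^ t ∂μ ∂μ) ^ (1 / t) := by
          gcongr with x
          exact key x
      _ = (C ^ (t - 1) * (C * ∫⁻ x, A x ^ t ∂μ)) ^ (1 / t) := by
          have hm : Measurable fun z : X × X => c z.2 * A (z.1 - z.2) ^ t :=
            (hc.comp measurable_snd).mul ((hA.comp (measurable_fst.sub measurable_snd)).pow_const _)
          congr 1
          rw [lintegral_const_mul _ hm.lintegral_prod_right, lintegral_lintegral_swap hm.aemeasurable]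
          congr 1
          rw [← lintegral_mul_const _ hc]
          congr 1
          ext y
          rw [lintegral_const_mul]
          · congr 1
            exact lintegral_sub_right_eq_self (fun x => A x ^ t) y
          · exact (hA.comp (measurable_id.sub measurable_const)).pow_const _
      _ = C * (∫⁻ x, A x ^ t ∂μ) ^ (1 / t) := by
          have : C ^ (t - 1) * (C * ∫⁻ x, A x ^ t ∂μ) = C ^ t * ∫⁻ x, A x ^ t ∂μ := by
            rw [← mul_assoc]
            congr 1
            nth_rewrite 2 [← ENNReal.rpow_one C]
            rw [← ENNReal.rpow_add_of_nonneg _ _ (by linarith) (by norm_num)]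
            simp
          rw [this, ENNReal.mul_rpow_of_nonneg _ _ (by positivity), ← ENNReal.rpow_mul,
            mul_one_div_cancel ht0.ne', ENNReal.rpow_one]

/-- Hölder's inequality with one `lqNorm`. -/
theorem lq_holder {α : Type*} [MeasurableSpace α] (μ : Measure α) {p : ℝ≥0∞}
    (hp : 1 < p) {f g : α → ℝ≥0∞} (hf : Measurable f) (hg : Measurable g) :
    ∫⁻ x, f x * g x ∂μ
      ≤ lqNorm μ p f * (∫⁻ x, g x ^ (1 / (1 - invR p)) ∂μ) ^ (1 - invR p) := by
  by_cases h : p = ∞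
  · subst h
    rw [lq_top]
    simp only [invR, ENNReal.inv_top, ENNReal.toReal_zero, sub_zero, div_one, ENNReal.rpow_one]
    rw [← lintegral_const_mul _ hg]
    refine lintegral_mono_ae ?_
    filter_upwards [ENNReal.ae_le_essSup f] with x hx
    gcongr
  · have h1 : 1 < p.toReal := by
      have := (ENNReal.toReal_lt_toReal (by simp) h).2 hp
      simpa using this
    rw [lq_of_ne_top μ h]
    have e : invR p = 1 / p.toReal := by simp [invR]
    rw [e]
    have hc : Real.HolderConjugate p.toReal (1 / (1 - 1 / p.toReal)) := by
      rw [Real.holderConjugate_iff]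
      refine ⟨h1, ?_⟩
      simp
    have := ENNReal.lintegral_mul_le_Lp_mul_Lq μ hc hf.aemeasurable hg.aemeasurable
    simpa using this

/-- Trilinear Young inequality. -/
theorem young3 {X : Type*} [AddCommGroup X] [MeasurableSpace X] [MeasurableAdd₂ X]
    (μ : Measure X) [SFinite μ] [μ.IsAddLeftInvariant]
    {u v w : X → ℝ≥0∞} (hu : Measurable u) (hv : Measurable v) (hw : Measurable w)
    {a b c : ℝ} (ha : a ≤ 1) (hb : b ≤ 1) (hc : c ≤ 1) (h : a + b + c = 2) :
    ∫⁻ z, ∫⁻ x, u (x + z) ^ a * v x ^ b * w z ^ c ∂μ ∂μ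
      ≤ (∫⁻ x, u x ∂μ) ^ a * (∫⁻ x, v x ∂μ) ^ b * (∫⁻ x, w x ∂μ) ^ c := by
  have pw : ∀ U V W : ℝ≥0∞, U ^ a * V ^ b * W ^ c
      = (U * V) ^ (1 - c) * (V * W) ^ (1 - a) * (U * W) ^ (1 - b) := by
    intro U V W
    rw [ENNReal.mul_rpow_of_nonneg _ _ (by linarith), ENNReal.mul_rpow_of_nonneg _ _ (by linarith),
      ENNReal.mul_rpow_of_nonneg _ _ (by linarith)]
    have e1 : U ^ a = U ^ (1 - c) * U ^ (1 - b) := by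
      rw [← ENNReal.rpow_add_of_nonneg _ _ (by linarith) (by linarith)]
      congr 1; linarith
    have e2 : V ^ b = V ^ (1 - c) * V ^ (1 - a) := by
      rw [← ENNReal.rpow_add_of_nonneg _ _ (by linarith) (by linarith)]
      congr 1; linarith
    have e3 : W ^ c = W ^ (1 - a) * W ^ (1 - b) := by
      rw [← ENNReal.rpow_add_of_nonneg _ _ (by linarith) (by linarith)]
      congr 1; linarith
    rw [e1, e2, e3]; ring
  have m1 : Measurable fun q : X × X => u (q.2 + q.1) := hu.comp (measurable_snd.add measurable_fst)
  have m2 : Measurable fun q : X × X => v q.2 := hv.comp measurable_snd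
  have m3 : Measurable fun q : X × X => w q.1 := hw.comp measurable_fst
  rw [pw]
  simp_rw [pw]
  rw [← lintegral_prod (fun q : X × X => (u (q.2 + q.1) * v q.2) ^ (1 - c) *
    (v q.2 * w q.1) ^ (1 - a) * (u (q.2 + q.1) * w q.1) ^ (1 - b))
    ((((m1.mul m2).pow_const _).mul ((m2.mul m3).pow_const _)).mul
      ((m1.mul m3).pow_const _)).aemeasurable]
  have H := ENNReal.lintegral_prod_norm_pow_le (μ := μ.prod μ) (Finset.univ : Finset (Fin 3))
    (f := ![fun q => u (q.2 + q.1) * v q.2, fun q => v q.2 * w q.1, fun q => u (q.2 + q.1) * w q.1])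
    (p := ![1 - c, 1 - a, 1 - b])
    (by intro i _; fin_cases i
        · exact (m1.mul m2).aemeasurable
        · exact (m2.mul m3).aemeasurable
        · exact (m1.mul m3).aemeasurable)
    (by simp [Fin.sum_univ_three]; linarith)
    (by intro i _; fin_cases i <;> simp <;> linarith)
  simp only [Fin.prod_univ_three] at H
  simp only [Matrix.cons_val_zero, Matrix.cons_val_one, Matrix.cons_val] at H
  have I1 : ∫⁻ q : X × X, u (q.2 + q.1) * v q.2 ∂μ.prod μ = (∫⁻ x, u x ∂μ) * ∫⁻ x, v x ∂μ := by
    rw [lintegral_prod_symm (fun q : X × X => u (q.2 + q.1) * v q.2) (m1.mul m2).aemeasurable,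
      ← lintegral_const_mul _ hv]
    congr 1; ext y
    dsimp only
    rw [lintegral_mul_const (μ := μ) (v y) (f := fun x => u (y + x)) (by fun_prop)]
    congr 1
    exact lintegral_add_left_eq_self u y
  have I2 : ∫⁻ q : X × X, v q.2 * w q.1 ∂μ.prod μ = (∫⁻ x, v x ∂μ) * ∫⁻ x, w x ∂μ := by
    rw [lintegral_prod (fun q : X × X => v q.2 * w q.1) (m2.mul m3).aemeasurable,
      ← lintegral_const_mul _ hw]
    congr 1; ext y
    dsimp only
    rw [lintegral_mul_const _ hv]
  have I3 : ∫⁻ q : X × X, u (q.2 + q.1) * w q.1 ∂μ.prod μ = (∫⁻ x, u x ∂μ) * ∫⁻ x, w x ∂μ := by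
    rw [lintegral_prod (fun q : X × X => u (q.2 + q.1) * w q.1) (m1.mul m3).aemeasurable,
      ← lintegral_const_mul _ hw]
    congr 1; ext y
    dsimp only
    rw [lintegral_mul_const (μ := μ) (w y) (f := fun x => u (x + y)) (by fun_prop)]
    congr 1
    exact lintegral_add_right_eq_self u y
  rw [I1, I2, I3] at H
  exact H

end GeneralLq


section Trilinear

theorem measurable_lq_param {α β : Type*} [MeasurableSpace α] [MeasurableSpace β]
    (μ : Measure α) [SFinite μ] (p : ℝ≥0∞) {V : α × β → ℝ≥0∞} (hV : Measurable V) :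
    Measurable fun b => lqNorm μ p fun a => V (a, b) := by
  by_cases h : p = ∞
  · subst h
    simp_rw [lq_top]
    refine measurable_of_Ioi fun c => ?_
    have : (fun b => essSup (fun a => V (a, b)) μ) ⁻¹' Set.Ioi c
        = {b | μ ((fun a => (a, b)) ⁻¹' {z | c < V z}) = 0}ᶜ := by
      ext b
      simp only [Set.mem_preimage, Set.mem_Ioi, Set.mem_compl_iff, Set.mem_ofPred_eq]
      rw [← not_le, not_iff_not]
      constructor
      · intro hb
        have h1 : ∀ᵐ a ∂μ, V (a, b) ≤ c :=
          (ENNReal.ae_le_essSup fun a => V (a, b)).mono fun a ha => ha.trans hb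
        rw [ae_iff] at h1
        simpa using h1
      · intro hb
        refine essSup_le_of_ae_le _ ?_
        change ∀ᵐ a ∂μ, V (a, b) ≤ c
        rw [ae_iff]
        simpa using hb
    rw [this]
    have hs : MeasurableSet {z | c < V z} := measurableSet_lt measurable_const hV
    exact ((measurable_measure_prodMk_right hs) (measurableSet_singleton 0)).compl
  · simp_rw [lq_of_ne_top μ h]
    exact (hV.pow_const _).lintegral_prod_left'.pow_const _

theorem lq_eq_zero_ae {α : Type*} [MeasurableSpace α] {μ : Measure α} {p : ℝ≥0∞}
    (hp : 1 ≤ p) {f : α → ℝ≥0∞} (hf : Measurable f) (h : lqNorm μ p f = 0) :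
    ∀ᵐ x ∂μ, f x = 0 := by
  rw [lqNorm_eq_eLpNorm μ hp,
    eLpNorm_eq_zero_iff hf.aestronglyMeasurable (zero_lt_one.trans_le hp).ne'] at h
  exact h

/-- Normalisation: a function in `L^p` is its norm times `u^{1/p}` with `∫ u ≤ 1`. -/
theorem lq_repr_le {α : Type*} [MeasurableSpace α] {μ : Measure α} {p : ℝ≥0∞}
    (hp : 1 ≤ p) {f : α → ℝ≥0∞} (hf : Measurable f) (h : lqNorm μ p f ≠ ∞) :
    (∫⁻ x, f x ^ p.toReal / lqNorm μ p f ^ p.toReal ∂μ ≤ 1 ∨ p = ∞) ∧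
    ∀ᵐ x ∂μ, f x ≤ lqNorm μ p f * (f x ^ p.toReal / lqNorm μ p f ^ p.toReal) ^ invR p := by
  by_cases hpt : p = ∞
  · subst hpt
    refine ⟨Or.inr rfl, ?_⟩
    rw [lq_top]
    filter_upwards [ENNReal.ae_le_essSup f] with x hx
    simpa [invR] using hx
  · have h1 := one_le_toReal hp hpt
    by_cases h0 : lqNorm μ p f = 0
    · have h2 := lq_eq_zero_ae hp hf h0
      refine ⟨Or.inl ?_, ?_⟩
      · rw [lintegral_congr_ae (g := fun _ => 0)]
        · simp
        · filter_upwards [h2] with x hx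
          rw [hx, ENNReal.zero_rpow_of_pos (by linarith)]
          simp
      · filter_upwards [h2] with x hx
        rw [hx]; simp
    · set N := lqNorm μ p f with hN
      have hNp0 : N ^ p.toReal ≠ 0 := by
        simp [ENNReal.rpow_eq_zero_iff, h0, h]
      have hNpt : N ^ p.toReal ≠ ∞ := ENNReal.rpow_ne_top_of_nonneg (by linarith) h
      refine ⟨Or.inl ?_, Filter.Eventually.of_forall fun x => ?_⟩
      · simp_rw [div_eq_mul_inv]
        rw [lintegral_mul_const _ (hf.pow_const _)]
        have : ∫⁻ x, f x ^ p.toReal ∂μ = N ^ p.toReal := by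
          rw [hN, lq_of_ne_top μ hpt, ← ENNReal.rpow_mul, one_div_mul_cancel (by linarith),
            ENNReal.rpow_one]
        rw [this, ENNReal.mul_inv_cancel hNp0 hNpt]
      · have e : invR p = 1 / p.toReal := by simp [invR]
        rw [e, ENNReal.div_rpow_of_nonneg _ _ (by positivity), ← ENNReal.rpow_mul, ← ENNReal.rpow_mul,
          mul_one_div_cancel (by linarith), ENNReal.rpow_one, ENNReal.rpow_one]
        rw [ENNReal.mul_div_cancel h0 h]

theorem trilin {X : Type*} [AddCommGroup X] [MeasurableSpace X] [MeasurableAdd₂ X]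
    (μ : Measure X) [SFinite μ] [μ.IsAddLeftInvariant] {p q : ℝ≥0∞} (hp : 1 < p) (hq : 1 ≤ q)
    (hqt : q ≠ ∞) (hpq : invR p ≤ invR q)
    {V : (X × X) × (X × X) → ℝ≥0∞} (hV : Measurable V)
    {m mu : X → ℝ≥0∞} {u k : X × X → ℝ≥0∞} (hm : Measurable m) (hmu : Measurable mu)
    (hu : Measurable u) (hk : Measurable k)
    (im : ∫⁻ x, m x ∂μ ≤ 1) (imu : ∫⁻ x, mu x ∂μ ≤ 1)
    {s₁ s₂ a b : ℝ} (s10 : 0 ≤ s₁) (s20 : 0 ≤ s₂) (a0 : 0 ≤ a) (b0 : 0 ≤ b)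
    (iu : a = 0 ∨ ∀ x, ∫⁻ y, u (x, y) ∂μ ≤ 1) (ik : b = 0 ∨ ∀ x, ∫⁻ y, k (x, y) ∂μ ≤ 1)
    (s1 : s₁ ≤ 1 - invR p) (s2 : s₂ ≤ 1 - invR p) (ha : a ≤ 1 - invR p) (hb : b ≤ 1 - invR p)
    (hs : s₁ + s₂ = (1 - invR p) + (1 - invR q)) (hab : a + b = (1 - invR p) + (1 - invR q)) :
    ∫⁻ ζ : X × X, ∫⁻ z : X × X, V (z, ζ) *
      (m (z.1 + ζ.2) ^ s₁ * u (z.1 + ζ.2, z.2) ^ a * mu z.1 ^ s₂ * k (z.1, z.2 + ζ.1) ^ b)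
        ∂(μ.prod μ) ∂(μ.prod μ)
      ≤ lqNorm (μ.prod μ) q fun ζ => lqNorm (μ.prod μ) p fun z => V (z, ζ) := by
  set P : (X × X) × (X × X) → ℝ≥0∞ := fun y =>
    m (y.1.1 + y.2.2) ^ s₁ * u (y.1.1 + y.2.2, y.1.2) ^ a * mu y.1.1 ^ s₂
      * k (y.1.1, y.1.2 + y.2.1) ^ b with hP
  have hPm : Measurable P := by fun_prop
  set n : X × X → ℝ≥0∞ := fun ζ => lqNorm (μ.prod μ) p fun z => V (z, ζ) with hn
  have hnm : Measurable n := measurable_lq_param _ _ hV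
  have hip0 : 0 ≤ invR p := ENNReal.toReal_nonneg
  have hip1 : invR p < 1 := by
    have : p⁻¹ < 1 := ENNReal.inv_lt_one.2 hp
    have := (ENNReal.toReal_lt_toReal (by simp [(zero_lt_one.trans hp).ne']) (by simp)).2 this
    simpa [invR] using this
  set π := invR p with hπ
  set e := 1 / (1 - π) with he
  have he0 : 0 < 1 - π := by linarith
  have hepos : 0 < e := by positivity
  have he1 : e * (1 - π) = 1 := by rw [he]; field_simp
  set J : X × X → ℝ≥0∞ := fun ζ => ∫⁻ z, P (z, ζ) ^ e ∂(μ.prod μ) with hJ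
  have hJm : Measurable J := (hPm.pow_const e).lintegral_prod_left'
  have step1 : ∀ ζ, ∫⁻ z, V (z, ζ) * P (z, ζ) ∂(μ.prod μ) ≤ n ζ * J ζ ^ (1 - π) := fun ζ =>
    lq_holder (μ.prod μ) hp (hV.comp measurable_prodMk_right) (hPm.comp measurable_prodMk_right)
  refine (lintegral_mono step1).trans ?_
  by_cases hMt : lqNorm (μ.prod μ) q n = ∞
  · rw [hMt]; exact le_top
  obtain ⟨hν, hnν⟩ := lq_repr_le hq hnm hMt
  set M := lqNorm (μ.prod μ) q n
  set ν : X × X → ℝ≥0∞ := fun ζ => n ζ ^ q.toReal / M ^ q.toReal with hνdef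
  have hνm : Measurable ν := (hnm.pow_const _).div_const _
  replace hν : ∫⁻ ζ, ν ζ ∂(μ.prod μ) ≤ 1 := hν.resolve_right hqt
  set g := (invR q - π) * e with hg
  have hg0 : 0 ≤ g := mul_nonneg (by linarith) hepos.le
  -- reduce to `∫ ν^g J ≤ 1`
  suffices H : ∫⁻ ζ, ν ζ ^ g * J ζ ∂(μ.prod μ) ≤ 1 by
    calc ∫⁻ ζ, n ζ * J ζ ^ (1 - π) ∂(μ.prod μ)
        ≤ ∫⁻ ζ, M * (ν ζ ^ π * (ν ζ ^ g * J ζ) ^ (1 - π)) ∂(μ.prod μ) := by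
          refine lintegral_mono_ae ?_
          filter_upwards [hnν] with ζ hζ
          have : ν ζ ^ invR q = ν ζ ^ π * (ν ζ ^ g) ^ (1 - π) := by
            rw [← ENNReal.rpow_mul, ← ENNReal.rpow_add_of_nonneg _ _ hip0 (by positivity)]
            congr 1
            rw [hg, mul_assoc, he1]; ring
          calc n ζ * J ζ ^ (1 - π) ≤ M * ν ζ ^ invR q * J ζ ^ (1 - π) := by gcongr
            _ = _ := by rw [this, ENNReal.mul_rpow_of_nonneg _ _ he0.le]; ring
      _ = M * ∫⁻ ζ, ν ζ ^ π * (ν ζ ^ g * J ζ) ^ (1 - π) ∂(μ.prod μ) := by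
          rw [lintegral_const_mul]
          fun_prop
      _ ≤ M * ((∫⁻ ζ, ν ζ ∂(μ.prod μ)) ^ π * (∫⁻ ζ, ν ζ ^ g * J ζ ∂(μ.prod μ)) ^ (1 - π)) := by
          gcongr
          exact ENNReal.lintegral_mul_norm_pow_le hνm.aemeasurable
            ((hνm.pow_const _).mul hJm).aemeasurable hip0 he0.le (by ring)
      _ ≤ M * (1 ^ π * 1 ^ (1 - π)) := by gcongr
      _ = M := by simp
  -- Young twice
  have A1 : a * e ≤ 1 := by rw [← he1, mul_comm]; gcongr
  have B1 : b * e ≤ 1 := by rw [← he1, mul_comm]; gcongr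
  have S1 : s₁ * e ≤ 1 := by rw [← he1, mul_comm]; gcongr
  have S2 : s₂ * e ≤ 1 := by rw [← he1, mul_comm]; gcongr
  have hq1 : invR q ≤ 1 := by
    have : q⁻¹ ≤ 1 := ENNReal.inv_le_one.2 hq
    have := ENNReal.toReal_mono (by simp) this
    simpa [invR] using this
  have G1 : g ≤ 1 := by
    rw [hg, ← he1, mul_comm]; gcongr
  have hsum1 : b * e + a * e + g = 2 := by
    rw [hg]
    have : (a + b) * e = (1 - π + (1 - invR q)) * e := by rw [hab]
    nlinarith
  have hsum2 : s₁ * e + s₂ * e + g = 2 := by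
    rw [hg]
    have : (s₁ + s₂) * e = (1 - π + (1 - invR q)) * e := by rw [hs]
    nlinarith
  set ν₂ : X → ℝ≥0∞ := fun y => ∫⁻ x, ν (x, y) ∂μ with hν₂
  have hν₂m : Measurable ν₂ := hνm.lintegral_prod_left'
  have iν₂ : ∫⁻ y, ν₂ y ∂μ ≤ 1 := by
    rw [hν₂, ← lintegral_prod_symm _ hνm.aemeasurable]; exact hν
  have inner : ∀ x z : X, ∫⁻ ζ, ∫⁻ w, k (x, w + ζ) ^ (b * e) * u (x + z, w) ^ (a * e)
      * ν (ζ, z) ^ g ∂μ ∂μ ≤ ν₂ z ^ g := by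
    intro x z
    have := young3 μ (u := fun w => k (x, w)) (v := fun w => u (x + z, w)) (w := fun ζ => ν (ζ, z))
      (by fun_prop) (by fun_prop) (by fun_prop) B1 A1 G1 hsum1
    refine this.trans ?_
    have h1 : (∫⁻ w, k (x, w) ∂μ) ^ (b * e) ≤ 1 := by
      rcases ik with h | h
      · simp [h]
      · exact ENNReal.rpow_le_one (h x) (by positivity)
    have h2 : (∫⁻ w, u (x + z, w) ∂μ) ^ (a * e) ≤ 1 := by
      rcases iu with h | h
      · simp [h]
      · exact ENNReal.rpow_le_one (h _) (by positivity)
    calc _ ≤ 1 * 1 * ν₂ z ^ g := by gcongr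
      _ = _ := by simp
  have hT : Measurable fun y : (X × X) × (X × X) => ν y.2 ^ g * P y ^ e := by fun_prop
  calc ∫⁻ ζ, ν ζ ^ g * J ζ ∂(μ.prod μ)
      = ∫⁻ ζ, ∫⁻ z, ν ζ ^ g * P (z, ζ) ^ e ∂(μ.prod μ) ∂(μ.prod μ) := by
        congr 1; ext ζ
        rw [lintegral_const_mul]
        fun_prop
    _ = ∫⁻ z₂, ∫⁻ x, ∫⁻ ζ, ∫⁻ w, ν (ζ, z₂) ^ g * P ((x, w), (ζ, z₂)) ^ e ∂μ ∂μ ∂μ ∂μ := by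
        rw [lintegral_prod_symm _ (by fun_prop)]
        congr 1; ext z₂
        have : ∀ ζ, ∫⁻ z, ν (ζ, z₂) ^ g * P (z, (ζ, z₂)) ^ e ∂(μ.prod μ)
            = ∫⁻ x, ∫⁻ w, ν (ζ, z₂) ^ g * P ((x, w), (ζ, z₂)) ^ e ∂μ ∂μ := by
          intro ζ
          rw [lintegral_prod _ (by fun_prop)]
        simp_rw [this]
        rw [lintegral_lintegral_swap]
        fun_prop
    _ ≤ ∫⁻ z₂, ∫⁻ x, m (x + z₂) ^ (s₁ * e) * mu x ^ (s₂ * e) * ν₂ z₂ ^ g ∂μ ∂μ := by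
        gcongr with z₂ x
        have : ∀ ζ w, ν (ζ, z₂) ^ g * P ((x, w), (ζ, z₂)) ^ e
            = (m (x + z₂) ^ (s₁ * e) * mu x ^ (s₂ * e)) *
              (k (x, w + ζ) ^ (b * e) * u (x + z₂, w) ^ (a * e) * ν (ζ, z₂) ^ g) := by
          intro ζ w
          simp only [hP]
          rw [ENNReal.mul_rpow_of_nonneg _ _ hepos.le, ENNReal.mul_rpow_of_nonneg _ _ hepos.le,
            ENNReal.mul_rpow_of_nonneg _ _ hepos.le]
          simp_rw [← ENNReal.rpow_mul]
          ring
        simp_rw [this]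
        have e1 : ∀ ζ, ∫⁻ w, (m (x + z₂) ^ (s₁ * e) * mu x ^ (s₂ * e)) *
              (k (x, w + ζ) ^ (b * e) * u (x + z₂, w) ^ (a * e) * ν (ζ, z₂) ^ g) ∂μ
              = (m (x + z₂) ^ (s₁ * e) * mu x ^ (s₂ * e)) * ∫⁻ w,
              (k (x, w + ζ) ^ (b * e) * u (x + z₂, w) ^ (a * e) * ν (ζ, z₂) ^ g) ∂μ := by
          intro ζ
          rw [lintegral_const_mul]
          fun_prop
        simp_rw [e1]
        rw [lintegral_const_mul]
        · gcongr
          exact inner x z₂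
        · fun_prop
    _ ≤ (∫⁻ x, m x ∂μ) ^ (s₁ * e) * (∫⁻ x, mu x ∂μ) ^ (s₂ * e) * (∫⁻ x, ν₂ x ∂μ) ^ g :=
        young3 μ hm hmu hν₂m S1 S2 G1 hsum2
    _ ≤ 1 * 1 * 1 := by
        gcongr
        · exact ENNReal.rpow_le_one im (by positivity)
        · exact ENNReal.rpow_le_one imu (by positivity)
        · exact ENNReal.rpow_le_one iν₂ (by positivity)
    _ = 1 := by simp

/-- Duality for `ℓ^s`. -/
theorem lq_count_dual {ι : Type*} [Countable ι] [MeasurableSpace ι] [MeasurableSingletonClass ι]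
    {s : ℝ≥0∞} (hs : 1 ≤ s) (D : ι → ℝ≥0∞) (K : ℝ≥0∞)
    (H : ∀ w : ι → ℝ≥0∞, ∑' i, w i ≤ 1 → ∑' i, D i * w i ^ (1 - invR s) ≤ K) :
    lqNorm (Measure.count : Measure ι) s D ≤ K := by
  classical
  by_cases hKt : K = ∞
  · rw [hKt]; exact le_top
  have hDK : ∀ i, D i ≤ K := by
    intro i
    refine le_trans ?_ (H (Pi.single i 1) (by rw [tsum_pi_single]))
    refine le_trans ?_ (ENNReal.le_tsum i)
    simp
  by_cases h : s = ∞
  · subst h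
    rw [lq_top]
    exact essSup_le_of_ae_le _ (Filter.Eventually.of_forall hDK)
  have h1 := one_le_toReal hs h
  have e : invR s = 1 / s.toReal := by simp [invR]
  rw [lq_of_ne_top _ h, lintegral_count]
  set t := s.toReal
  have ht0 : 0 < t := by linarith
  rw [one_div, ENNReal.rpow_inv_le_iff ht0]
  rw [ENNReal.tsum_eq_iSup_sum]
  refine iSup_le fun S => ?_
  set Sg := ∑ i ∈ S, D i ^ t with hSg
  by_cases h0 : Sg = 0
  · rw [h0]; exact zero_le
  have hSgt : Sg ≠ ∞ := by
    rw [hSg, Ne, ENNReal.sum_eq_top]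
    push Not
    intro i _
    exact ENNReal.rpow_ne_top_of_nonneg ht0.le (ne_top_of_le_ne_top hKt (hDK i))
  have hw := H (fun i => if i ∈ S then D i ^ t / Sg else 0) (by
    rw [tsum_eq_sum (s := S) (by intro b hb; simp [hb])]
    rw [Finset.sum_congr rfl (g := fun i => D i ^ t / Sg) (by intro i hi; simp [hi])]
    simp_rw [div_eq_mul_inv]
    rw [← Finset.sum_mul, ← hSg, ENNReal.mul_inv_cancel h0 hSgt])
  have hnn : 0 ≤ 1 - 1 / t := by rw [sub_nonneg, div_le_one ht0]; exact h1
  have : Sg ^ (1 / t) ≤ K := by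
    refine le_trans ?_ ((ENNReal.sum_le_tsum S).trans hw)
    have e2 : ∀ i ∈ S, D i * (if i ∈ S then D i ^ t / Sg else 0) ^ (1 - invR s)
        = D i ^ t / Sg ^ (1 - 1 / t) := by
      intro i hi
      rw [e]
      simp only [hi, if_true]
      rw [ENNReal.div_rpow_of_nonneg _ _ hnn, ← mul_div_assoc, ← ENNReal.rpow_mul]
      congr 1
      nth_rewrite 1 [← ENNReal.rpow_one (D i)]
      rw [← ENNReal.rpow_add_of_nonneg _ _ (by norm_num) (by positivity)]
      congr 1
      field_simp
      ring
    rw [Finset.sum_congr rfl e2]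
    simp_rw [div_eq_mul_inv]
    rw [← Finset.sum_mul, ← hSg, ← ENNReal.rpow_neg]
    nth_rewrite 2 [← ENNReal.rpow_one Sg]
    rw [← ENNReal.rpow_add _ _ h0 hSgt]
    apply le_of_eq
    congr 1
    ring
  have h3 := ENNReal.rpow_le_rpow this ht0.le
  rwa [← ENNReal.rpow_mul, one_div_mul_cancel ht0.ne', ENNReal.rpow_one] at h3

end Trilinear

open FourierTransform in
theorem fourier_ae_eq_L2 {E : Type*} [NormedAddCommGroup E] [InnerProductSpace ℝ E]
    [FiniteDimensional ℝ E] [MeasurableSpace E] [BorelSpace E] {g : E → ℂ}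
    (hg : Integrable g) (hg2 : MemLp g 2) :
    ∀ᵐ x, (𝓕 g) x = ((𝓕 (hg2.toLp g) : Lp ℂ 2 (volume : Measure E)) : E → ℂ) x := by
  have hc : Continuous (𝓕 g) :=
    VectorFourier.fourierIntegral_continuous Real.continuous_fourierChar continuous_inner hg
  refine ae_eq_of_integral_contDiff_smul_eq hc.locallyIntegrable
    ((Lp.memLp _).locallyIntegrable (by norm_num)) ?_
  intro φ h1 h2
  have h2' : HasCompactSupport (fun x => ((φ x : ℝ) : ℂ)) := h2.comp_left (g := Complex.ofReal) rfl
  have h1' : ContDiff ℝ (⊤ : ℕ∞) (fun x => ((φ x : ℝ) : ℂ)) := Complex.ofRealCLM.contDiff.comp h1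
  let ψ : 𝓢(E, ℂ) := h2'.toSchwartzMap h1'
  have e := congrArg (fun T => T ψ) (Lp.fourier_toTemperedDistribution_eq (hg2.toLp g))
  simp only [TemperedDistribution.fourier_apply, Lp.toTemperedDistribution_apply] at e
  have e2 : ∫ x, (φ x : ℝ) • ((𝓕 (hg2.toLp g) : Lp ℂ 2 (volume : Measure E)) : E → ℂ) x
      = ∫ x, (𝓕 ψ) x • ((hg2.toLp g : Lp ℂ 2 (volume : Measure E)) : E → ℂ) x := by
    rw [e]; rfl
  rw [e2]
  have e3 : ∫ x, (𝓕 ψ) x • ((hg2.toLp g : Lp ℂ 2 (volume : Measure E)) : E → ℂ) x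
      = ∫ x, (𝓕 ψ) x • g x := by
    apply integral_congr_ae
    filter_upwards [hg2.coeFn_toLp] with x hx
    rw [hx]
  rw [e3]
  have := VectorFourier.integral_fourierIntegral_smul_eq_flip (f := ψ) (g := g) (L := innerₗ E)
    (μ := volume) (ν := volume) Real.continuous_fourierChar continuous_inner ψ.integrable hg
  have e5 : (innerₗ E).flip = innerₗ E := by
    ext x y; simp
  rw [e5] at this
  rw [SchwartzMap.fourier_coe]
  symm
  exact this

open FourierTransform in
theorem planch {E : Type*} [NormedAddCommGroup E] [InnerProductSpace ℝ E]
    [FiniteDimensional ℝ E] [MeasurableSpace E] [BorelSpace E] {g : E → ℂ}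
    (hg : Integrable g) (hg2 : MemLp g 2) :
    ∫⁻ x, ‖(𝓕 g) x‖ₑ ^ (2:ℝ) = ∫⁻ x, ‖g x‖ₑ ^ (2:ℝ) := by
  have h := fourier_ae_eq_L2 hg hg2
  have h1 : eLpNorm (𝓕 g) 2 volume = eLpNorm g 2 volume := by
    rw [eLpNorm_congr_ae h, ← Lp.enorm_def, ← eLpNorm_congr_ae hg2.coeFn_toLp, ← Lp.enorm_def]
    rw [← ofReal_norm, ← ofReal_norm, Lp.norm_fourier_eq]
  rw [eLpNorm_eq_lintegral_rpow_enorm_toReal (by norm_num) (by norm_num),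
    eLpNorm_eq_lintegral_rpow_enorm_toReal (by norm_num) (by norm_num)] at h1
  have h2 := congrArg (fun z : ℝ≥0∞ => z ^ (2:ℝ)) h1
  simp only [← ENNReal.rpow_mul] at h2
  norm_num at h2
  simpa using h2

theorem lint_pow_Ioc {e c : ℝ} (he : 0 < e) (hc : 0 ≤ c) :
    ∫⁻ t in Set.Ioc 0 c, ENNReal.ofReal (t ^ (e - 1)) = ENNReal.ofReal (c ^ e / e) := by
  have h1 : -1 < e - 1 := by linarith
  rw [← ofReal_integral_eq_lintegral_ofReal]
  · rw [← intervalIntegral.integral_of_le hc, integral_rpow (Or.inl h1)]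
    simp [Real.zero_rpow he.ne']
  · exact (intervalIntegrable_iff_integrableOn_Ioc_of_le hc).1
      (intervalIntegral.intervalIntegrable_rpow' h1)
  · filter_upwards [self_mem_ae_restrict measurableSet_Ioc] with t ht
    exact Real.rpow_nonneg ht.1.le _

open FourierTransform in
theorem enorm_fourier_le {E : Type*} [NormedAddCommGroup E] [InnerProductSpace ℝ E]
    [FiniteDimensional ℝ E] [MeasurableSpace E] [BorelSpace E] (g : E → ℂ) (w : E) :
    ‖(𝓕 g) w‖ₑ ≤ ∫⁻ x, ‖g x‖ₑ := by
  refine (enorm_integral_le_lintegral_enorm _).trans (le_of_eq ?_)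
  refine lintegral_congr fun x => ?_
  rw [← ofReal_norm, ← ofReal_norm]
  simp [Circle.norm_smul]

open FourierTransform in
theorem hy_weak {E : Type*} [NormedAddCommGroup E] [InnerProductSpace ℝ E]
    [FiniteDimensional ℝ E] [MeasurableSpace E] [BorelSpace E] {g : E → ℂ}
    (hm : Measurable g) (hg : Integrable g) {r : ℝ} (hr1 : 1 < r) (hr2 : r < 2)
    (hA : ∫⁻ x, ENNReal.ofReal (‖g x‖ ^ r) ≤ 1) {t : ℝ} (ht : 0 < t) :
    volume {x | t ≤ ‖(𝓕 g) x‖} ≤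
      ENNReal.ofReal (4 / t ^ 2) *
        ∫⁻ x, ENNReal.ofReal (‖g x‖ ^ 2) * (if t * ‖g x‖ ^ (r - 1) ≤ 2 then 1 else 0) := by
  set S : Set E := {x | t * ‖g x‖ ^ (r - 1) ≤ 2} with hS
  have mS : MeasurableSet S := measurableSet_le (by fun_prop) measurable_const
  set gs : E → ℂ := S.indicator g with hgs
  have hgi : Integrable gs := hg.indicator mS
  have hgc : Integrable (Sᶜ.indicator g) := hg.indicator mS.compl
  have mgs : Measurable gs := hm.indicator mS
  have esq : ∫⁻ x, ENNReal.ofReal (‖g x‖ ^ 2) * (if t * ‖g x‖ ^ (r - 1) ≤ 2 then 1 else 0)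
      = ∫⁻ x, ‖gs x‖ₑ ^ (2:ℝ) := by
    refine lintegral_congr fun x => ?_
    by_cases hx : x ∈ S
    · have hx' : t * ‖g x‖ ^ (r - 1) ≤ 2 := hx
      rw [if_pos hx', hgs, Set.indicator_of_mem hx, mul_one, ← ofReal_norm,
        ENNReal.ofReal_rpow_of_nonneg (norm_nonneg _) (by norm_num)]
      norm_num
    · have hx' : ¬ t * ‖g x‖ ^ (r - 1) ≤ 2 := hx
      rw [if_neg hx', hgs, Set.indicator_of_notMem hx]
      simp
  rw [esq]
  have hfin : ∫⁻ x, ‖gs x‖ₑ ^ (2:ℝ) ≠ ∞ := by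
    have : ∫⁻ x, ‖gs x‖ₑ ^ (2:ℝ) ≤
        ∫⁻ x, ENNReal.ofReal ((2/t) ^ ((2-r)/(r-1))) * ENNReal.ofReal (‖g x‖ ^ r) := by
      refine lintegral_mono fun x => ?_
      by_cases hx : x ∈ S
      · have hx' : t * ‖g x‖ ^ (r - 1) ≤ 2 := hx
        simp only [hgs, Set.indicator_of_mem hx]
        rw [← ofReal_norm, ENNReal.ofReal_rpow_of_nonneg (norm_nonneg _) (by norm_num),
          ← ENNReal.ofReal_mul (by positivity)]
        apply ENNReal.ofReal_le_ofReal
        have h1 : ‖g x‖ ^ (2:ℝ) = ‖g x‖ ^ (2 - r) * ‖g x‖ ^ r := by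
          rw [← Real.rpow_add' (norm_nonneg _) (by norm_num)]; congr 1; ring
        rw [h1]
        gcongr
        have h2 : ‖g x‖ ^ (2 - r) = (‖g x‖ ^ (r - 1)) ^ ((2-r)/(r-1)) := by
          rw [← Real.rpow_mul (norm_nonneg _)]; congr 1; field_simp [show r - 1 ≠ 0 by linarith]
        rw [h2]
        refine Real.rpow_le_rpow (by positivity) ?_ (div_nonneg (by linarith) (by linarith))
        rw [le_div_iff₀ ht]; linarith
      · simp [hgs, Set.indicator_of_notMem hx]
    refine ne_top_of_le_ne_top ?_ this
    rw [lintegral_const_mul _ (by fun_prop)]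
    exact ENNReal.mul_ne_top ENNReal.ofReal_ne_top (ne_top_of_le_ne_top ENNReal.one_ne_top hA)
  have hL2 : MemLp gs 2 := by
    refine ⟨hgi.aestronglyMeasurable, ?_⟩
    rw [eLpNorm_eq_lintegral_rpow_enorm_toReal (by norm_num) (by norm_num)]
    refine ENNReal.rpow_lt_top_of_nonneg (by norm_num) (by simpa using hfin)
  rw [← planch hgi hL2]
  have hsplit : ∀ x, (𝓕 g) x = (𝓕 gs) x + (𝓕 (Sᶜ.indicator g)) x := by
    intro x
    have : g = gs + Sᶜ.indicator g := (Set.indicator_self_add_compl S g).symm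
    conv_lhs => rw [this]
    rw [Real.fourier_eq, Real.fourier_eq, Real.fourier_eq, ← integral_add]
    · simp
    · exact (Real.fourierIntegral_convergent_iff x).2 hgi
    · exact (Real.fourierIntegral_convergent_iff x).2 hgc
  have hbig : ∀ x, ‖(𝓕 (Sᶜ.indicator g)) x‖ ≤ t / 2 := by
    intro x
    have h1 := enorm_fourier_le (Sᶜ.indicator g) x
    have h2 : ∫⁻ y, ‖Sᶜ.indicator g y‖ₑ ≤ ENNReal.ofReal (t/2) := by
      calc _ ≤ ∫⁻ y, ENNReal.ofReal (t/2) * ENNReal.ofReal (‖g y‖ ^ r) := by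
            refine lintegral_mono fun y => ?_
            by_cases hy : y ∈ S
            · simp [hy]
            · have hy' : ¬ t * ‖g y‖ ^ (r - 1) ≤ 2 := hy
              rw [Set.indicator_of_mem (by simpa using hy), ← ofReal_norm,
                ← ENNReal.ofReal_mul (by positivity)]
              apply ENNReal.ofReal_le_ofReal
              have h1 : ‖g y‖ ^ r = ‖g y‖ * ‖g y‖ ^ (r - 1) := by
                conv_rhs => rw [← Real.rpow_one ‖g y‖, ← Real.rpow_mul (norm_nonneg _)]
                rw [← Real.rpow_add' (norm_nonneg _) (by linarith)]; congr 1; ring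
              rw [h1]
              push Not at hy'
              nlinarith [norm_nonneg (g y)]
        _ = ENNReal.ofReal (t/2) * ∫⁻ y, ENNReal.ofReal (‖g y‖ ^ r) :=
            lintegral_const_mul _ (by fun_prop)
        _ ≤ ENNReal.ofReal (t/2) * 1 := by gcongr
        _ = _ := mul_one _
    have h3 := h1.trans h2
    rw [← ofReal_norm] at h3
    exact (ENNReal.ofReal_le_ofReal_iff (by positivity)).1 h3
  have hsub : {x | t ≤ ‖(𝓕 g) x‖} ⊆ {x | ENNReal.ofReal ((t/2)^2) ≤ ‖(𝓕 gs) x‖ₑ ^ (2:ℝ)} := by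
    intro x hx
    simp only [Set.mem_ofPred_eq] at hx ⊢
    rw [hsplit] at hx
    have h1 := norm_add_le ((𝓕 gs) x) ((𝓕 (Sᶜ.indicator g)) x)
    have h2 := hbig x
    rw [← ofReal_norm, ENNReal.ofReal_rpow_of_nonneg (norm_nonneg _) (by norm_num)]
    apply ENNReal.ofReal_le_ofReal
    norm_num
    gcongr
    linarith
  have hc : Continuous (𝓕 gs) :=
    VectorFourier.fourierIntegral_continuous Real.continuous_fourierChar continuous_inner hgi
  refine (measure_mono hsub).trans ?_
  have mf : AEMeasurable (fun x => ‖(𝓕 gs) x‖ₑ ^ (2:ℝ)) volume := by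
    have := hc.measurable
    fun_prop
  refine (meas_ge_le_lintegral_div mf ?_ ENNReal.ofReal_ne_top).trans ?_
  · simpa using by positivity
  · rw [div_eq_mul_inv, mul_comm, ← ENNReal.ofReal_inv_of_pos (by positivity)]
    gcongr
    apply le_of_eq
    field_simp
    norm_num

open FourierTransform in
theorem hy_norm {E : Type*} [NormedAddCommGroup E] [InnerProductSpace ℝ E]
    [FiniteDimensional ℝ E] [MeasurableSpace E] [BorelSpace E] {g : E → ℂ}
    (hm : Measurable g) (hg : Integrable g) {r ρ : ℝ} (hr1 : 1 < r) (hr2 : r < 2)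
    (hρ : 1 / r + 1 / ρ = 1) (hρ2 : 2 < ρ)
    (hA : ∫⁻ x, ENNReal.ofReal (‖g x‖ ^ r) ≤ 1) :
    ∫⁻ x, ENNReal.ofReal (‖(𝓕 g) x‖ ^ ρ) ≤
      ENNReal.ofReal (4 * ρ * (2 ^ (ρ - 2) / (ρ - 2))) := by
  have hc : Continuous (𝓕 g) :=
    VectorFourier.fourierIntegral_continuous Real.continuous_fourierChar continuous_inner hg
  have hcm := hc.measurable
  rw [lintegral_rpow_eq_lintegral_meas_le_mul volume (Filter.Eventually.of_forall
    fun x => norm_nonneg _) (by fun_prop) (by linarith : 0 < ρ)]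
  have key : ∫⁻ t in Set.Ioi (0:ℝ), volume {x | t ≤ ‖(𝓕 g) x‖} * ENNReal.ofReal (t ^ (ρ - 1))
      ≤ ENNReal.ofReal 4 * ENNReal.ofReal (2 ^ (ρ - 2) / (ρ - 2)) := by
    calc _ ≤ ∫⁻ t in Set.Ioi (0:ℝ), ∫⁻ x, ENNReal.ofReal 4 * (ENNReal.ofReal (t ^ ((ρ - 2) - 1)) *
          (ENNReal.ofReal (‖g x‖ ^ 2) * (if t * ‖g x‖ ^ (r - 1) ≤ 2 then 1 else 0))) := by
          refine setLIntegral_mono' measurableSet_Ioi fun t ht => ?_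
          have ht : 0 < t := ht
          have := hy_weak hm hg hr1 hr2 hA ht
          rw [lintegral_const_mul, lintegral_const_mul]
          · generalize (∫⁻ x, ENNReal.ofReal (‖g x‖ ^ 2) * (if t * ‖g x‖ ^ (r - 1) ≤ 2 then 1 else 0)) = J at this ⊢
            calc _ ≤ _ := mul_le_mul_left this _
              _ = (ENNReal.ofReal (4 / t ^ 2) * ENNReal.ofReal (t ^ (ρ - 1))) * J := by ring
              _ = (ENNReal.ofReal 4 * ENNReal.ofReal (t ^ ((ρ - 2) - 1))) * J := by
                  congr 1
                  rw [← ENNReal.ofReal_mul (by positivity), ← ENNReal.ofReal_mul (by positivity)]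
                  congr 1
                  rw [div_mul_eq_mul_div, mul_div_assoc]
                  congr 1
                  rw [← Real.rpow_natCast, ← Real.rpow_sub ht]
                  congr 1; push_cast; ring
              _ = _ := by rw [mul_assoc]
          · refine Measurable.mul (by fun_prop) (Measurable.ite ?_ measurable_const measurable_const)
            exact measurableSet_le (by fun_prop) measurable_const
          · refine Measurable.const_mul (Measurable.mul (by fun_prop)
              (Measurable.ite ?_ measurable_const measurable_const)) _
            exact measurableSet_le (by fun_prop) measurable_const
      _ = ∫⁻ x, ∫⁻ t in Set.Ioi (0:ℝ), ENNReal.ofReal 4 * (ENNReal.ofReal (t ^ ((ρ - 2) - 1)) *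
          (ENNReal.ofReal (‖g x‖ ^ 2) * (if t * ‖g x‖ ^ (r - 1) ≤ 2 then 1 else 0))) := by
          rw [lintegral_lintegral_swap]
          refine (Measurable.const_mul (Measurable.mul (by fun_prop) (Measurable.mul (by fun_prop)
              (Measurable.ite ?_ measurable_const measurable_const))) _).aemeasurable
          exact measurableSet_le (by fun_prop) measurable_const
      _ ≤ ∫⁻ x, (ENNReal.ofReal 4 * ENNReal.ofReal (2 ^ (ρ - 2) / (ρ - 2))) *
            ENNReal.ofReal (‖g x‖ ^ r) := by
          refine lintegral_mono fun x => ?_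
          by_cases hx : ‖g x‖ = 0
          · simp [hx]
          have hb : 0 < ‖g x‖ := lt_of_le_of_ne (norm_nonneg _) (Ne.symm hx)
          have e1 : ∀ t ∈ Set.Ioi (0:ℝ), ENNReal.ofReal 4 * (ENNReal.ofReal (t ^ ((ρ - 2) - 1)) *
            (ENNReal.ofReal (‖g x‖ ^ 2) * (if t * ‖g x‖ ^ (r - 1) ≤ 2 then 1 else 0)))
            = (ENNReal.ofReal 4 * ENNReal.ofReal (‖g x‖ ^ 2)) *
              (Set.Ioc 0 (2 / ‖g x‖ ^ (r - 1))).indicator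
                (fun t => ENNReal.ofReal (t ^ ((ρ - 2) - 1))) t := by
            intro t ht
            have ht : 0 < t := ht
            have : t ≤ 2 / ‖g x‖ ^ (r - 1) ↔ t * ‖g x‖ ^ (r - 1) ≤ 2 := by
              rw [le_div_iff₀ (by positivity)]
            by_cases h : t * ‖g x‖ ^ (r - 1) ≤ 2
            · rw [if_pos h, Set.indicator_of_mem (show t ∈ Set.Ioc 0 _ from ⟨ht, this.2 h⟩)]; ring
            · rw [if_neg h, Set.indicator_of_notMem (fun hh => h (this.1 hh.2))]; simp
          rw [setLIntegral_congr_fun measurableSet_Ioi e1, lintegral_const_mul]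
          · rw [lintegral_indicator measurableSet_Ioc, Measure.restrict_restrict measurableSet_Ioc,
              Set.inter_eq_left.2 (fun t ht => ht.1), lint_pow_Ioc (by linarith) (by positivity),
              mul_assoc, mul_assoc]
            refine mul_le_mul_right (le_of_eq ?_) _
            rw [← ENNReal.ofReal_mul (by positivity), ← ENNReal.ofReal_mul
              (div_nonneg (by positivity) (by linarith))]
            congr 1
            rw [Real.div_rpow (by norm_num) (by positivity), ← Real.rpow_mul hb.le]
            have e2 : ‖g x‖ ^ 2 = ‖g x‖ ^ r * ‖g x‖ ^ ((r - 1) * (ρ - 2)) := by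
              rw [← Real.rpow_add hb, ← Real.rpow_natCast]
              congr 1
              have : ρ * r = ρ + r := by field_simp at hρ; linarith
              push_cast; nlinarith
            rw [e2]
            field_simp
          · exact (by fun_prop : Measurable fun t : ℝ => ENNReal.ofReal (t ^ ((ρ - 2) - 1))).indicator
              measurableSet_Ioc
      _ = _ := lintegral_const_mul _ (by fun_prop)
      _ ≤ _ := mul_le_of_le_one_right' hA
  calc _ ≤ _ := mul_le_mul_right key _
    _ = _ := by
      rw [← ENNReal.ofReal_mul (by norm_num), ← ENNReal.ofReal_mul (by linarith)]
      congr 1; ring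

theorem enorm_rpow_ofReal {z : ℂ} {r : ℝ} (hr : 0 ≤ r) :
    ‖z‖ₑ ^ r = ENNReal.ofReal (‖z‖ ^ r) := by
  rw [← ofReal_norm, ENNReal.ofReal_rpow_of_nonneg (norm_nonneg _) hr]

theorem invR_eq {p : ℝ≥0∞} : invR p = 1 / p.toReal := by
  unfold invR; rw [ENNReal.toReal_inv, one_div]

open FourierTransform in
theorem hausdorff_young (E : Type*) [NormedAddCommGroup E] [InnerProductSpace ℝ E]
    [FiniteDimensional ℝ E] [MeasurableSpace E] [BorelSpace E] {τ σ : ℝ≥0∞} (h1 : 1 ≤ τ)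
    (h2 : τ ≤ 2) (hσ1 : 1 ≤ σ) (hσ : invR τ + invR σ = 1) :
    ∃ C : ℝ≥0∞, C ≠ ∞ ∧ ∀ g : E → ℂ, Measurable g → Integrable g →
      lqNorm volume σ (fun x => ‖(𝓕 g) x‖ₑ) ≤ C * lqNorm volume τ (fun x => ‖g x‖ₑ) := by
  have hτt : τ ≠ ∞ := ne_top_of_le_ne_top (by norm_num) h2
  rcases h1.eq_or_lt with rfl | h1'
  · have hσt : σ = ∞ := by
      have : invR σ = 0 := by simp [invR] at hσ ⊢; simpa using hσ
      simp only [invR, ENNReal.toReal_eq_zero_iff, ENNReal.inv_eq_zero, ENNReal.inv_eq_top] at this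
      rcases this with h | h
      · exact h
      · rw [h] at hσ1; simp at hσ1
    subst hσt
    refine ⟨1, by simp, fun g hm hg => ?_⟩
    rw [lq_top, lq_of_ne_top _ hτt]
    simp only [ENNReal.toReal_one, ENNReal.rpow_one, one_div, inv_one, one_mul]
    exact essSup_le_of_ae_le _ (Filter.Eventually.of_forall fun x => enorm_fourier_le g x)
  have r1 : 1 < τ.toReal := by
    rw [← ENNReal.toReal_one]; exact (ENNReal.toReal_lt_toReal (by simp) hτt).2 h1'
  have hσt : σ ≠ ∞ := by
    rintro rfl
    rw [invR_eq, invR_eq] at hσ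
    simp at hσ
    rw [hσ] at r1; linarith
  have hs1 := one_le_toReal hσ1 hσt
  rw [invR_eq, invR_eq] at hσ
  have hσ' : τ.toReal * σ.toReal = τ.toReal + σ.toReal := by
    have : τ.toReal ≠ 0 := by linarith
    have : σ.toReal ≠ 0 := by linarith
    field_simp at hσ; linarith
  rcases h2.eq_or_lt with rfl | h2'
  · have e : σ.toReal = 2 := by norm_num at hσ'; linarith
    refine ⟨1, by simp, fun g hm hg => ?_⟩
    rw [one_mul]
    by_cases hfin : lqNorm volume 2 (fun x => ‖g x‖ₑ) = ∞
    · rw [hfin]; exact le_top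
    have hL2 : MemLp g 2 := by
      refine ⟨hg.aestronglyMeasurable, ?_⟩
      rw [lqNorm_eq_eLpNorm _ (by norm_num)] at hfin
      rw [← eLpNorm_enorm]
      exact lt_top_iff_ne_top.2 hfin
    rw [lq_of_ne_top _ hσt, lq_of_ne_top _ (by norm_num), e]
    have := planch hg hL2
    simp only [ENNReal.toReal_ofNat]
    rw [this]
  have r2 : τ.toReal < 2 := by
    have := (ENNReal.toReal_lt_toReal hτt (by simp)).2 h2'
    simpa using this
  have s2 : 2 < σ.toReal := by nlinarith
  set K := 4 * σ.toReal * (2 ^ (σ.toReal - 2) / (σ.toReal - 2)) with hK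
  refine ⟨max 1 (ENNReal.ofReal K ^ (1 / σ.toReal)), ?_, fun g hm hg => ?_⟩
  · refine ne_of_lt (max_lt (by simp) (ENNReal.rpow_lt_top_of_nonneg (by positivity) (by simp)))
  have mm : Measurable fun x => ‖g x‖ₑ := by fun_prop
  set A := lqNorm volume τ (fun x => ‖g x‖ₑ) with hA
  by_cases hfin : A = ∞
  · rw [hfin, ENNReal.mul_top]
    · exact le_top
    · exact (zero_lt_one.trans_le (le_max_left _ _)).ne'
  by_cases h0 : A = 0
  · have hz := lq_eq_zero_ae h1 mm h0
    have : ∀ x, (𝓕 g) x = 0 := by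
      intro x
      have := enorm_fourier_le g x
      rw [lintegral_congr_ae hz] at this
      simpa using this
    simp only [this, enorm_zero]
    rw [lq_of_ne_top _ hσt]
    simp [show 0 < σ.toReal by linarith]
  have hc : Continuous (𝓕 g) :=
    VectorFourier.fourierIntegral_continuous Real.continuous_fourierChar continuous_inner hg
  have hcm := hc.measurable
  have apos : 0 < A.toReal := ENNReal.toReal_pos h0 hfin
  set c : ℂ := ((A.toReal⁻¹ : ℝ) : ℂ) with hcdef
  have hce : ‖c‖ₑ = A⁻¹ := by
    rw [hcdef, ← ofReal_norm, Complex.norm_real, Real.norm_of_nonneg (by positivity),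
      ENNReal.ofReal_inv_of_pos apos, ENNReal.ofReal_toReal hfin]
  have hF : ∀ x, (𝓕 (fun y => c * g y)) x = c * (𝓕 g) x := by
    intro x
    rw [Real.fourier_eq, Real.fourier_eq, ← integral_const_mul]
    congr 1; ext y
    simp only [Circle.smul_def, smul_eq_mul]; ring
  have key := hy_norm (g := fun y => c * g y) (hm.const_mul c) (hg.const_mul c) r1 r2 hσ s2 (by
    have e1 : ∀ x, ENNReal.ofReal (‖c * g x‖ ^ τ.toReal) = (A⁻¹) ^ τ.toReal * ‖g x‖ₑ ^ τ.toReal := by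
      intro x
      rw [← enorm_rpow_ofReal (by linarith), enorm_mul, ENNReal.mul_rpow_of_nonneg _ _ (by linarith),
        hce]
    simp only [e1]
    rw [lintegral_const_mul _ (by fun_prop)]
    have e2 : ∫⁻ x, ‖g x‖ₑ ^ τ.toReal = A ^ τ.toReal := by
      rw [hA, lq_of_ne_top _ hτt, ← ENNReal.rpow_mul]
      rw [one_div_mul_cancel (by linarith), ENNReal.rpow_one]
    rw [e2, ← ENNReal.mul_rpow_of_nonneg _ _ (by linarith), ENNReal.inv_mul_cancel h0 hfin]
    simp)
  have e1 : ∀ x, ENNReal.ofReal (‖(𝓕 (fun y => c * g y)) x‖ ^ σ.toReal)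
      = (A⁻¹) ^ σ.toReal * ‖(𝓕 g) x‖ₑ ^ σ.toReal := by
    intro x
    rw [← enorm_rpow_ofReal (by linarith), hF, enorm_mul,
      ENNReal.mul_rpow_of_nonneg _ _ (by linarith), hce]
  simp only [e1] at key
  rw [lintegral_const_mul _ (by fun_prop)] at key
  have key2 := ENNReal.rpow_le_rpow key (show 0 ≤ 1 / σ.toReal by positivity)
  rw [ENNReal.mul_rpow_of_nonneg _ _ (by positivity), ← ENNReal.rpow_mul,
    mul_one_div_cancel (by linarith), ENNReal.rpow_one, ← lq_of_ne_top _ hσt] at key2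
  rw [mul_comm, ← ENNReal.div_le_iff' h0 hfin, ENNReal.div_eq_inv_mul]
  exact key2.trans (le_max_right _ _)

/-- the standard character -/
noncomputable def ee (s : ℝ) : ℂ := Complex.exp (Complex.I * ((2 * Real.pi * s : ℝ) : ℂ))

theorem ee_add (s t : ℝ) : ee (s + t) = ee s * ee t := by
  unfold ee; rw [← Complex.exp_add]; congr 1; push_cast; ring

theorem norm_ee (s : ℝ) : ‖ee s‖ = 1 := by
  unfold ee; rw [mul_comm]; exact Complex.norm_exp_ofReal_mul_I _

theorem enorm_ee (s : ℝ) : ‖ee s‖ₑ = 1 := by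
  rw [← ofReal_norm, norm_ee]; simp

@[fun_prop]
theorem continuous_ee : Continuous ee := by unfold ee; fun_prop

theorem ee_zero : ee 0 = 1 := by simp [ee]

section
variable {E : Type*} [NormedAddCommGroup E] [InnerProductSpace ℝ E]
    [FiniteDimensional ℝ E] [MeasurableSpace E] [BorelSpace E]
open FourierTransform

theorem four_eq (g : E → ℂ) (w : E) : (𝓕 g) w = ∫ t, g t * ee (-(inner ℝ t w)) := by
  rw [Real.fourier_eq']
  congr 1; ext t; rw [smul_eq_mul, mul_comm]; congr 1
  unfold ee; congr 1; push_cast; ring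

theorem fourInv_eq (g : E → ℂ) (w : E) : (𝓕⁻ g) w = ∫ t, g t * ee (inner ℝ t w) := by
  rw [Real.fourierInv_eq']
  congr 1; ext t; rw [smul_eq_mul, mul_comm]; congr 1
  unfold ee; congr 1; push_cast; ring

theorem fourInv_neg (g : E → ℂ) (w : E) : (𝓕⁻ g) w = (𝓕 g) (-w) := by
  rw [four_eq, fourInv_eq]; simp

theorem integrable_mul_ee {g : E → ℂ} (hg : Integrable g) {φ : E → ℝ} (hφ : Continuous φ) :
    Integrable fun t => g t * ee (φ t) :=
  hg.mul_bdd (c := 1) (by fun_prop) (Filter.Eventually.of_forall fun t => (norm_ee _).le)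

/-- `∫ (∫ A(ξ) e(ε ξ t) dξ) k(t) e(-ε ω t) dt = ∫ A(ξ) (∫ k(t) e(-ε(ω-ξ)t) dt) dξ`. -/
theorem four_mul {A k : E → ℂ} (hA : Integrable A) (hk : Integrable k) (ε : ℝ) (w : E) :
    ∫ t, (∫ ξ, A ξ * ee (ε * inner ℝ ξ t)) * k t * ee (-(ε * inner ℝ w t))
      = ∫ ξ, A ξ * ∫ t, k t * ee (-(ε * inner ℝ (w - ξ) t)) := by
  have h1 : ∀ t, (∫ ξ, A ξ * ee (ε * inner ℝ ξ t)) * k t * ee (-(ε * inner ℝ w t))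
      = ∫ ξ, A ξ * k t * ee (ε * inner ℝ ξ t - ε * inner ℝ w t) := by
    intro t
    rw [mul_assoc, ← integral_mul_const]
    congr 1; ext ξ; rw [sub_eq_add_neg, ee_add]; ring
  simp_rw [h1]
  rw [integral_integral_swap]
  · congr 1; ext ξ
    rw [← integral_const_mul]
    congr 1; ext t
    rw [mul_assoc]; congr 3; rw [inner_sub_left]; ring
  · have : Integrable (fun z : E × E => A z.2 * k z.1) (volume.prod volume) := by
      have := hk.mul_prod hA
      simpa [mul_comm] using this
    refine this.mul_bdd (c := 1) ?_ (Filter.Eventually.of_forall fun t => (norm_ee _).le)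
    apply Continuous.aestronglyMeasurable
    fun_prop
end

section
variable {ι : Type*} [Fintype ι]
open FourierTransform

theorem gw_eq (t : EuclideanSpace ℝ ι) : gaussWin t = ((Real.exp (-Real.pi * ‖t‖ ^ 2) : ℝ) : ℂ) := by
  unfold gaussWin; push_cast; congr 1; ring

theorem gw_conj (t : EuclideanSpace ℝ ι) : (starRingEnd ℂ) (gaussWin t) = gaussWin t := by
  rw [gw_eq, Complex.conj_ofReal]

@[fun_prop]
theorem continuous_gw : Continuous (gaussWin (ι := ι)) := by unfold gaussWin; fun_prop

theorem gw_neg (t : EuclideanSpace ℝ ι) : gaussWin (-t) = gaussWin t := by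
  simp [gaussWin]

theorem gw_le_one (t : EuclideanSpace ℝ ι) : ‖gaussWin t‖ ≤ 1 := by
  rw [gw_eq, Complex.norm_real, Real.norm_of_nonneg (Real.exp_pos _).le, Real.exp_le_one_iff]
  have : 0 ≤ Real.pi * ‖t‖ ^ 2 := by positivity
  linarith

theorem gauss_integrable {b : ℝ} (hb : 0 < b) :
    Integrable fun t : EuclideanSpace ℝ ι => Real.exp (-b * ‖t‖ ^ 2) := by
  have h := GaussianFourier.integrable_cexp_neg_mul_sq_norm_add (V := EuclideanSpace ℝ ι)
    (b := (b:ℂ)) (by simpa using hb) 0 0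
  have := h.norm
  refine this.congr (Filter.Eventually.of_forall fun t => ?_)
  simp [Complex.norm_exp, ← Complex.ofReal_pow]

theorem gw_integrable : Integrable (gaussWin (ι := ι)) := by
  have := (gauss_integrable (ι := ι) Real.pi_pos).ofReal (𝕜 := ℂ)
  refine this.congr (Filter.Eventually.of_forall fun t => ?_)
  rw [gw_eq]; rfl

theorem stft_eq (F : EuclideanSpace ℝ ι → ℂ) (x w : EuclideanSpace ℝ ι) :
    STFT F x w = ∫ t, F t * gaussWin (t - x) * ee (-(inner ℝ w t)) := by
  unfold STFT
  congr 1; ext t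
  rw [gw_conj]; congr 1
  unfold ee; congr 1; push_cast; ring

theorem fTrans_eq (f : EuclideanSpace ℝ ι → ℂ) (w : EuclideanSpace ℝ ι) :
    fTrans f w = (𝓕 f) w := by
  rw [four_eq]; unfold fTrans
  congr 1; ext t; congr 1
  unfold ee; congr 1; push_cast; ring

theorem stft_four (F : EuclideanSpace ℝ ι → ℂ) (x w : EuclideanSpace ℝ ι) :
    STFT F x w = (𝓕 (fun t => F t * gaussWin (t - x))) w := by
  rw [stft_eq, four_eq]; simp_rw [real_inner_comm]

theorem gauss_int_ee {b : ℝ} (hb : 0 < b) (w : EuclideanSpace ℝ ι) :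
    ∫ t : EuclideanSpace ℝ ι, ((Real.exp (-b * ‖t‖ ^ 2) : ℝ) : ℂ) * ee (-(inner ℝ w t)) =
      (((Real.pi / b) ^ (Fintype.card ι / 2 : ℝ) * Real.exp (-Real.pi ^ 2 * ‖w‖ ^ 2 / b) : ℝ) : ℂ) := by
  have h := fourier_gaussian_innerProductSpace (V := EuclideanSpace ℝ ι) (b := (b:ℂ))
    (by simpa using hb) w
  rw [four_eq] at h
  simp only [finrank_euclideanSpace] at h
  push_cast
  rw [Complex.ofReal_cpow (by positivity)]
  push_cast
  rw [← h]
  congr 1; ext t; rw [real_inner_comm]; try rfl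
end

section
variable {ι : Type*} [Fintype ι]
open FourierTransform

/-- real Gaussian as an extended nonneg function -/
noncomputable def gE (b : ℝ) (t : EuclideanSpace ℝ ι) : ℝ≥0∞ := ENNReal.ofReal (Real.exp (-b * ‖t‖ ^ 2))

@[fun_prop]
theorem measurable_gE (b : ℝ) : Measurable (gE (ι := ι) b) := by unfold gE; fun_prop

theorem gE_int {b : ℝ} (hb : 0 < b) : ∫⁻ t : EuclideanSpace ℝ ι, gE b t ≠ ∞ := by
  have h := (gauss_integrable (ι := ι) hb).hasFiniteIntegral
  have : ∫⁻ t : EuclideanSpace ℝ ι, gE b t = ∫⁻ t : EuclideanSpace ℝ ι, ‖Real.exp (-b * ‖t‖ ^ 2)‖ₑ := by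
    refine lintegral_congr fun t => ?_
    rw [gE, Real.enorm_eq_ofReal (Real.exp_pos _).le]
  rw [this]; exact h.ne

theorem gE_neg (b : ℝ) (t : EuclideanSpace ℝ ι) : gE b (-t) = gE b t := by simp [gE]

theorem gw_enorm (t : EuclideanSpace ℝ ι) : ‖gaussWin t‖ₑ = gE Real.pi t := by
  rw [gw_eq, ← ofReal_norm, Complex.norm_real, Real.norm_of_nonneg (Real.exp_pos _).le, gE]

theorem gauss_shift {b : ℝ} (hb : 0 < b) (m w : EuclideanSpace ℝ ι) :
    ∫ t : EuclideanSpace ℝ ι, ((Real.exp (-b * ‖t - m‖ ^ 2) : ℝ) : ℂ) * ee (-(inner ℝ w t)) =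
      ee (-(inner ℝ w m)) *
      (((Real.pi / b) ^ (Fintype.card ι / 2 : ℝ) * Real.exp (-Real.pi ^ 2 * ‖w‖ ^ 2 / b) : ℝ) : ℂ) := by
  rw [← gauss_int_ee hb, ← integral_const_mul, ← integral_add_right_eq_self _ m]
  congr 1; ext t
  rw [add_sub_cancel_right, inner_add_right, neg_add, ee_add]; ring

theorem gw_shift (m w : EuclideanSpace ℝ ι) :
    ∫ t : EuclideanSpace ℝ ι, gaussWin (t - m) * ee (-(inner ℝ w t)) =
      ee (-(inner ℝ w m)) * gaussWin w := by
  have := gauss_shift Real.pi_pos m w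
  simp_rw [gw_eq]
  rw [this]; congr 2
  rw [div_self Real.pi_ne_zero, Real.one_rpow, one_mul]; congr 1
  field_simp

theorem fTrans_integrable (F : 𝓢(EuclideanSpace ℝ ι, ℂ)) : Integrable (fTrans F) := by
  have : fTrans (F : EuclideanSpace ℝ ι → ℂ) = ((𝓕 F : 𝓢(EuclideanSpace ℝ ι, ℂ)) : EuclideanSpace ℝ ι → ℂ) := by
    ext w; rw [fTrans_eq, SchwartzMap.fourier_coe]
  rw [this]; exact SchwartzMap.integrable _

theorem fTrans_continuous (F : 𝓢(EuclideanSpace ℝ ι, ℂ)) : Continuous (fTrans F) := by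
  have : fTrans (F : EuclideanSpace ℝ ι → ℂ) = ((𝓕 F : 𝓢(EuclideanSpace ℝ ι, ℂ)) : EuclideanSpace ℝ ι → ℂ) := by
    ext w; rw [fTrans_eq, SchwartzMap.fourier_coe]
  rw [this]; exact SchwartzMap.continuous _

theorem schwartz_inv (F : 𝓢(EuclideanSpace ℝ ι, ℂ)) (t : EuclideanSpace ℝ ι) :
    F t = ∫ ξ, fTrans F ξ * ee (inner ℝ ξ t) := by
  rw [← fourInv_eq]
  have h : fTrans (F : EuclideanSpace ℝ ι → ℂ) = 𝓕 (F : EuclideanSpace ℝ ι → ℂ) := by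
    ext w; rw [fTrans_eq]
  have h2 := fTrans_integrable F
  rw [h] at h2 ⊢
  rw [F.continuous.fourierInv_fourier_eq F.integrable h2]

/-- uniform majorant of the STFT -/
noncomputable def maj (F : EuclideanSpace ℝ ι → ℂ) (w : EuclideanSpace ℝ ι) : ℝ≥0∞ :=
  ∫⁻ ξ, ‖fTrans F ξ‖ₑ * gE Real.pi (w - ξ)

theorem gw_trans_integrable (x : EuclideanSpace ℝ ι) : Integrable fun t => gaussWin (t - x) :=
  gw_integrable.comp_sub_right x

theorem stft_le_maj (F : 𝓢(EuclideanSpace ℝ ι, ℂ)) (x w : EuclideanSpace ℝ ι) :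
    ‖STFT F x w‖ₑ ≤ maj F w := by
  have h := four_mul (fTrans_integrable F) (gw_trans_integrable x) 1 w
  simp only [one_mul] at h
  simp_rw [← schwartz_inv] at h
  rw [stft_eq, h]
  refine (enorm_integral_le_lintegral_enorm _).trans (le_of_eq ?_)
  refine lintegral_congr fun ξ => ?_
  rw [gw_shift, enorm_mul, enorm_mul, enorm_ee, one_mul, gw_enorm]

theorem maj_measurable (F : 𝓢(EuclideanSpace ℝ ι, ℂ)) : Measurable (maj F) := by
  unfold maj
  have := (fTrans_continuous F).measurable
  apply Measurable.lintegral_prod_right'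
    (f := fun z : EuclideanSpace ℝ ι × EuclideanSpace ℝ ι => ‖fTrans F z.2‖ₑ * gE Real.pi (z.1 - z.2))
  fun_prop

theorem maj_int (F : 𝓢(EuclideanSpace ℝ ι, ℂ)) : ∫⁻ w, maj F w ≠ ∞ := by
  unfold maj
  have := (fTrans_continuous F).measurable
  rw [lintegral_lintegral_swap]
  · have : ∀ ξ, ∫⁻ w, ‖fTrans F ξ‖ₑ * gE Real.pi (w - ξ) = ‖fTrans F ξ‖ₑ * ∫⁻ w : EuclideanSpace ℝ ι, gE Real.pi w := by
      intro ξ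
      rw [lintegral_const_mul _ (by fun_prop), lintegral_sub_right_eq_self]
    simp_rw [this]
    rw [lintegral_mul_const _ (by fun_prop)]
    exact ENNReal.mul_ne_top (fTrans_integrable F).hasFiniteIntegral.ne (gE_int Real.pi_pos)
  · apply Measurable.aemeasurable; fun_prop

theorem maj_bdd (F : 𝓢(EuclideanSpace ℝ ι, ℂ)) (w : EuclideanSpace ℝ ι) :
    maj F w ≤ ∫⁻ ξ, ‖fTrans F ξ‖ₑ := by
  refine lintegral_mono fun ξ => ?_
  refine mul_le_of_le_one_right' ?_
  rw [← gw_enorm, ← ofReal_norm]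
  exact ENNReal.ofReal_le_one.2 (gw_le_one _)

theorem stft_stronglyMeasurable (F : 𝓢(EuclideanSpace ℝ ι, ℂ)) :
    StronglyMeasurable fun p : EuclideanSpace ℝ ι × EuclideanSpace ℝ ι => STFT F p.1 p.2 := by
  simp_rw [stft_eq]
  apply StronglyMeasurable.integral_prod_right
    (f := fun (p : EuclideanSpace ℝ ι × EuclideanSpace ℝ ι) (t : EuclideanSpace ℝ ι) =>
      F t * gaussWin (t - p.1) * ee (-(inner ℝ p.2 t)))
  apply Continuous.stronglyMeasurable
  have := F.continuous
  fun_prop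

theorem stft_measurable (F : 𝓢(EuclideanSpace ℝ ι, ℂ)) :
    Measurable fun p : EuclideanSpace ℝ ι × EuclideanSpace ℝ ι => STFT F p.1 p.2 :=
  (stft_stronglyMeasurable F).measurable

theorem stft_integrable (F : 𝓢(EuclideanSpace ℝ ι, ℂ)) (x : EuclideanSpace ℝ ι) :
    Integrable fun w => STFT F x w := by
  refine ⟨((stft_measurable F).comp measurable_prodMk_left).aestronglyMeasurable, ?_⟩
  exact lt_of_le_of_lt (lintegral_mono fun w => stft_le_maj F x w) (lt_top_iff_ne_top.2 (maj_int F))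

theorem mul_gw_integrable (F : 𝓢(EuclideanSpace ℝ ι, ℂ)) (x : EuclideanSpace ℝ ι) :
    Integrable fun t => F t * gaussWin (t - x) :=
  F.integrable.mul_bdd (c := 1) (by fun_prop) (Filter.Eventually.of_forall fun t => gw_le_one _)

theorem stft_inv (F : 𝓢(EuclideanSpace ℝ ι, ℂ)) (x t : EuclideanSpace ℝ ι) :
    F t * gaussWin (t - x) = ∫ w, STFT F x w * ee (inner ℝ w t) := by
  have h : (fun w => STFT F x w) = 𝓕 (fun t => F t * gaussWin (t - x)) := by
    ext w; rw [stft_four]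
  have h2 := stft_integrable F x
  rw [← fourInv_eq (fun w => STFT F x w)]
  rw [h] at h2 ⊢
  have hc : Continuous (fun t => F t * gaussWin (t - x)) := by
    have := F.continuous
    fun_prop
  rw [hc.fourierInv_fourier_eq (mul_gw_integrable F x) h2]

theorem vf_eq (f : 𝓢(EuclideanSpace ℝ ι, ℂ)) (y w0 : EuclideanSpace ℝ ι) :
    ∫ w, fTrans f w * gaussWin (w - w0) * ee (inner ℝ y w) = ee (inner ℝ w0 y) * STFT f y w0 := by
  have h := four_mul f.integrable (gw_trans_integrable w0) (-1) y
  have e1 : ∀ t, ∫ ξ, f ξ * ee (-1 * inner ℝ ξ t) = fTrans f t := by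
    intro t; rw [fTrans_eq, four_eq]; simp
  simp_rw [e1] at h
  simp only [neg_mul, one_mul, neg_neg] at h
  rw [h, stft_eq, ← integral_const_mul]
  congr 1; ext ξ
  have := gw_shift w0 (-(y - ξ))
  simp only [inner_neg_left, neg_neg] at this
  rw [this, gw_neg, ← gw_neg (ξ - y), neg_sub]
  rw [inner_sub_left, sub_eq_add_neg, ee_add, real_inner_comm, real_inner_comm ξ w0]
  ring
end

section
variable {ι : Type*} [Fintype ι]
open FourierTransform

theorem gw_sq_int (t : EuclideanSpace ℝ ι) :
    ∫ z : EuclideanSpace ℝ ι, gaussWin (t - z) * gaussWin (t - z)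
      = (((1 / 2 : ℝ) ^ (Fintype.card ι / 2 : ℝ) : ℝ) : ℂ) := by
  have h := gauss_int_ee (ι := ι) (b := 2 * Real.pi) (by positivity) 0
  simp only [inner_zero_left, neg_zero, ee_zero, mul_one, norm_zero] at h
  rw [integral_sub_left_eq_self (fun u : EuclideanSpace ℝ ι => gaussWin u * gaussWin u) volume t]
  have e : Real.pi / (2 * Real.pi) = 1 / 2 := by field_simp
  rw [e] at h
  simp only [ne_eq, OfNat.ofNat_ne_zero, not_false_eq_true, zero_pow, mul_zero, zero_div, Real.exp_zero, mul_one] at h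
  rw [← h]
  congr 1; ext u
  rw [gw_eq, ← Complex.ofReal_mul, ← Real.exp_add]; congr 2; ring

theorem gw_mul_gw (t x y : EuclideanSpace ℝ ι) :
    gaussWin (t - x) * gaussWin (t - y) =
      ((Real.exp (-(Real.pi / 2) * ‖x - y‖ ^ 2) : ℝ) : ℂ) *
        ((Real.exp (-(2 * Real.pi) * ‖t - (1 / 2 : ℝ) • (x + y)‖ ^ 2) : ℝ) : ℂ) := by
  rw [gw_eq, gw_eq, ← Complex.ofReal_mul, ← Real.exp_add, ← Complex.ofReal_mul, ← Real.exp_add]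
  congr 2
  have h := parallelogram_law_with_norm ℝ (t - x) (t - y)
  have e1 : t - x + (t - y) = (2 : ℝ) • (t - (1 / 2 : ℝ) • (x + y)) := by
    rw [smul_sub, smul_smul]; norm_num; rw [two_smul]; abel
  have e2 : t - x - (t - y) = -(x - y) := by abel
  rw [e1, e2, norm_neg, norm_smul, Real.norm_ofNat] at h
  linear_combination (Real.pi / 2) * h

theorem stft_repro (F : 𝓢(EuclideanSpace ℝ ι, ℂ)) (z ζ : EuclideanSpace ℝ ι) :
    ‖STFT F z ζ‖ₑ ≤ ∫⁻ z', gE (Real.pi / 2) (z - z') *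
      ∫⁻ ζ', ‖STFT F z' ζ'‖ₑ * gE (Real.pi / 2) (ζ - ζ') := by
  set c : ℝ := (1 / 2 : ℝ) ^ (Fintype.card ι / 2 : ℝ) with hc
  have cpos : 0 < c := by positivity
  have e1 : (c : ℂ) * STFT F z ζ = ∫ z', ∫ t, (F t * gaussWin (t - z')) *
      (gaussWin (t - z') * gaussWin (t - z)) * ee (-(inner ℝ ζ t)) := by
    rw [stft_eq, ← integral_const_mul]
    have : ∀ t, (c : ℂ) * (F t * gaussWin (t - z) * ee (-(inner ℝ ζ t))) =
        ∫ z', (F t * gaussWin (t - z')) *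
      (gaussWin (t - z') * gaussWin (t - z)) * ee (-(inner ℝ ζ t)) := by
      intro t
      rw [hc, ← gw_sq_int t, ← integral_mul_const]
      congr 1; ext z'; ring
    simp_rw [this]
    rw [integral_integral_swap]
    have hi : Integrable (fun q : EuclideanSpace ℝ ι × EuclideanSpace ℝ ι =>
        F q.1 * gaussWin q.2) (volume.prod volume) := F.integrable.mul_prod gw_integrable
    have mp : MeasurePreserving (fun q : EuclideanSpace ℝ ι × EuclideanSpace ℝ ι => (q.1, q.1 - q.2))
        (volume.prod volume) (volume.prod volume) := by
      exact MeasurePreserving.skew_product (g := fun a b => a - b) (MeasurePreserving.id _)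
        (by fun_prop) (Filter.Eventually.of_forall fun a =>
          (Measure.measurePreserving_sub_left volume a).map_eq)
    have hi2 := mp.integrable_comp_of_integrable hi
    have := F.continuous
    have hi3 := hi2.mul_bdd (c := 1) (g := fun q => (gaussWin (q.1 - q.2) * gaussWin (q.1 - z)) *
        ee (-(inner ℝ ζ q.1))) (Continuous.aestronglyMeasurable (by fun_prop))
        (Filter.Eventually.of_forall fun q => by
          rw [norm_mul, norm_mul, norm_ee, mul_one]
          exact mul_le_one₀ (gw_le_one _) (norm_nonneg _) (gw_le_one _))
    refine hi3.congr (Filter.Eventually.of_forall fun q => ?_)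
    simp only [Function.comp, Function.uncurry]; ring
  have e2 : ∀ z', ‖∫ t, (F t * gaussWin (t - z')) *
      (gaussWin (t - z') * gaussWin (t - z)) * ee (-(inner ℝ ζ t))‖ₑ ≤
      ENNReal.ofReal c * (gE (Real.pi / 2) (z - z') *
        ∫⁻ ζ', ‖STFT F z' ζ'‖ₑ * gE (Real.pi / 2) (ζ - ζ')) := by
    intro z'
    have hk : Integrable fun t => gaussWin (t - z') * gaussWin (t - z) :=
      (gw_trans_integrable z').mul_bdd (c := 1) (by fun_prop)
        (Filter.Eventually.of_forall fun t => gw_le_one _)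
    have h := four_mul (stft_integrable F z') hk 1 ζ
    simp only [one_mul] at h
    simp_rw [← stft_inv] at h
    rw [h]
    refine (enorm_integral_le_lintegral_enorm _).trans (le_of_eq ?_)
    have mm : Measurable fun ζ' => ‖STFT F z' ζ'‖ₑ :=
      ((stft_measurable F).comp measurable_prodMk_left).enorm
    rw [← lintegral_const_mul _ (by fun_prop), ← lintegral_const_mul _ (by fun_prop)]
    refine lintegral_congr fun ζ' => ?_
    have : ∫ t, gaussWin (t - z') * gaussWin (t - z) * ee (-(inner ℝ (ζ - ζ') t))
        = ((Real.exp (-(Real.pi / 2) * ‖z' - z‖ ^ 2) : ℝ) : ℂ) *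
          (ee (-(inner ℝ (ζ - ζ') ((1 / 2 : ℝ) • (z' + z)))) *
            ((c * Real.exp (-Real.pi ^ 2 * ‖ζ - ζ'‖ ^ 2 / (2 * Real.pi)) : ℝ) : ℂ)) := by
      have e : Real.pi / (2 * Real.pi) = 1 / 2 := by field_simp
      have hs := gauss_shift (ι := ι) (b := 2 * Real.pi) (by positivity) ((1 / 2 : ℝ) • (z' + z)) (ζ - ζ')
      rw [e] at hs
      rw [hc, ← hs, ← integral_const_mul]
      congr 1; ext t; rw [gw_mul_gw, mul_assoc]
    rw [this, enorm_mul, enorm_mul, enorm_mul, enorm_ee, one_mul]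
    have n1 : ∀ x : ℝ, 0 ≤ x → ‖((x : ℝ) : ℂ)‖ₑ = ENNReal.ofReal x := by
      intro x hx; rw [← ofReal_norm, Complex.norm_real, Real.norm_of_nonneg hx]
    rw [n1 _ (by positivity), n1 _ (by positivity), ENNReal.ofReal_mul cpos.le, norm_sub_rev z' z]
    have : -Real.pi ^ 2 * ‖ζ - ζ'‖ ^ 2 / (2 * Real.pi) = -(Real.pi / 2) * ‖ζ - ζ'‖ ^ 2 := by
      field_simp
    rw [this]; unfold gE; ring
  have e3 : ENNReal.ofReal c * ‖STFT F z ζ‖ₑ ≤ ENNReal.ofReal c * ∫⁻ z', gE (Real.pi / 2) (z - z') *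
      ∫⁻ ζ', ‖STFT F z' ζ'‖ₑ * gE (Real.pi / 2) (ζ - ζ') := by
    have : ENNReal.ofReal c * ‖STFT F z ζ‖ₑ = ‖(c : ℂ) * STFT F z ζ‖ₑ := by
      rw [enorm_mul]; congr 1
      rw [← ofReal_norm, Complex.norm_real, Real.norm_of_nonneg cpos.le]
    rw [this, e1]
    refine (enorm_integral_le_lintegral_enorm _).trans ((lintegral_mono e2).trans (le_of_eq ?_))
    rw [lintegral_const_mul' _ _ ENNReal.ofReal_ne_top]
  rwa [ENNReal.mul_le_mul_iff_right (by simpa using cpos) ENNReal.ofReal_ne_top] at e3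
end

section
variable {ι : Type*} [Fintype ι]

theorem gE_le_one {b : ℝ} (hb : 0 ≤ b) (t : EuclideanSpace ℝ ι) : gE b t ≤ 1 := by
  unfold gE
  rw [ENNReal.ofReal_le_one, Real.exp_le_one_iff]
  have : 0 ≤ b * ‖t‖ ^ 2 := by positivity
  linarith

theorem invR_lt_one {p : ℝ≥0∞} (hp : 1 < p) : invR p < 1 := by
  unfold invR
  have : p⁻¹ < 1 := ENNReal.inv_lt_one.2 hp
  calc (p⁻¹).toReal < (1 : ℝ≥0∞).toReal := (ENNReal.toReal_lt_toReal (ne_top_of_lt this) (by simp)).2 this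
    _ = 1 := by simp

theorem invR_nonneg (p : ℝ≥0∞) : 0 ≤ invR p := ENNReal.toReal_nonneg

theorem gE_holder (ι : Type*) [Fintype ι] {b : ℝ} (hb : 0 < b) {p : ℝ≥0∞} (hp : 1 ≤ p) :
    ∃ C : ℝ≥0∞, C ≠ ∞ ∧ ∀ (z : EuclideanSpace ℝ ι) (f : EuclideanSpace ℝ ι → ℝ≥0∞), Measurable f →
      ∫⁻ z', gE b (z - z') * f z' ≤ C * lqNorm volume p f := by
  rcases hp.eq_or_lt with rfl | hp
  · refine ⟨1, by simp, fun z f hf => ?_⟩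
    rw [lq_of_ne_top _ (by simp)]
    simp only [ENNReal.toReal_one, ENNReal.rpow_one, one_div, inv_one, one_mul]
    exact lintegral_mono fun z' => mul_le_of_le_one_left' (gE_le_one hb.le _)
  · have h1 := invR_lt_one hp
    set e := 1 / (1 - invR p) with he
    have epos : 0 < e := by rw [he]; exact div_pos one_pos (by linarith)
    refine ⟨(∫⁻ z' : EuclideanSpace ℝ ι, gE (b * e) z') ^ (1 - invR p), ?_, fun z f hf => ?_⟩
    · exact (ENNReal.rpow_lt_top_of_nonneg (by linarith) (gE_int (mul_pos hb epos))).ne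
    · have := lq_holder volume hp hf (g := fun z' => gE b (z - z')) (by fun_prop)
      have e1 : ∀ z', gE b (z - z') ^ e = gE (b * e) (z - z') := by
        intro z'
        unfold gE
        rw [ENNReal.ofReal_rpow_of_nonneg (Real.exp_pos _).le epos.le, ← Real.exp_mul]
        congr 2; ring
      simp_rw [← he, e1] at this
      rw [lintegral_sub_left_eq_self (fun u : EuclideanSpace ℝ ι => gE (b * e) u)] at this
      rw [mul_comm]
      simpa [mul_comm] using this

theorem geom_le_add {x y : ℝ≥0∞} {θ : ℝ} (h0 : 0 ≤ θ) (h1 : θ ≤ 1) : x ^ (1 - θ) * y ^ θ ≤ x + y := by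
  have hx : x ≤ x + y := le_self_add
  have hy : y ≤ x + y := le_add_self
  calc _ ≤ (x + y) ^ (1 - θ) * (x + y) ^ θ := by
        gcongr
    _ = x + y := by
        rw [← ENNReal.rpow_add_of_nonneg _ _ (by linarith) h0]; simp

theorem lq_interp {α : Type*} [MeasurableSpace α] {μ : Measure α} {p p0 : ℝ≥0∞} (hp : 1 ≤ p)
    (hpp : p ≤ p0) {f : α → ℝ≥0∞} {M : ℝ≥0∞} (hM : ∀ x, f x ≤ M) :
    lqNorm μ p0 f ≤ M + lqNorm μ p f := by
  by_cases hp0 : p0 = ∞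
  · rw [hp0, lq_top]
    exact (essSup_le_of_ae_le _ (Filter.Eventually.of_forall hM)).trans le_self_add
  have hpt : p ≠ ∞ := ne_top_of_le_ne_top hp0 hpp
  have h1 := one_le_toReal hp hpt
  have h2 : p.toReal ≤ p0.toReal := ENNReal.toReal_mono hp0 hpp
  rcases eq_or_ne M ∞ with rfl | hMt
  · simp
  rw [lq_of_ne_top _ hp0, lq_of_ne_top _ hpt]
  have e : ∫⁻ x, f x ^ p0.toReal ∂μ ≤ M ^ (p0.toReal - p.toReal) * ∫⁻ x, f x ^ p.toReal ∂μ := by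
    rw [← lintegral_const_mul']
    · refine lintegral_mono fun x => ?_
      calc f x ^ p0.toReal = f x ^ (p0.toReal - p.toReal) * f x ^ p.toReal := by
            rw [← ENNReal.rpow_add_of_nonneg _ _ (by linarith) (by linarith)]; congr 1; ring
        _ ≤ _ := by gcongr; exact hM x
    · exact (ENNReal.rpow_lt_top_of_nonneg (by linarith) hMt).ne
  calc _ ≤ (M ^ (p0.toReal - p.toReal) * ∫⁻ x, f x ^ p.toReal ∂μ) ^ (1 / p0.toReal) := by gcongr
    _ = M ^ (1 - p.toReal / p0.toReal) *
        ((∫⁻ x, f x ^ p.toReal ∂μ) ^ (1 / p.toReal)) ^ (p.toReal / p0.toReal) := by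
        rw [ENNReal.mul_rpow_of_nonneg _ _ (by positivity), ← ENNReal.rpow_mul, ← ENNReal.rpow_mul]
        have : p0.toReal ≠ 0 := by linarith
        have : p.toReal ≠ 0 := by linarith
        congr 2 <;> field_simp
    _ ≤ _ := geom_le_add (by positivity) (div_le_one_of_le₀ h2 (by linarith))

theorem stft_enorm_measurable {ι : Type*} [Fintype ι] (F : 𝓢(EuclideanSpace ℝ ι, ℂ)) :
    Measurable fun w : EuclideanSpace ℝ ι × EuclideanSpace ℝ ι => ‖STFT F w.1 w.2‖ₑ := by
  have := stft_measurable F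
  exact this.enorm

theorem embed_abs (ι : Type*) [Fintype ι] {p p0 q : ℝ≥0∞} (hp : 1 ≤ p) (hpp : p ≤ p0) (hq : 1 ≤ q) :
    ∃ C : ℝ≥0∞, C ≠ ∞ ∧ ∀ V : EuclideanSpace ℝ ι → EuclideanSpace ℝ ι → ℝ≥0∞,
      Measurable (fun w : EuclideanSpace ℝ ι × EuclideanSpace ℝ ι => V w.1 w.2) →
      (∀ z ζ, V z ζ ≤ ∫⁻ z', gE (Real.pi / 2) (z - z') * ∫⁻ ζ', V z' ζ' * gE (Real.pi / 2) (ζ - ζ')) →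
      (lqNorm volume q fun ζ => lqNorm volume p0 fun z => V z ζ) ≤
        C * (lqNorm volume q fun ζ => lqNorm volume p fun z => V z ζ) := by
  have hb : 0 < Real.pi / 2 := by positivity
  obtain ⟨C, hC, H⟩ := gE_holder ι hb hp
  obtain ⟨J, hJ⟩ : ∃ J, J = ∫⁻ z' : EuclideanSpace ℝ ι, gE (Real.pi / 2) z' := ⟨_, rfl⟩
  have hJt : J ≠ ∞ := by rw [hJ]; exact gE_int hb
  refine ⟨C * J + 1, ENNReal.add_ne_top.2 ⟨ENNReal.mul_ne_top hC hJt, ENNReal.one_ne_top⟩,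
    fun V mV hV => ?_⟩
  obtain ⟨n, hn⟩ : ∃ n : EuclideanSpace ℝ ι → ℝ≥0∞, n = fun ζ => lqNorm volume p fun z => V z ζ :=
    ⟨_, rfl⟩
  have mn : Measurable n := by rw [hn]; exact measurable_lq_param volume p (V := fun w : EuclideanSpace ℝ ι × EuclideanSpace ℝ ι => V w.1 w.2) mV
  obtain ⟨m, hm⟩ : ∃ m : EuclideanSpace ℝ ι → ℝ≥0∞,
    m = fun ζ => ∫⁻ y, gE (Real.pi / 2) y * n (ζ - y) := ⟨_, rfl⟩
  have mm : Measurable m := by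
    rw [hm]
    apply Measurable.lintegral_prod_right'
      (f := fun z : EuclideanSpace ℝ ι × EuclideanSpace ℝ ι => gE (Real.pi / 2) z.2 * n (z.1 - z.2))
    fun_prop
  have hsup : ∀ z ζ, V z ζ ≤ C * m ζ := by
    intro z ζ
    refine (hV z ζ).trans ?_
    calc _ = ∫⁻ z', ∫⁻ ζ', gE (Real.pi / 2) (z - z') * (V z' ζ' * gE (Real.pi / 2) (ζ - ζ')) := by
          refine lintegral_congr fun z' => ?_
          have : Measurable fun ζ' => V z' ζ' := mV.comp (measurable_prodMk_left (x := z'))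
          rw [lintegral_const_mul]
          exact Measurable.mul this (by fun_prop)
      _ = ∫⁻ ζ', ∫⁻ z', gE (Real.pi / 2) (z - z') * (V z' ζ' * gE (Real.pi / 2) (ζ - ζ')) := by
          rw [lintegral_lintegral_swap]
          apply Measurable.aemeasurable
          exact Measurable.mul (by fun_prop) (Measurable.mul mV (by fun_prop))
      _ ≤ ∫⁻ ζ', C * (gE (Real.pi / 2) (ζ - ζ') * n ζ') := by
          refine lintegral_mono fun ζ' => ?_
          have m1 : Measurable fun z' => V z' ζ' := mV.comp (measurable_prodMk_right (y := ζ'))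
          calc _ = (∫⁻ z', gE (Real.pi / 2) (z - z') * V z' ζ') * gE (Real.pi / 2) (ζ - ζ') := by
                rw [← lintegral_mul_const]
                · congr 1; ext z'; ring
                · exact Measurable.mul (by fun_prop) m1
            _ ≤ (C * n ζ') * gE (Real.pi / 2) (ζ - ζ') := by
                rw [hn]; gcongr; exact H z _ m1
            _ = _ := by ring
      _ = C * ∫⁻ ζ', gE (Real.pi / 2) (ζ - ζ') * n ζ' := lintegral_const_mul' _ _ hC
      _ = C * m ζ := by
          congr 1
          rw [hm]
          beta_reduce
          rw [← lintegral_sub_left_eq_self (μ := volume)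
            (fun y => gE (Real.pi / 2) y * n (ζ - y)) ζ]
          refine lintegral_congr fun y => ?_
          have e2 : ζ - (ζ - y) = y := sub_sub_cancel ζ y
          rw [e2]
  have step : (lqNorm volume q fun ζ => lqNorm volume p0 fun z => V z ζ) ≤
      lqNorm volume q fun ζ => C * m ζ + n ζ := by
    refine lq_mono_ae hq (Filter.Eventually.of_forall fun ζ => ?_)
    rw [hn]
    exact lq_interp hp hpp (fun z => hsup z ζ)
  rw [← hn]
  refine step.trans ?_
  refine (lq_add_le hq (mm.const_mul C) mn).trans ?_
  rw [lq_const_mul hq mm, add_mul, one_mul, mul_assoc]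
  gcongr
  rw [hm, hJ]
  exact lq_conv_le volume hq (by fun_prop) mn

theorem mod_embed (ι : Type*) [Fintype ι] {p p0 q : ℝ≥0∞} (hp : 1 ≤ p) (hpp : p ≤ p0) (hq : 1 ≤ q) :
    ∃ C : ℝ≥0∞, C ≠ ∞ ∧ ∀ F : 𝓢(EuclideanSpace ℝ ι, ℂ), modNorm p0 q F ≤ C * modNorm p q F := by
  obtain ⟨C, hC, H⟩ := embed_abs ι hp hpp hq
  exact ⟨C, hC, fun F => H (fun z ζ => ‖STFT F z ζ‖ₑ) (stft_enorm_measurable F) (stft_repro F)⟩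
end

section
variable {d : ℕ}

theorem pairE_inner (a b c e : EuclideanSpace ℝ (Fin d)) :
    inner ℝ (pairE a b) (pairE c e) = inner ℝ a c + inner ℝ b e := by
  simp [pairE, PiLp.inner_apply, Fintype.sum_sum_type]

theorem pairE_sub (a b c e : EuclideanSpace ℝ (Fin d)) :
    pairE a b - pairE c e = pairE (a - c) (b - e) := by
  ext i
  rcases i with i | i <;> simp [pairE]

theorem pairE_normsq (a b : EuclideanSpace ℝ (Fin d)) :
    ‖pairE a b‖ ^ 2 = ‖a‖ ^ 2 + ‖b‖ ^ 2 := by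
  rw [← real_inner_self_eq_norm_sq, ← real_inner_self_eq_norm_sq, ← real_inner_self_eq_norm_sq,
    pairE_inner]

theorem gw_pair (a b : EuclideanSpace ℝ (Fin d)) :
    gaussWin (pairE a b) = gaussWin a * gaussWin b := by
  unfold gaussWin
  rw [← Complex.exp_add]
  have := pairE_normsq a b
  have h2 : ((‖pairE a b‖ : ℝ) : ℂ) ^ 2 = (‖a‖ : ℂ) ^ 2 + (‖b‖ : ℂ) ^ 2 := by exact_mod_cast this
  rw [h2]; congr 1; ring

def pairEquiv (d : ℕ) : EuclideanSpace ℝ (Fin d) × EuclideanSpace ℝ (Fin d) ≃ᵐ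
    EuclideanSpace ℝ (Fin d ⊕ Fin d) :=
  ((MeasurableEquiv.prodCongr (MeasurableEquiv.toLp 2 (Fin d → ℝ)).symm
    (MeasurableEquiv.toLp 2 (Fin d → ℝ)).symm).trans
    (MeasurableEquiv.sumPiEquivProdPi (fun _ : Fin d ⊕ Fin d => ℝ)).symm).trans
    (MeasurableEquiv.toLp 2 (Fin d ⊕ Fin d → ℝ))

theorem pairEquiv_apply (z : EuclideanSpace ℝ (Fin d) × EuclideanSpace ℝ (Fin d)) :
    pairEquiv d z = pairE z.1 z.2 := by
  ext i
  rcases i with i | i <;> rfl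

theorem pairEquiv_mp : MeasurePreserving (pairEquiv d)
    ((volume : Measure (EuclideanSpace ℝ (Fin d))).prod volume) volume := by
  unfold pairEquiv
  refine MeasurePreserving.trans (MeasurePreserving.trans (μb := volume) ?_ ?_) (PiLp.volume_preserving_toLp _)
  · exact (PiLp.volume_preserving_ofLp _).prod (PiLp.volume_preserving_ofLp _)
  · exact (volume_measurePreserving_sumPiEquivProdPi _).symm

theorem lint_pair (g : EuclideanSpace ℝ (Fin d ⊕ Fin d) → ℝ≥0∞) :
    ∫⁻ z, g z = ∫⁻ z : EuclideanSpace ℝ (Fin d) × EuclideanSpace ℝ (Fin d), g (pairE z.1 z.2)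
      ∂((volume : Measure (EuclideanSpace ℝ (Fin d))).prod volume) := by
  rw [← (pairEquiv_mp (d := d)).lintegral_comp_emb (pairEquiv d).measurableEmbedding]
  simp_rw [pairEquiv_apply]

theorem int_pair (g : EuclideanSpace ℝ (Fin d ⊕ Fin d) → ℂ) :
    ∫ z, g z = ∫ z : EuclideanSpace ℝ (Fin d) × EuclideanSpace ℝ (Fin d), g (pairE z.1 z.2)
      ∂((volume : Measure (EuclideanSpace ℝ (Fin d))).prod volume) := by
  rw [← (pairEquiv_mp (d := d)).integral_comp (pairEquiv d).measurableEmbedding]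
  simp_rw [pairEquiv_apply]

theorem integrable_pair {g : EuclideanSpace ℝ (Fin d ⊕ Fin d) → ℂ} (hg : Integrable g) :
    Integrable (fun z : EuclideanSpace ℝ (Fin d) × EuclideanSpace ℝ (Fin d) => g (pairE z.1 z.2))
      ((volume : Measure (EuclideanSpace ℝ (Fin d))).prod volume) := by
  have := (pairEquiv_mp (d := d)).integrable_comp_of_integrable hg
  refine this.congr (Filter.Eventually.of_forall fun z => ?_)
  simp [pairEquiv_apply]

theorem lq_pair (p : ℝ≥0∞) (g : EuclideanSpace ℝ (Fin d ⊕ Fin d) → ℝ≥0∞) :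
    lqNorm volume p g = lqNorm ((volume : Measure (EuclideanSpace ℝ (Fin d))).prod volume) p
      (fun z => g (pairE z.1 z.2)) := by
  unfold lqNorm
  split_ifs with h
  · have := (pairEquiv d).measurableEmbedding.essSup_map_measure
      (μ := (volume : Measure (EuclideanSpace ℝ (Fin d))).prod volume) (g := g)
    rw [(pairEquiv_mp (d := d)).map_eq] at this
    rw [this]
    congr 1
  · rw [lint_pair]

theorem pairE_measurable : Measurable fun z : EuclideanSpace ℝ (Fin d) × EuclideanSpace ℝ (Fin d) =>
    pairE z.1 z.2 := by
  have := (pairEquiv d).measurable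
  have e : (pairEquiv d : _ → _) = fun z => pairE z.1 z.2 := funext pairEquiv_apply
  rwa [e] at this

@[fun_prop]
theorem pairE_continuous : Continuous fun z : EuclideanSpace ℝ (Fin d) × EuclideanSpace ℝ (Fin d) =>
    pairE z.1 z.2 := by
  unfold pairE
  refine (PiLp.continuous_toLp 2 _).comp (continuous_pi fun i => ?_)
  rcases i with i | i <;> simp <;> fun_prop

end

section
variable {d : ℕ}

theorem shear_int {E : Type*} [NormedAddCommGroup E] [InnerProductSpace ℝ E]
    [FiniteDimensional ℝ E] [MeasurableSpace E] [BorelSpace E] {Ψ : E × E → ℂ}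
    (hΨ : Integrable Ψ ((volume : Measure E).prod volume)) :
    Integrable (fun z : E × E => Ψ (z.2, z.1 - z.2)) ((volume : Measure E).prod volume) ∧
    ∫ w, ∫ ξ, Ψ (w, ξ) = ∫ η, ∫ w, Ψ (w, η - w) := by
  have hT := measurePreserving_prod_sub_swap (volume : Measure E) (volume : Measure E)
  have h1 := hT.integrable_comp_of_integrable hΨ
  refine ⟨h1, ?_⟩
  rw [← integral_prod _ hΨ, ← integral_prod (fun z : E × E => Ψ (z.2, z.1 - z.2)) h1]
  conv_lhs => rw [← hT.map_eq]
  rw [integral_map hT.measurable.aemeasurable]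
  rw [hT.map_eq]; exact hΨ.aestronglyMeasurable

noncomputable def knV (a : EuclideanSpace ℝ (Fin d ⊕ Fin d) → ℂ) (x w0 z1 z2 : EuclideanSpace ℝ (Fin d)) : ℂ :=
  STFT a (pairE x w0) (pairE z1 z2)

noncomputable def knv (f : EuclideanSpace ℝ (Fin d) → ℂ) (y w0 : EuclideanSpace ℝ (Fin d)) : ℂ :=
  ∫ w, fTrans f w * gaussWin (w - w0) * ee (inner ℝ y w)

theorem knv_enorm (f : 𝓢(EuclideanSpace ℝ (Fin d), ℂ)) (y w0 : EuclideanSpace ℝ (Fin d)) :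
    ‖knv f y w0‖ₑ = ‖STFT f y w0‖ₑ := by
  unfold knv
  rw [vf_eq, enorm_mul, enorm_ee, one_mul]

theorem knv_eq (f : 𝓢(EuclideanSpace ℝ (Fin d), ℂ)) (y w0 : EuclideanSpace ℝ (Fin d)) :
    knv f y w0 = ee (inner ℝ w0 y) * STFT f y w0 := by
  unfold knv
  rw [vf_eq]

theorem knV_meas (a : 𝓢(EuclideanSpace ℝ (Fin d ⊕ Fin d), ℂ)) :
    Measurable fun z : (EuclideanSpace ℝ (Fin d) × EuclideanSpace ℝ (Fin d)) ×
      (EuclideanSpace ℝ (Fin d) × EuclideanSpace ℝ (Fin d)) => knV a z.1.1 z.1.2 z.2.1 z.2.2 := by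
  have h := stft_measurable a
  have h2 : Measurable fun z : (EuclideanSpace ℝ (Fin d) × EuclideanSpace ℝ (Fin d)) ×
      (EuclideanSpace ℝ (Fin d) × EuclideanSpace ℝ (Fin d)) => (pairE z.1.1 z.1.2, pairE z.2.1 z.2.2) :=
    (pairE_measurable.comp measurable_fst).prodMk (pairE_measurable.comp measurable_snd)
  have h3 := h.comp h2
  unfold knV
  exact h3

theorem fw_integrable (f : 𝓢(EuclideanSpace ℝ (Fin d), ℂ)) (w0 : EuclideanSpace ℝ (Fin d)) :
    Integrable fun w => fTrans f w * gaussWin (w - w0) :=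
  (fTrans_integrable f).mul_bdd (c := 1) (by fun_prop) (Filter.Eventually.of_forall fun t => gw_le_one _)

theorem kn_H1 (a : 𝓢(EuclideanSpace ℝ (Fin d ⊕ Fin d), ℂ)) (f : 𝓢(EuclideanSpace ℝ (Fin d), ℂ))
    (x w0 t : EuclideanSpace ℝ (Fin d)) :
    ∫ w, (a (pairE t w) * (gaussWin (t - x) * gaussWin (w - w0))) * (fTrans f w * gaussWin (w - w0))
        * ee (inner ℝ x w)
      = ∫ ζ : EuclideanSpace ℝ (Fin d) × EuclideanSpace ℝ (Fin d),
        knV a x w0 ζ.1 ζ.2 * ee (inner ℝ ζ.1 t) * knv f (x + ζ.2) w0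
        ∂((volume : Measure (EuclideanSpace ℝ (Fin d))).prod volume) := by
  have e1 : ∀ w, a (pairE t w) * (gaussWin (t - x) * gaussWin (w - w0)) =
      ∫ ζ : EuclideanSpace ℝ (Fin d) × EuclideanSpace ℝ (Fin d),
        knV a x w0 ζ.1 ζ.2 * ee (inner ℝ ζ.1 t + inner ℝ ζ.2 w)
        ∂((volume : Measure (EuclideanSpace ℝ (Fin d))).prod volume) := by
    intro w
    rw [← gw_pair, ← pairE_sub, stft_inv, int_pair]
    simp_rw [pairE_inner]
    rfl
  have iV : Integrable (fun ζ : EuclideanSpace ℝ (Fin d) × EuclideanSpace ℝ (Fin d) =>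
      knV a x w0 ζ.1 ζ.2) ((volume : Measure (EuclideanSpace ℝ (Fin d))).prod volume) :=
    integrable_pair (stft_integrable a (pairE x w0))
  simp_rw [e1]
  have e2 : ∀ w, (∫ ζ : EuclideanSpace ℝ (Fin d) × EuclideanSpace ℝ (Fin d),
        knV a x w0 ζ.1 ζ.2 * ee (inner ℝ ζ.1 t + inner ℝ ζ.2 w)
        ∂((volume : Measure (EuclideanSpace ℝ (Fin d))).prod volume)) *
        (fTrans f w * gaussWin (w - w0)) * ee (inner ℝ x w) =
      ∫ ζ : EuclideanSpace ℝ (Fin d) × EuclideanSpace ℝ (Fin d),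
        (knV a x w0 ζ.1 ζ.2 * (fTrans f w * gaussWin (w - w0))) * 
          ee (inner ℝ ζ.1 t + inner ℝ ζ.2 w + inner ℝ x w)
        ∂((volume : Measure (EuclideanSpace ℝ (Fin d))).prod volume) := by
    intro w
    rw [mul_assoc, ← integral_mul_const]
    refine integral_congr_ae (Filter.Eventually.of_forall fun ζ => ?_)
    simp only
    rw [ee_add _ (inner ℝ x w)]; ring
  simp_rw [e2]
  rw [integral_integral_swap]
  · refine integral_congr_ae (Filter.Eventually.of_forall fun ζ => ?_)
    simp only
    unfold knv
    rw [← integral_const_mul]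
    refine integral_congr_ae (Filter.Eventually.of_forall fun w => ?_)
    simp only
    rw [inner_add_left, add_assoc, ee_add, add_comm (inner ℝ ζ.2 w)]; ring
  · have h := (fw_integrable f w0).mul_prod iV
    have h2 : Integrable (fun z : EuclideanSpace ℝ (Fin d) × (EuclideanSpace ℝ (Fin d) × EuclideanSpace ℝ (Fin d)) =>
        ((fTrans f z.1 * gaussWin (z.1 - w0)) * knV a x w0 z.2.1 z.2.2) *
        ee (inner ℝ z.2.1 t + inner ℝ z.2.2 z.1 + inner ℝ x z.1)) (volume.prod (volume.prod volume)) :=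
      h.mul_bdd (c := 1) (by apply Continuous.aestronglyMeasurable; fun_prop) (Filter.Eventually.of_forall fun z => (norm_ee _).le)
    refine h2.congr (Filter.Eventually.of_forall fun z => ?_)
    simp only [Function.uncurry]
    ring

noncomputable def gam (u : EuclideanSpace ℝ (Fin d)) : ℂ :=
  ∫ v : EuclideanSpace ℝ (Fin d), (gaussWin v * gaussWin v) * ee (-(inner ℝ u v))

theorem gam_eq (u : EuclideanSpace ℝ (Fin d)) : gam u = 
    (((Real.pi / (2 * Real.pi)) ^ (Fintype.card (Fin d) / 2 : ℝ) * Real.exp (-Real.pi ^ 2 * ‖u‖ ^ 2 / (2 * Real.pi)) : ℝ) : ℂ) := by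
  unfold gam
  rw [← gauss_int_ee (by positivity)]
  refine integral_congr_ae (Filter.Eventually.of_forall fun w => ?_)
  simp only [gw_eq]
  rw [← Complex.ofReal_mul, ← Real.exp_add]
  congr 4; ring

theorem gwsq_integrable : Integrable fun v : EuclideanSpace ℝ (Fin d) => gaussWin v * gaussWin v :=
  gw_integrable.mul_bdd (c := 1) (by fun_prop) (Filter.Eventually.of_forall fun t => gw_le_one _)

theorem kn_eq (a : EuclideanSpace ℝ (Fin d ⊕ Fin d) → ℂ) (f : EuclideanSpace ℝ (Fin d) → ℂ)
    (t : EuclideanSpace ℝ (Fin d)) :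
    KNop a f t = ∫ w, a (pairE t w) * fTrans f w * ee (inner ℝ t w) := by
  unfold KNop ee
  simp

theorem kn_H2 (a : 𝓢(EuclideanSpace ℝ (Fin d ⊕ Fin d), ℂ)) (f : 𝓢(EuclideanSpace ℝ (Fin d), ℂ))
    (x t : EuclideanSpace ℝ (Fin d)) :
    ∫ w0, ee (inner ℝ (t - x) w0) * ∫ w, (a (pairE t w) * (gaussWin (t - x) * gaussWin (w - w0))) * (fTrans f w * gaussWin (w - w0))
        * ee (inner ℝ x w)
      = gaussWin (t - x) * gam (t - x) * KNop a f t := by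
  have e1 : ∀ w0, ee (inner ℝ (t - x) w0) * ∫ w, (a (pairE t w) * (gaussWin (t - x) * gaussWin (w - w0))) * (fTrans f w * gaussWin (w - w0))
        * ee (inner ℝ x w) = ∫ w, (gaussWin (t - x) * (a (pairE t w) * fTrans f w * ee (inner ℝ t w))) *
          ((gaussWin (w - w0) * gaussWin (w - w0)) * ee (-(inner ℝ (t - x) (w - w0)))) := by
    intro w0
    rw [← integral_const_mul]
    refine integral_congr_ae (Filter.Eventually.of_forall fun w => ?_)
    simp only
    have : ee (inner ℝ (t - x) w0) * ee (inner ℝ x w) = ee (inner ℝ t w) * ee (-(inner ℝ (t - x) (w - w0))) := by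
      rw [← ee_add, ← ee_add]; congr 1
      simp only [inner_sub_left, inner_sub_right]; ring
    linear_combination (a (pairE t w) * (gaussWin (t - x) * gaussWin (w - w0))) * (fTrans f w * gaussWin (w - w0)) * this
  simp_rw [e1]
  obtain ⟨Ca, hCa⟩ : ∃ C, ∀ z, ‖a z‖ ≤ C := by
    obtain ⟨C, hC⟩ := a.decay 0 0
    exact ⟨C, fun z => by simpa using hC.2 z⟩
  have i1 : Integrable fun w => (gaussWin (t - x) * (a (pairE t w) * fTrans f w * ee (inner ℝ t w))) := by
    refine Integrable.const_mul ?_ _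
    refine Integrable.mul_bdd (c := 1) ?_ (by fun_prop) (Filter.Eventually.of_forall fun z => (norm_ee _).le)
    refine (fTrans_integrable f).bdd_mul (c := Ca) ?_ (Filter.Eventually.of_forall fun z => hCa _)
    have : Continuous fun w => a (pairE t w) := a.continuous.comp (pairE_continuous.comp (by fun_prop : Continuous fun w => (t, w)))
    exact this.aestronglyMeasurable
  have i2 : Integrable fun v : EuclideanSpace ℝ (Fin d) => (gaussWin v * gaussWin v) * ee (-(inner ℝ (t - x) v)) :=
    integrable_mul_ee gwsq_integrable (by fun_prop)
  have hT := measurePreserving_prod_sub_swap (volume : Measure (EuclideanSpace ℝ (Fin d))) (volume : Measure (EuclideanSpace ℝ (Fin d)))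
  rw [integral_integral_swap]
  · have e3 : ∀ w, ∫ w0, (gaussWin (t - x) * (a (pairE t w) * fTrans f w * ee (inner ℝ t w))) *
          ((gaussWin (w - w0) * gaussWin (w - w0)) * ee (-(inner ℝ (t - x) (w - w0)))) =
        gaussWin (t - x) * gam (t - x) * (a (pairE t w) * fTrans f w * ee (inner ℝ t w)) := by
      intro w
      rw [integral_const_mul]
      rw [integral_sub_left_eq_self (fun v => (gaussWin v * gaussWin v) * ee (-(inner ℝ (t - x) v)))]
      unfold gam; ring
    simp_rw [e3]
    rw [integral_const_mul, kn_eq]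
  · have h := hT.integrable_comp_of_integrable (i1.mul_prod i2.comp_neg)
    refine h.congr (Filter.Eventually.of_forall fun z => ?_)
    simp only [Function.uncurry, Function.comp, neg_sub]
end

section
variable {d : ℕ}

noncomputable def knB (a : EuclideanSpace ℝ (Fin d ⊕ Fin d) → ℂ) (f : EuclideanSpace ℝ (Fin d) → ℂ)
    (x η : EuclideanSpace ℝ (Fin d)) : ℂ :=
  ∫ w, ∫ y, knV a x w (η - w) y * ee (-(inner ℝ x w)) * knv f (x + y) w

noncomputable def knBp (a : EuclideanSpace ℝ (Fin d ⊕ Fin d) → ℂ) (f : EuclideanSpace ℝ (Fin d) → ℂ)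
    (x η : EuclideanSpace ℝ (Fin d)) : ℝ≥0∞ :=
  ∫⁻ w, ∫⁻ y, ‖knV a x w (η - w) y‖ₑ * ‖STFT f (x + y) w‖ₑ

theorem knB_le (a : EuclideanSpace ℝ (Fin d ⊕ Fin d) → ℂ) (f : 𝓢(EuclideanSpace ℝ (Fin d), ℂ))
    (x η : EuclideanSpace ℝ (Fin d)) : ‖knB a f x η‖ₑ ≤ knBp a f x η := by
  unfold knB knBp
  refine (enorm_integral_le_lintegral_enorm _).trans (lintegral_mono fun w => ?_)
  refine (enorm_integral_le_lintegral_enorm _).trans (lintegral_mono fun y => ?_)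
  rw [enorm_mul, enorm_mul, enorm_ee, mul_one, knv_enorm]

theorem knv_meas (f : 𝓢(EuclideanSpace ℝ (Fin d), ℂ)) :
    Measurable fun z : EuclideanSpace ℝ (Fin d) × EuclideanSpace ℝ (Fin d) => knv f z.1 z.2 := by
  simp_rw [knv_eq]
  have h := stft_measurable f
  refine Measurable.mul ?_ h
  apply Continuous.measurable
  fun_prop

theorem psi_integrable (a : 𝓢(EuclideanSpace ℝ (Fin d ⊕ Fin d), ℂ)) (f : 𝓢(EuclideanSpace ℝ (Fin d), ℂ))
    (x : EuclideanSpace ℝ (Fin d)) :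
    Integrable (fun z : EuclideanSpace ℝ (Fin d) × (EuclideanSpace ℝ (Fin d) × EuclideanSpace ℝ (Fin d)) =>
      knV a x z.1 z.2.1 z.2.2 * ee (-(inner ℝ x z.1)) * knv f (x + z.2.2) z.1)
      ((volume : Measure (EuclideanSpace ℝ (Fin d))).prod (volume.prod volume)) := by
  have m1 : Measurable (fun z : EuclideanSpace ℝ (Fin d) × (EuclideanSpace ℝ (Fin d) × EuclideanSpace ℝ (Fin d)) =>
      knV a x z.1 z.2.1 z.2.2) := by
    have h := (knV_meas a).comp (f := fun z : EuclideanSpace ℝ (Fin d) × (EuclideanSpace ℝ (Fin d) × EuclideanSpace ℝ (Fin d)) => (((x, z.1), (z.2.1, z.2.2)) : (EuclideanSpace ℝ (Fin d) × EuclideanSpace ℝ (Fin d)) ×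
      (EuclideanSpace ℝ (Fin d) × EuclideanSpace ℝ (Fin d)))) (by fun_prop)
    exact h
  have m2 : Measurable (fun z : EuclideanSpace ℝ (Fin d) × (EuclideanSpace ℝ (Fin d) × EuclideanSpace ℝ (Fin d)) =>
      knv f (x + z.2.2) z.1) := by
    have h := (knv_meas f).comp (f := fun z : EuclideanSpace ℝ (Fin d) × (EuclideanSpace ℝ (Fin d) × EuclideanSpace ℝ (Fin d)) => (x + z.2.2, z.1)) (by fun_prop)
    exact h
  have m3 : Measurable (fun z : EuclideanSpace ℝ (Fin d) × (EuclideanSpace ℝ (Fin d) × EuclideanSpace ℝ (Fin d)) =>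
      ee (-(inner ℝ x z.1))) := by
    apply Continuous.measurable; fun_prop
  refine ⟨((m1.mul m3).mul m2).aestronglyMeasurable, ?_⟩
  unfold HasFiniteIntegral
  have ma : Measurable fun ζ : EuclideanSpace ℝ (Fin d) × EuclideanSpace ℝ (Fin d) => maj a (pairE ζ.1 ζ.2) :=
    (maj_measurable a).comp pairE_measurable
  calc _ ≤ ∫⁻ z : EuclideanSpace ℝ (Fin d) × (EuclideanSpace ℝ (Fin d) × EuclideanSpace ℝ (Fin d)),
        maj f z.1 * maj a (pairE z.2.1 z.2.2) ∂(volume.prod (volume.prod volume)) := by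
        refine lintegral_mono fun z => ?_
        rw [enorm_mul, enorm_mul, enorm_ee, mul_one, knv_enorm, mul_comm]
        exact mul_le_mul' (stft_le_maj f _ _) (stft_le_maj a _ _)
    _ = (∫⁻ w, maj f w) * ∫⁻ ζ : EuclideanSpace ℝ (Fin d) × EuclideanSpace ℝ (Fin d),
        maj a (pairE ζ.1 ζ.2) ∂(volume.prod volume) := 
        lintegral_prod_mul (maj_measurable f).aemeasurable ma.aemeasurable
    _ < ∞ := by
        rw [← lint_pair]
        exact ENNReal.mul_lt_top (maj_int f).lt_top (maj_int a).lt_top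

theorem Psi_integrable (a : 𝓢(EuclideanSpace ℝ (Fin d ⊕ Fin d), ℂ)) (f : 𝓢(EuclideanSpace ℝ (Fin d), ℂ))
    (x : EuclideanSpace ℝ (Fin d)) :
    Integrable (fun z : EuclideanSpace ℝ (Fin d) × EuclideanSpace ℝ (Fin d) =>
      ∫ y, knV a x z.1 z.2 y * ee (-(inner ℝ x z.1)) * knv f (x + y) z.1)
      ((volume : Measure (EuclideanSpace ℝ (Fin d))).prod volume) := by
  have h := (measurePreserving_prodAssoc (volume : Measure (EuclideanSpace ℝ (Fin d)))
    (volume : Measure (EuclideanSpace ℝ (Fin d))) (volume : Measure (EuclideanSpace ℝ (Fin d)))).integrable_comp_of_integrable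
    (psi_integrable a f x)
  exact h.integral_prod_left

theorem kn_H3 (a : 𝓢(EuclideanSpace ℝ (Fin d ⊕ Fin d), ℂ)) (f : 𝓢(EuclideanSpace ℝ (Fin d), ℂ))
    (x : EuclideanSpace ℝ (Fin d)) :
    Integrable (knB a f x) ∧ ∀ t, gaussWin (t - x) * gam (t - x) * KNop a f t =
      ∫ η, knB a f x η * ee (inner ℝ η t) := by
  have hΨ := Psi_integrable a f x
  obtain ⟨h1, -⟩ := shear_int hΨ
  refine ⟨h1.integral_prod_left, fun t => ?_⟩
  rw [← kn_H2]
  simp_rw [kn_H1]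
  have hΨt : Integrable (fun z : EuclideanSpace ℝ (Fin d) × EuclideanSpace ℝ (Fin d) =>
      (∫ y, knV a x z.1 z.2 y * ee (-(inner ℝ x z.1)) * knv f (x + y) z.1) * ee (inner ℝ (z.1 + z.2) t))
      ((volume : Measure (EuclideanSpace ℝ (Fin d))).prod volume) :=
    hΨ.mul_bdd (c := 1) (by apply Continuous.aestronglyMeasurable; fun_prop) (Filter.Eventually.of_forall fun z => (norm_ee _).le)
  obtain ⟨-, h2⟩ := shear_int hΨt
  simp only [add_sub_cancel] at h2
  have e2 : ∫ η, knB a f x η * ee (inner ℝ η t) = ∫ (η : EuclideanSpace ℝ (Fin d)) (w : EuclideanSpace ℝ (Fin d)),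
      (∫ (y : EuclideanSpace ℝ (Fin d)), knV (⇑a) x w (η - w) y * ee (-inner ℝ x w) * knv (⇑f) (x + y) w) *
        ee (inner ℝ η t) := by
    refine integral_congr_ae (Filter.Eventually.of_forall fun η => ?_)
    simp only [knB]
    rw [integral_mul_const]
  rw [e2, ← h2]
  have hpt : Integrable (fun z : EuclideanSpace ℝ (Fin d) × (EuclideanSpace ℝ (Fin d) × EuclideanSpace ℝ (Fin d)) =>
      (knV a x z.1 z.2.1 z.2.2 * ee (-(inner ℝ x z.1)) * knv f (x + z.2.2) z.1) * ee (inner ℝ (z.1 + z.2.1) t))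
      ((volume : Measure (EuclideanSpace ℝ (Fin d))).prod (volume.prod volume)) :=
    (psi_integrable a f x).mul_bdd (c := 1) (by apply Continuous.aestronglyMeasurable; fun_prop) (Filter.Eventually.of_forall fun z => (norm_ee _).le)
  refine integral_congr_ae ?_
  filter_upwards [hpt.prod_right_ae] with w hw
  rw [← integral_const_mul]
  have e3 : ∀ ζ : EuclideanSpace ℝ (Fin d) × EuclideanSpace ℝ (Fin d), ee (inner ℝ (t - x) w) * (knV a x w ζ.1 ζ.2 * ee (inner ℝ ζ.1 t) * knv f (x + ζ.2) w) = 
     (knV a x w ζ.1 ζ.2 * ee (-(inner ℝ x w)) * knv f (x + ζ.2) w) * ee (inner ℝ (w + ζ.1) t) := by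
    intro ζ
    have : ee (inner ℝ (t - x) w) * ee (inner ℝ ζ.1 t) = ee (-(inner ℝ x w)) * ee (inner ℝ (w + ζ.1) t) := by
      rw [← ee_add, ← ee_add]; congr 1
      rw [inner_sub_left, inner_add_left, real_inner_comm w t]; ring
    linear_combination (knV a x w ζ.1 ζ.2 * knv f (x + ζ.2) w) * this
  simp_rw [e3]
  rw [integral_prod _ hw]
  refine integral_congr_ae (Filter.Eventually.of_forall fun ξ => ?_)
  simp only
  rw [integral_mul_const]
end

section
variable {d : ℕ}

def ev (n : Fin d → ℤ) : EuclideanSpace ℝ (Fin d) := WithLp.toLp 2 fun i => (n i : ℝ)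

noncomputable def flr (x : EuclideanSpace ℝ (Fin d)) : Fin d → ℤ := fun i => ⌊x i⌋

theorem flr_add (x : EuclideanSpace ℝ (Fin d)) (n : Fin d → ℤ) : flr (x + ev n) = n ↔ x ∈ unitCube d := by
  unfold flr ev unitCube
  rw [funext_iff]
  simp [Set.mem_Ico, Int.floor_eq_zero_iff]

theorem flr_measurable : Measurable (flr (d := d)) := by
  unfold flr
  refine measurable_pi_lambda _ fun i => Int.measurable_floor.comp ?_
  fun_prop

theorem cube_measurable : MeasurableSet (unitCube d) := by
  have : unitCube d = flr ⁻¹' {0} := by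
    ext x
    have := flr_add x 0
    have e : x + ev 0 = x := by ext i; simp [ev]
    rw [e] at this
    simp [← this]
  rw [this]
  exact flr_measurable (measurableSet_singleton _)

theorem cube_volume : volume (unitCube d) = 1 := by
  have h := (PiLp.volume_preserving_ofLp (Fin d)).measure_preimage
    (s := Set.pi Set.univ fun _ : Fin d => Set.Ico (0 : ℝ) 1)
    (MeasurableSet.univ_pi fun _ => measurableSet_Ico).nullMeasurableSet
  have e : unitCube d = WithLp.ofLp ⁻¹' (Set.pi Set.univ fun _ : Fin d => Set.Ico (0 : ℝ) 1) := by
    ext x; simp [unitCube]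
  rw [e, h, Real.volume_pi_Ico]
  simp

instance cube_prob : IsProbabilityMeasure ((volume : Measure (EuclideanSpace ℝ (Fin d))).restrict (unitCube d)) :=
  ⟨by rw [Measure.restrict_apply_univ, cube_volume]⟩

theorem lint_cubes (g : EuclideanSpace ℝ (Fin d) → ℝ≥0∞) :
    ∫⁻ x, g x = ∑' n : Fin d → ℤ, ∫⁻ x in unitCube d, g (x + ev n) := by
  have hm : ∀ n : Fin d → ℤ, MeasurableSet (flr (d := d) ⁻¹' {n}) := fun n =>
    flr_measurable (measurableSet_singleton _)
  have h1 : ⋃ n : Fin d → ℤ, flr (d := d) ⁻¹' {n} = Set.univ := by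
    ext x; simp
  have h2 : Pairwise (Function.onFun Disjoint fun n : Fin d → ℤ => flr (d := d) ⁻¹' {n}) := by
    intro a b hab
    exact Disjoint.preimage _ (by simpa using hab)
  rw [← setLIntegral_univ, ← h1, lintegral_iUnion hm h2]
  congr 1; ext n
  rw [← lintegral_indicator (hm n), ← lintegral_indicator cube_measurable,
    ← lintegral_add_right_eq_self _ (ev n)]
  refine lintegral_congr fun x => ?_
  by_cases hx : x ∈ unitCube d
  · rw [Set.indicator_of_mem hx, Set.indicator_of_mem]
    exact (flr_add x n).2 hx
  · rw [Set.indicator_of_notMem hx, Set.indicator_of_notMem]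
    exact fun h => hx ((flr_add x n).1 h)

theorem wNorm_eq (r s : ℝ≥0∞) (f : EuclideanSpace ℝ (Fin d) → ℂ) :
    wNorm d r s f = lqNorm (Measure.count : Measure (Fin d → ℤ)) s fun n =>
      lqNorm (volume.restrict (unitCube d)) r fun x => ‖f (x + ev n)‖ₑ := rfl

theorem cube_sub_norm {x y : EuclideanSpace ℝ (Fin d)} (hx : x ∈ unitCube d) (hy : y ∈ unitCube d) :
    ‖x - y‖ ^ 2 ≤ d := by
  rw [EuclideanSpace.norm_sq_eq]
  calc _ ≤ ∑ i : Fin d, (1 : ℝ) := by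
        refine Finset.sum_le_sum fun i _ => ?_
        have h1 := hx i
        have h2 := hy i
        simp only [Set.mem_Ico] at h1 h2
        rw [Real.norm_eq_abs, sq_abs]
        simp only [PiLp.sub_apply]
        nlinarith
    _ = d := by simp

theorem kappa_lower (d : ℕ) : ∃ C : ℝ≥0∞, C ≠ ∞ ∧ ∀ x y : EuclideanSpace ℝ (Fin d), x ∈ unitCube d →
    y ∈ unitCube d → ∀ z : ℂ, ‖z‖ₑ ≤ C * ‖gaussWin (x - y) * gam (x - y) * z‖ₑ := by
  set c : ℝ := Real.exp (-Real.pi * d) * ((Real.pi / (2 * Real.pi)) ^ (Fintype.card (Fin d) / 2 : ℝ) * Real.exp (-Real.pi ^ 2 * d / (2 * Real.pi))) with hc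
  have cpos : 0 < c := by positivity
  refine ⟨ENNReal.ofReal c⁻¹, ENNReal.ofReal_ne_top, fun x y hx hy z => ?_⟩
  have hn := cube_sub_norm hx hy
  have h1 : c ≤ ‖gaussWin (x - y) * gam (x - y)‖ := by
    rw [gw_eq, gam_eq, ← Complex.ofReal_mul, Complex.norm_real, Real.norm_eq_abs, abs_of_nonneg (by positivity), hc]
    have i1 : -Real.pi * d ≤ -Real.pi * ‖x - y‖ ^ 2 := by nlinarith [Real.pi_pos]
    have i2 : -Real.pi ^ 2 * d / (2 * Real.pi) ≤ -Real.pi ^ 2 * ‖x - y‖ ^ 2 / (2 * Real.pi) := by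
      apply div_le_div_of_nonneg_right _ (by positivity)
      nlinarith [sq_nonneg Real.pi]
    exact mul_le_mul (Real.exp_le_exp.2 i1)
      (mul_le_mul_of_nonneg_left (Real.exp_le_exp.2 i2) (by positivity)) (by positivity) (by positivity)
  rw [enorm_mul, ← ofReal_norm (gaussWin (x - y) * gam (x - y)), ← mul_assoc, ← ENNReal.ofReal_mul (by positivity)]
  have : 1 ≤ ENNReal.ofReal (c⁻¹ * ‖gaussWin (x - y) * gam (x - y)‖) := by
    rw [ENNReal.one_le_ofReal]
    rw [inv_mul_eq_div, one_le_div cpos]; exact h1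
  calc ‖z‖ₑ = 1 * ‖z‖ₑ := (one_mul _).symm
    _ ≤ _ := by gcongr

end

section
variable {d : ℕ}
open FourierTransform

theorem knBp_meas (a : 𝓢(EuclideanSpace ℝ (Fin d ⊕ Fin d), ℂ)) (f : 𝓢(EuclideanSpace ℝ (Fin d), ℂ)) :
    Measurable fun z : EuclideanSpace ℝ (Fin d) × EuclideanSpace ℝ (Fin d) => knBp a f z.1 z.2 := by
  unfold knBp
  have m1 : Measurable fun v : ((EuclideanSpace ℝ (Fin d) × EuclideanSpace ℝ (Fin d)) × EuclideanSpace ℝ (Fin d)) × EuclideanSpace ℝ (Fin d) =>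
      knV a v.1.1.1 v.1.2 (v.1.1.2 - v.1.2) v.2 := by
    have h := (knV_meas a).comp (f := fun v : ((EuclideanSpace ℝ (Fin d) × EuclideanSpace ℝ (Fin d)) × EuclideanSpace ℝ (Fin d)) × EuclideanSpace ℝ (Fin d) =>
      (((v.1.1.1, v.1.2), (v.1.1.2 - v.1.2, v.2)) : (EuclideanSpace ℝ (Fin d) × EuclideanSpace ℝ (Fin d)) ×
      (EuclideanSpace ℝ (Fin d) × EuclideanSpace ℝ (Fin d)))) (by fun_prop)
    exact h
  have m2 : Measurable fun v : ((EuclideanSpace ℝ (Fin d) × EuclideanSpace ℝ (Fin d)) × EuclideanSpace ℝ (Fin d)) × EuclideanSpace ℝ (Fin d) =>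
      STFT f (v.1.1.1 + v.2) v.1.2 := by
    have h := (stft_measurable f).comp (f := fun v : ((EuclideanSpace ℝ (Fin d) × EuclideanSpace ℝ (Fin d)) × EuclideanSpace ℝ (Fin d)) × EuclideanSpace ℝ (Fin d) =>
      (v.1.1.1 + v.2, v.1.2)) (by fun_prop)
    exact h
  have h3 := Measurable.lintegral_prod_right' (ν := (volume : Measure (EuclideanSpace ℝ (Fin d)))) (m1.enorm.mul m2.enorm)
  exact Measurable.lintegral_prod_right' (ν := (volume : Measure (EuclideanSpace ℝ (Fin d)))) h3

theorem knB_meas (a : 𝓢(EuclideanSpace ℝ (Fin d ⊕ Fin d), ℂ)) (f : 𝓢(EuclideanSpace ℝ (Fin d), ℂ))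
    (x : EuclideanSpace ℝ (Fin d)) : Measurable (knB a f x) := by
  unfold knB
  have m1 : Measurable fun v : (EuclideanSpace ℝ (Fin d) × EuclideanSpace ℝ (Fin d)) × EuclideanSpace ℝ (Fin d) =>
      knV a x v.1.2 (v.1.1 - v.1.2) v.2 := by
    have h := (knV_meas a).comp (f := fun v : (EuclideanSpace ℝ (Fin d) × EuclideanSpace ℝ (Fin d)) × EuclideanSpace ℝ (Fin d) =>
      (((x, v.1.2), (v.1.1 - v.1.2, v.2)) : (EuclideanSpace ℝ (Fin d) × EuclideanSpace ℝ (Fin d)) ×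
      (EuclideanSpace ℝ (Fin d) × EuclideanSpace ℝ (Fin d)))) (by fun_prop)
    exact h
  have m2 : Measurable fun v : (EuclideanSpace ℝ (Fin d) × EuclideanSpace ℝ (Fin d)) × EuclideanSpace ℝ (Fin d) =>
      knv f (x + v.2) v.1.2 := by
    have h := (knv_meas f).comp (f := fun v : (EuclideanSpace ℝ (Fin d) × EuclideanSpace ℝ (Fin d)) × EuclideanSpace ℝ (Fin d) =>
      (x + v.2, v.1.2)) (by fun_prop)
    exact h
  have m3 : Measurable fun v : (EuclideanSpace ℝ (Fin d) × EuclideanSpace ℝ (Fin d)) × EuclideanSpace ℝ (Fin d) =>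
      ee (-(inner ℝ x v.1.2)) := by
    apply Continuous.measurable; fun_prop
  have h3 := ((m1.mul m3).mul m2).stronglyMeasurable.integral_prod_right' (ν := (volume : Measure (EuclideanSpace ℝ (Fin d))))
  exact (h3.integral_prod_right' (ν := (volume : Measure (EuclideanSpace ℝ (Fin d))))).measurable

theorem knBp_bdd (a : 𝓢(EuclideanSpace ℝ (Fin d ⊕ Fin d), ℂ)) (f : 𝓢(EuclideanSpace ℝ (Fin d), ℂ))
    (x η : EuclideanSpace ℝ (Fin d)) :
    knBp a f x η ≤ ∫⁻ w, ∫⁻ y, maj a (pairE (η - w) y) * maj f w := by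
  unfold knBp
  refine lintegral_mono fun w => lintegral_mono fun y => ?_
  exact mul_le_mul' (stft_le_maj a _ _) (stft_le_maj f _ _)

theorem knBp_fin (a : 𝓢(EuclideanSpace ℝ (Fin d ⊕ Fin d), ℂ)) (f : 𝓢(EuclideanSpace ℝ (Fin d), ℂ))
    (x : EuclideanSpace ℝ (Fin d)) {τ : ℝ≥0∞} (hτ : 1 ≤ τ) :
    lqNorm volume τ (knBp a f x) ≠ ∞ := by
  obtain ⟨A, hA⟩ : ∃ A : EuclideanSpace ℝ (Fin d) → ℝ≥0∞, A = fun ξ => ∫⁻ y, maj a (pairE ξ y) := ⟨_, rfl⟩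
  have mp : Measurable fun z : EuclideanSpace ℝ (Fin d) × EuclideanSpace ℝ (Fin d) => maj a (pairE z.1 z.2) :=
    (maj_measurable a).comp pairE_measurable
  have mA : Measurable A := by rw [hA]; exact Measurable.lintegral_prod_right' mp
  have iA : ∫⁻ ξ, A ξ ≠ ∞ := by
    rw [hA, ← lintegral_prod _ mp.aemeasurable, ← lint_pair]
    exact maj_int a
  have hb : ∀ η, knBp a f x η ≤ ∫⁻ w, A (η - w) * maj f w := by
    intro η
    refine (knBp_bdd a f x η).trans (lintegral_mono fun w => ?_)
    rw [hA]
    simp only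
    rw [lintegral_mul_const]
    have h := mp.comp (f := fun y : EuclideanSpace ℝ (Fin d) => (η - w, y)) (by fun_prop)
    exact h
  have hf : ∫⁻ ξ, ‖fTrans f ξ‖ₑ ≠ ∞ := (fTrans_integrable f).hasFiniteIntegral.ne
  have hM : ∀ η, knBp a f x η ≤ (∫⁻ ξ, A ξ) * ∫⁻ ξ, ‖fTrans f ξ‖ₑ := by
    intro η
    refine (hb η).trans ?_
    calc _ ≤ ∫⁻ w, A (η - w) * ∫⁻ ξ, ‖fTrans f ξ‖ₑ := by
          refine lintegral_mono fun w => ?_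
          exact mul_le_mul' le_rfl (maj_bdd f w)
      _ = _ := by
          rw [lintegral_mul_const' _ _ hf, lintegral_sub_left_eq_self A]
  refine ne_top_of_le_ne_top ?_ (lq_interp le_rfl hτ hM)
  refine ENNReal.add_ne_top.2 ⟨ENNReal.mul_ne_top iA hf, ?_⟩
  rw [lq_of_ne_top _ (by simp)]
  simp only [ENNReal.toReal_one, ENNReal.rpow_one, one_div, inv_one]
  refine ne_top_of_le_ne_top ?_ (lintegral_mono hb)
  rw [lintegral_lintegral_swap]
  · have : ∀ w, ∫⁻ η, A (η - w) * maj f w = (∫⁻ ξ, A ξ) * maj f w := by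
      intro w
      rw [lintegral_mul_const, lintegral_sub_right_eq_self A]
      fun_prop
    simp_rw [this]
    rw [lintegral_const_mul' _ _ iA]
    exact ENNReal.mul_ne_top iA (maj_int f)
  · apply Measurable.aemeasurable
    exact Measurable.mul (by fun_prop) ((maj_measurable f).comp measurable_snd)

theorem KN_meas (a : 𝓢(EuclideanSpace ℝ (Fin d ⊕ Fin d), ℂ)) (f : 𝓢(EuclideanSpace ℝ (Fin d), ℂ)) :
    Measurable (KNop a f) := by
  have e : KNop a f = fun t => ∫ w, a (pairE t w) * fTrans f w * ee (inner ℝ t w) := funext (kn_eq a f)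
  rw [e]
  have c1 : Continuous fun z : EuclideanSpace ℝ (Fin d) × EuclideanSpace ℝ (Fin d) => a (pairE z.1 z.2) :=
    a.continuous.comp pairE_continuous
  have c2 : Continuous (fTrans f) := fTrans_continuous f
  have c : Continuous fun z : EuclideanSpace ℝ (Fin d) × EuclideanSpace ℝ (Fin d) =>
    a (pairE z.1 z.2) * fTrans f z.2 * ee (inner ℝ z.1 z.2) := by fun_prop
  exact (c.measurable.stronglyMeasurable.integral_prod_right' (ν := (volume : Measure (EuclideanSpace ℝ (Fin d))))).measurable

theorem lq_translate {p : ℝ≥0∞} (hp : 1 ≤ p) {g : EuclideanSpace ℝ (Fin d) → ℝ≥0∞} (hg : Measurable g)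
    (v : EuclideanSpace ℝ (Fin d)) : lqNorm volume p (fun x => g (x + v)) = lqNorm volume p g := by
  rw [lqNorm_eq_eLpNorm _ hp, lqNorm_eq_eLpNorm _ hp]
  exact eLpNorm_comp_measurePreserving hg.aestronglyMeasurable (measurePreserving_add_right volume v)

theorem lq_neg {p : ℝ≥0∞} (hp : 1 ≤ p) {g : EuclideanSpace ℝ (Fin d) → ℝ≥0∞} (hg : Measurable g) :
    lqNorm volume p (fun x => g (-x)) = lqNorm volume p g := by
  rw [lqNorm_eq_eLpNorm _ hp, lqNorm_eq_eLpNorm _ hp]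
  exact eLpNorm_comp_measurePreserving hg.aestronglyMeasurable (Measure.measurePreserving_neg volume)

theorem lq_restrict {p : ℝ≥0∞} (hp : 1 ≤ p) (g : EuclideanSpace ℝ (Fin d) → ℝ≥0∞) (s : Set (EuclideanSpace ℝ (Fin d))) :
    lqNorm (volume.restrict s) p g ≤ lqNorm volume p g := by
  rw [lqNorm_eq_eLpNorm _ hp, lqNorm_eq_eLpNorm _ hp]
  exact eLpNorm_mono_measure _ Measure.restrict_le_self

theorem four_meas {g : EuclideanSpace ℝ (Fin d) → ℂ} (hg : Measurable g) : Measurable (𝓕 g) := by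
  have e : 𝓕 g = fun w => ∫ t, g t * ee (-(inner ℝ t w)) := funext (four_eq g)
  rw [e]
  have c : Measurable fun z : EuclideanSpace ℝ (Fin d) × EuclideanSpace ℝ (Fin d) =>
    g z.2 * ee (-(inner ℝ z.2 z.1)) := by
    refine Measurable.mul (by fun_prop) ?_
    apply Continuous.measurable; fun_prop
  exact (c.stronglyMeasurable.integral_prod_right' (ν := (volume : Measure (EuclideanSpace ℝ (Fin d))))).measurable

theorem out_est (d : ℕ) {τ σ : ℝ≥0∞} (h1 : 1 ≤ τ) (h2 : τ ≤ 2) (hσ1 : 1 ≤ σ) (hσ : invR τ + invR σ = 1)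
    {r : ℝ≥0∞} (hr : 1 ≤ r) (hrσ : r ≤ σ) :
    ∃ C : ℝ≥0∞, C ≠ ∞ ∧ ∀ (a : 𝓢(EuclideanSpace ℝ (Fin d ⊕ Fin d), ℂ)) (f : 𝓢(EuclideanSpace ℝ (Fin d), ℂ))
      (n : Fin d → ℤ), lqNorm (volume.restrict (unitCube d)) r (fun t => ‖KNop a f (t + ev n)‖ₑ) ≤
        C * ∫⁻ x in unitCube d, lqNorm volume τ (knBp a f (x + ev n)) := by
  obtain ⟨C, hC, H⟩ := hausdorff_young (EuclideanSpace ℝ (Fin d)) h1 h2 hσ1 hσ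
  obtain ⟨K, hK, HK⟩ := kappa_lower d
  refine ⟨K * C, ENNReal.mul_ne_top hK hC, fun a f n => ?_⟩
  rw [← lintegral_const_mul' _ _ (ENNReal.mul_ne_top hK hC)]
  have mK : Measurable fun t => ‖KNop a f (t + ev n)‖ₑ :=
    ((KN_meas a f).comp (measurable_id.add_const (ev n))).enorm
  have key : ∀ x ∈ unitCube d, lqNorm (volume.restrict (unitCube d)) r (fun t => ‖KNop a f (t + ev n)‖ₑ) ≤
      K * C * lqNorm volume τ (knBp a f (x + ev n)) := by
    intro x hx
    obtain ⟨hi, hB⟩ := kn_H3 a f (x + ev n)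
    have mB := knB_meas a f (x + ev n)
    have mF := (four_meas mB).enorm
    calc _ ≤ lqNorm (volume.restrict (unitCube d)) σ (fun t => ‖KNop a f (t + ev n)‖ₑ) :=
          lq_mono_exponent hr hrσ mK
      _ ≤ lqNorm (volume.restrict (unitCube d)) σ (fun t => K * ‖(𝓕 (knB a f (x + ev n))) (-(t + ev n))‖ₑ) := by
          refine lq_mono_ae hσ1 ?_
          filter_upwards [ae_restrict_mem cube_measurable] with t ht
          have := HK t x ht hx (KNop a f (t + ev n))
          have e := hB (t + ev n)
          have e2 : t + ev n - (x + ev n) = t - x := add_sub_add_right_eq_sub t x (ev n)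
          rw [e2] at e
          rw [e, ← fourInv_eq, fourInv_neg] at this
          exact this
      _ = K * lqNorm (volume.restrict (unitCube d)) σ (fun t => ‖(𝓕 (knB a f (x + ev n))) (-(t + ev n))‖ₑ) := by
          rw [lq_const_mul hσ1]
          exact mF.comp (measurable_id.add_const (ev n)).neg
      _ ≤ K * lqNorm volume σ (fun t => ‖(𝓕 (knB a f (x + ev n))) (-(t + ev n))‖ₑ) := by
          gcongr
          exact lq_restrict hσ1 _ _
      _ = K * lqNorm volume σ (fun t => ‖(𝓕 (knB a f (x + ev n))) t‖ₑ) := by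
          rw [lq_translate hσ1 (g := fun t => ‖(𝓕 (knB a f (x + ev n))) (-t)‖ₑ) (mF.comp measurable_neg) (ev n),
            lq_neg hσ1 mF]
      _ ≤ K * (C * lqNorm volume τ (fun t => ‖knB a f (x + ev n) t‖ₑ)) := by
          gcongr
          exact H _ mB hi
      _ ≤ K * C * lqNorm volume τ (knBp a f (x + ev n)) := by
          rw [mul_assoc]
          gcongr
          exact lq_mono_ae h1 (Filter.Eventually.of_forall fun η => knB_le _ _ _ _)
  calc _ = ∫⁻ x in unitCube d, lqNorm (volume.restrict (unitCube d)) r (fun t => ‖KNop a f (t + ev n)‖ₑ) := by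
        rw [lintegral_const, measure_univ, mul_one]
    _ ≤ _ := setLIntegral_mono' cube_measurable key
end

section
variable {d : ℕ}
open FourierTransform

theorem gE_comp {b : ℝ} (hb : 0 ≤ b) {D : ℝ} {u v : EuclideanSpace ℝ (Fin d)} (h : ‖u - v‖ ^ 2 ≤ D) :
    gE b u ≤ ENNReal.ofReal (Real.exp (b * D)) * gE (b / 2) v := by
  unfold gE
  rw [← ENNReal.ofReal_mul (Real.exp_pos _).le, ← Real.exp_add]
  apply ENNReal.ofReal_le_ofReal
  apply Real.exp_le_exp.2
  have h1 : ‖v‖ ≤ ‖u‖ + ‖u - v‖ := by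
    have := norm_sub_le u (u - v)
    simpa using this
  have h2 : ‖v‖ ^ 2 ≤ 2 * ‖u‖ ^ 2 + 2 * ‖u - v‖ ^ 2 := by
    nlinarith [sq_nonneg (‖u‖ - ‖u - v‖), norm_nonneg v, norm_nonneg u, norm_nonneg (u - v)]
  nlinarith

theorem zero_cube : (0 : EuclideanSpace ℝ (Fin d)) ∈ unitCube d := by
  intro i; simp

theorem gE_sum {b : ℝ} (hb : 0 < b) : ∑' k : Fin d → ℤ, gE b (ev k) ≠ ∞ := by
  have h : ∀ k : Fin d → ℤ, gE b (ev k) ≤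
      ENNReal.ofReal (Real.exp (b * d)) * ∫⁻ x in unitCube d, gE (b / 2) (x + ev k) := by
    intro k
    rw [← lintegral_const_mul' _ _ ENNReal.ofReal_ne_top]
    calc gE b (ev k) = ∫⁻ x in unitCube d, gE b (ev k) := by
          rw [lintegral_const, measure_univ, mul_one]
      _ ≤ _ := by
          refine setLIntegral_mono' cube_measurable fun x hx => ?_
          apply gE_comp hb.le
          have := cube_sub_norm zero_cube hx
          have e : ev k - (x + ev k) = 0 - x := by abel
          rw [e]; exact this
  refine ne_top_of_le_ne_top ?_ (ENNReal.tsum_le_tsum h)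
  rw [ENNReal.tsum_mul_left, ← lint_cubes]
  exact ENNReal.mul_ne_top ENNReal.ofReal_ne_top (gE_int (by positivity))

theorem tsum_rpow_le {ι : Type*} (g : ι → ℝ≥0∞) {θ : ℝ} (h : 1 ≤ θ) :
    (∑' i, g i ^ θ) ^ (1 / θ) ≤ ∑' i, g i := by
  rw [one_div, ENNReal.rpow_inv_le_iff (by linarith)]
  calc _ ≤ ∑' i, g i * (∑' j, g j) ^ (θ - 1) := by
        refine ENNReal.tsum_le_tsum fun i => ?_
        calc g i ^ θ = g i * g i ^ (θ - 1) := by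
              conv_rhs => rw [← ENNReal.rpow_one (g i), ← ENNReal.rpow_mul]
              rw [← ENNReal.rpow_add_of_nonneg _ _ (by linarith) (by linarith)]; congr 1; ring
          _ ≤ _ := by
              gcongr
              exact ENNReal.le_tsum i
    _ = (∑' i, g i) * (∑' j, g j) ^ (θ - 1) := ENNReal.tsum_mul_right
    _ = _ := by
        conv_lhs => rw [← ENNReal.rpow_one (∑' i, g i), ← ENNReal.rpow_mul]
        rw [← ENNReal.rpow_add_of_nonneg _ _ (by linarith) (by linarith)]; congr 1; ring

theorem ev_sub (n m : Fin d → ℤ) : ev (n - m) = ev n - ev m := by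
  ext i; simp [ev]

theorem lq_cubes {θ : ℝ≥0∞} (h1 : 1 ≤ θ) (h2 : θ ≠ ∞) (g : EuclideanSpace ℝ (Fin d) → ℝ≥0∞) :
    lqNorm volume θ g ≤ ∑' n : Fin d → ℤ, lqNorm (volume.restrict (unitCube d)) θ fun x => g (x + ev n) := by
  have h := one_le_toReal h1 h2
  refine le_trans ?_ (tsum_rpow_le _ h)
  rw [lq_of_ne_top _ h2, lint_cubes]
  gcongr with n
  rw [lq_of_ne_top _ h2, ← ENNReal.rpow_mul, one_div_mul_cancel (by linarith), ENNReal.rpow_one]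

instance : (Measure.count : Measure (Fin d → ℤ)).IsAddLeftInvariant := by infer_instance
instance : (Measure.count : Measure (Fin d → ℤ)).IsNegInvariant := by infer_instance

theorem in_est (d : ℕ) {θ σ : ℝ≥0∞} (h1 : 1 ≤ θ) (h2 : θ ≤ 2) (hσ1 : 1 ≤ σ) (hσ : invR θ + invR σ = 1)
    {r s : ℝ≥0∞} (hr : θ ≤ r) (hs : 1 ≤ s) :
    ∃ C : ℝ≥0∞, C ≠ ∞ ∧ ∀ f : 𝓢(EuclideanSpace ℝ (Fin d), ℂ), ∃ A : (Fin d → ℤ) → ℝ≥0∞,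
      lqNorm Measure.count s A ≤ C * wNorm d r s f ∧
      ∀ y, lqNorm volume σ (fun w => ‖STFT f y w‖ₑ) ≤ A (flr y) := by
  obtain ⟨C, hC, H⟩ := hausdorff_young (EuclideanSpace ℝ (Fin d)) h1 h2 hσ1 hσ
  have hθt : θ ≠ ∞ := ne_top_of_le_ne_top (by norm_num) h2
  obtain ⟨K, hK⟩ : ∃ K, K = ENNReal.ofReal (Real.exp (Real.pi * d)) := ⟨_, rfl⟩
  have hKt : K ≠ ∞ := by rw [hK]; exact ENNReal.ofReal_ne_top
  obtain ⟨S, hS⟩ : ∃ S, S = ∑' k : Fin d → ℤ, gE (Real.pi / 2) (ev k) := ⟨_, rfl⟩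
  have hSt : S ≠ ∞ := by rw [hS]; exact gE_sum (by positivity)
  refine ⟨C * K * S, ENNReal.mul_ne_top (ENNReal.mul_ne_top hC hKt) hSt, fun f => ?_⟩
  obtain ⟨D, hD⟩ : ∃ D : (Fin d → ℤ) → ℝ≥0∞, D = fun n => lqNorm (volume.restrict (unitCube d)) r fun x => ‖f (x + ev n)‖ₑ := ⟨_, rfl⟩
  have hW : wNorm d r s f = lqNorm Measure.count s D := by rw [hD]; rfl
  have mD : Measurable D := measurable_of_countable _
  have mc : Measurable fun k : Fin d → ℤ => gE (Real.pi / 2) (ev k) := measurable_of_countable _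
  refine ⟨fun m => C * K * ∫⁻ k, gE (Real.pi / 2) (ev k) * D (m - k) ∂Measure.count, ?_, ?_⟩
  · rw [lq_const_mul hs (measurable_of_countable _), hW, mul_assoc (C * K)]
    gcongr
    refine (lq_conv_le _ hs mc mD).trans ?_
    rw [lintegral_count, hS]
  · intro y
    simp_rw [stft_four]
    have mg : Measurable fun t => f t * gaussWin (t - y) := by
      have := f.continuous
      apply Continuous.measurable; fun_prop
    refine (H _ mg (mul_gw_integrable f y)).trans ?_
    rw [mul_assoc]
    gcongr
    refine (lq_cubes h1 hθt _).trans ?_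
    rw [lintegral_count]
    have e0 := (Equiv.subLeft (flr y)).tsum_eq (fun k => gE (Real.pi / 2) (ev k) * D (flr y - k))
    rw [← e0, ← ENNReal.tsum_mul_left]
    refine ENNReal.tsum_le_tsum fun n => ?_
    have e3 : flr y - (flr y - n) = n := sub_sub_cancel _ _
    simp only [Equiv.subLeft_apply]
    rw [e3]
    have mf : Measurable fun x => ‖f (x + ev n)‖ₑ := by
      have := f.continuous
      apply Measurable.enorm
      apply Continuous.measurable; fun_prop
    have hy : y - ev (flr y) ∈ unitCube d := by
      rw [← flr_add _ (flr y)]; congr 1; abel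
    calc _ ≤ lqNorm (volume.restrict (unitCube d)) θ fun x => (K * gE (Real.pi / 2) (ev (flr y - n))) * ‖f (x + ev n)‖ₑ := by
          refine lq_mono_ae h1 ?_
          filter_upwards [ae_restrict_mem cube_measurable] with x hx
          rw [enorm_mul, gw_enorm, mul_comm, hK]
          gcongr
          have e : ev (flr y - n) = - ev (n - flr y) := by
            rw [ev_sub, ev_sub, neg_sub]
          rw [e, gE_neg]
          apply gE_comp Real.pi_pos.le
          have e2 : x + ev n - y - ev (n - flr y) = x - (y - ev (flr y)) := by
            rw [ev_sub]; abel
          rw [e2]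
          exact cube_sub_norm hx hy
      _ = (K * gE (Real.pi / 2) (ev (flr y - n))) * lqNorm (volume.restrict (unitCube d)) θ fun x => ‖f (x + ev n)‖ₑ := lq_const_mul h1 mf _
      _ ≤ K * (gE (Real.pi / 2) (ev (flr y - n)) * D n) := by
          rw [mul_assoc, hD]
          gcongr
          exact lq_mono_exponent h1 hr mf
end

section
variable {d : ℕ}

theorem dual_repr {α : Type*} [MeasurableSpace α] {μ : Measure α} {τ : ℝ≥0∞}
    (h1 : 1 ≤ τ) (h2 : τ ≠ ∞) {B : α → ℝ≥0∞} (hB : Measurable B) (hN : lqNorm μ τ B ≠ ∞) :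
    lqNorm μ τ B ≤ ∫⁻ x, B x * (B x ^ τ.toReal / lqNorm μ τ B ^ τ.toReal) ^ (1 - invR τ) ∂μ := by
  have ht := one_le_toReal h1 h2
  obtain ⟨t, htt⟩ : ∃ t, t = τ.toReal := ⟨_, rfl⟩
  obtain ⟨N, hNN⟩ : ∃ N, N = lqNorm μ τ B := ⟨_, rfl⟩
  rw [invR_eq, ← htt, ← hNN]
  rw [← hNN] at hN
  rw [← htt] at ht
  by_cases h0 : N = 0
  · rw [h0]; exact zero_le
  have e : ∀ x, B x * (B x ^ t / N ^ t) ^ (1 - 1 / t) = B x ^ t * (N ^ (t - 1))⁻¹ := by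
    intro x
    have h3 : 0 ≤ 1 - 1 / t := by
      rw [sub_nonneg, div_le_one (by linarith)]; exact ht
    have h4 : t * (1 - 1 / t) = t - 1 := by field_simp
    rw [ENNReal.div_rpow_of_nonneg _ _ h3, ← ENNReal.rpow_mul, ← ENNReal.rpow_mul, h4, div_eq_mul_inv, ← mul_assoc]
    congr 1
    conv_lhs => rw [← ENNReal.rpow_one (B x), ← ENNReal.rpow_mul]
    rw [← ENNReal.rpow_add_of_nonneg _ _ (by linarith) (by linarith)]; congr 1; ring
  simp_rw [e]
  rw [lintegral_mul_const _ (hB.pow_const _)]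
  have h5 : ∫⁻ x, B x ^ t ∂μ = N ^ t := by
    rw [hNN, lq_of_ne_top _ h2, ← htt, ← ENNReal.rpow_mul, one_div_mul_cancel (by linarith), ENNReal.rpow_one]
  rw [h5, ← ENNReal.rpow_neg, ← ENNReal.rpow_add _ _ h0 hN]
  rw [show t + -(t - 1) = 1 by ring, ENNReal.rpow_one]

theorem core1 {τ s : ℝ≥0∞} (h1 : 1 ≤ τ) (h2 : τ ≠ ∞) {s2 : ℝ} (s2le : s2 ≤ 1 - invR s)
    (a : 𝓢(EuclideanSpace ℝ (Fin d ⊕ Fin d), ℂ)) (f : 𝓢(EuclideanSpace ℝ (Fin d), ℂ))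
    {w : (Fin d → ℤ) → ℝ≥0∞} (hw : ∑' n, w n ≤ 1) :
    ∃ k : EuclideanSpace ℝ (Fin d) × EuclideanSpace ℝ (Fin d) → ℝ≥0∞, Measurable k ∧
      (∀ x, ∫⁻ y, k (x, y) ≤ 1) ∧
    ∑' n, (∫⁻ x in unitCube d, lqNorm volume τ (knBp a f (x + ev n))) * w n ^ (1 - invR s) ≤
      ∫⁻ ζ : EuclideanSpace ℝ (Fin d) × EuclideanSpace ℝ (Fin d),
      ∫⁻ z : EuclideanSpace ℝ (Fin d) × EuclideanSpace ℝ (Fin d),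
        ‖knV a z.1 z.2 ζ.1 ζ.2‖ₑ * (‖STFT f (z.1 + ζ.2) z.2‖ₑ * w (flr z.1) ^ s2 *
          k (z.1, z.2 + ζ.1) ^ (1 - invR τ)) ∂(volume.prod volume) ∂(volume.prod volume) := by
  have mB := knBp_meas a f
  have mN : Measurable fun x : EuclideanSpace ℝ (Fin d) => lqNorm volume τ (knBp a f x) := by
    have h := mB.comp (f := fun z : EuclideanSpace ℝ (Fin d) × EuclideanSpace ℝ (Fin d) => (z.2, z.1)) (by fun_prop)
    exact measurable_lq_param (V := fun z : EuclideanSpace ℝ (Fin d) × EuclideanSpace ℝ (Fin d) => knBp a f z.2 z.1) volume τ h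
  have mw : Measurable fun x : EuclideanSpace ℝ (Fin d) => w (flr x) :=
    (measurable_of_countable w).comp flr_measurable
  obtain ⟨k, hk⟩ : ∃ k : EuclideanSpace ℝ (Fin d) × EuclideanSpace ℝ (Fin d) → ℝ≥0∞, k = fun z =>
    knBp a f z.1 z.2 ^ τ.toReal / lqNorm volume τ (knBp a f z.1) ^ τ.toReal := ⟨_, rfl⟩
  have mk : Measurable k := by
    rw [hk]
    exact (mB.pow_const _).div ((mN.comp measurable_fst).pow_const _)
  have mBx : ∀ x, Measurable (knBp a f x) := fun x =>
    mB.comp (f := fun η => (x, η)) (by fun_prop)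
  refine ⟨k, mk, ?_, ?_⟩
  · intro x
    rw [hk]
    exact ((lq_repr_le h1 (mBx x) (knBp_fin a f x h1)).1).resolve_right h2
  have hV := (knV_meas a).enorm
  have mF := stft_enorm_measurable f
  obtain ⟨Φ, hΦ⟩ : ∃ Φ : (EuclideanSpace ℝ (Fin d) × EuclideanSpace ℝ (Fin d)) × (EuclideanSpace ℝ (Fin d) × EuclideanSpace ℝ (Fin d)) → ℝ≥0∞,
    Φ = fun v => ‖knV a v.1.1 v.1.2 v.2.1 v.2.2‖ₑ * (‖STFT f (v.1.1 + v.2.2) v.1.2‖ₑ * w (flr v.1.1) ^ s2 *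
          k (v.1.1, v.1.2 + v.2.1) ^ (1 - invR τ)) := ⟨_, rfl⟩
  have mΦ : Measurable Φ := by
    rw [hΦ]
    have g1 := mF.comp (f := fun v : (EuclideanSpace ℝ (Fin d) × EuclideanSpace ℝ (Fin d)) × (EuclideanSpace ℝ (Fin d) × EuclideanSpace ℝ (Fin d)) => (v.1.1 + v.2.2, v.1.2)) (by fun_prop)
    have g2 := mk.comp (f := fun v : (EuclideanSpace ℝ (Fin d) × EuclideanSpace ℝ (Fin d)) × (EuclideanSpace ℝ (Fin d) × EuclideanSpace ℝ (Fin d)) => (v.1.1, v.1.2 + v.2.1)) (by fun_prop)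
    have g3 := mw.comp (f := fun v : (EuclideanSpace ℝ (Fin d) × EuclideanSpace ℝ (Fin d)) × (EuclideanSpace ℝ (Fin d) × EuclideanSpace ℝ (Fin d)) => v.1.1) (by fun_prop)
    exact hV.mul ((g1.mul (g3.pow_const _)).mul (g2.pow_const _))
  have key : ∀ x, lqNorm volume τ (knBp a f x) * w (flr x) ^ s2 ≤
      ∫⁻ ω, ∫⁻ ξ, ∫⁻ y, Φ ((x, ω), (ξ, y)) := by
    intro x
    have mV1 : Measurable fun v : (EuclideanSpace ℝ (Fin d) × EuclideanSpace ℝ (Fin d)) × EuclideanSpace ℝ (Fin d) =>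
        Φ ((x, v.1.2), (v.1.1 - v.1.2, v.2)) :=
      mΦ.comp (f := fun v : (EuclideanSpace ℝ (Fin d) × EuclideanSpace ℝ (Fin d)) × EuclideanSpace ℝ (Fin d) => ((x, v.1.2), (v.1.1 - v.1.2, v.2))) (by fun_prop)
    have mV2 : Measurable fun v : EuclideanSpace ℝ (Fin d) × EuclideanSpace ℝ (Fin d) =>
        ∫⁻ y, Φ ((x, v.2), (v.1 - v.2, y)) := mV1.lintegral_prod_right'
    have mG1 : Measurable fun v : (EuclideanSpace ℝ (Fin d) × EuclideanSpace ℝ (Fin d)) × EuclideanSpace ℝ (Fin d) =>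
        ‖knV a x v.1.2 (v.1.1 - v.1.2) v.2‖ₑ * ‖STFT f (x + v.2) v.1.2‖ₑ :=
      (hV.comp (f := fun v : (EuclideanSpace ℝ (Fin d) × EuclideanSpace ℝ (Fin d)) × EuclideanSpace ℝ (Fin d) => ((x, v.1.2), (v.1.1 - v.1.2, v.2))) (by fun_prop)).mul
        (mF.comp (f := fun v : (EuclideanSpace ℝ (Fin d) × EuclideanSpace ℝ (Fin d)) × EuclideanSpace ℝ (Fin d) => (x + v.2, v.1.2)) (by fun_prop))
    have mG2 : Measurable fun v : EuclideanSpace ℝ (Fin d) × EuclideanSpace ℝ (Fin d) =>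
        ∫⁻ y, ‖knV a x v.2 (v.1 - v.2) y‖ₑ * ‖STFT f (x + y) v.2‖ₑ := mG1.lintegral_prod_right'
    calc _ ≤ (∫⁻ η, knBp a f x η * k (x, η) ^ (1 - invR τ)) * w (flr x) ^ s2 := by
          gcongr
          rw [hk]
          exact dual_repr h1 h2 (mBx x) (knBp_fin a f x h1)
      _ = ∫⁻ η, knBp a f x η * k (x, η) ^ (1 - invR τ) * w (flr x) ^ s2 := by
          rw [lintegral_mul_const]
          exact (mBx x).mul ((mk.comp (f := fun η => (x, η)) (by fun_prop)).pow_const _)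
      _ = ∫⁻ η, ∫⁻ ω, ∫⁻ y, Φ ((x, ω), (η - ω, y)) := by
          refine lintegral_congr fun η => ?_
          unfold knBp
          have i2 : Measurable fun ω => ∫⁻ y, ‖knV a x ω (η - ω) y‖ₑ * ‖STFT f (x + y) ω‖ₑ :=
            mG2.comp (f := fun ω => (η, ω)) (by fun_prop)
          rw [mul_assoc, ← lintegral_mul_const _ i2]
          refine lintegral_congr fun ω => ?_
          have i1 : Measurable fun y => ‖knV a x ω (η - ω) y‖ₑ * ‖STFT f (x + y) ω‖ₑ :=
            mG1.comp (f := fun y => ((η, ω), y)) (by fun_prop)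
          rw [← lintegral_mul_const _ i1]
          refine lintegral_congr fun y => ?_
          have e : ω + (η - ω) = η := by abel
          simp only [hΦ, e]
          ring
      _ = ∫⁻ ω, ∫⁻ η, ∫⁻ y, Φ ((x, ω), (η - ω, y)) := lintegral_lintegral_swap mV2.aemeasurable
      _ = _ := by
          refine lintegral_congr fun ω => ?_
          exact lintegral_sub_right_eq_self (fun ξ => ∫⁻ y, Φ ((x, ω), (ξ, y))) ω
  have hw1 : ∀ n, w n ≤ 1 := fun n => (ENNReal.le_tsum n).trans hw
  calc _ ≤ ∑' n : Fin d → ℤ, ∫⁻ x in unitCube d, lqNorm volume τ (knBp a f (x + ev n)) * w (flr (x + ev n)) ^ s2 := by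
        refine ENNReal.tsum_le_tsum fun n => ?_
        have i1 : Measurable fun x => lqNorm volume τ (knBp a f (x + ev n)) :=
          mN.comp (f := fun x => x + ev n) (by fun_prop)
        rw [← lintegral_mul_const _ i1]
        refine setLIntegral_mono' cube_measurable fun x hx => ?_
        rw [(flr_add x n).2 hx]
        refine mul_le_mul' le_rfl ?_
        exact ENNReal.rpow_le_rpow_of_exponent_ge (hw1 n) s2le
    _ = ∫⁻ x, lqNorm volume τ (knBp a f x) * w (flr x) ^ s2 := 
        (lint_cubes (fun x => lqNorm volume τ (knBp a f x) * w (flr x) ^ s2)).symm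
    _ ≤ ∫⁻ x, ∫⁻ ω, ∫⁻ ξ, ∫⁻ y, Φ ((x, ω), (ξ, y)) := lintegral_mono key
    _ = ∫⁻ x, ∫⁻ ω, ∫⁻ ζ : EuclideanSpace ℝ (Fin d) × EuclideanSpace ℝ (Fin d), Φ ((x, ω), ζ) ∂(volume.prod volume) := by
        refine lintegral_congr fun x => lintegral_congr fun ω => ?_
        rw [lintegral_prod]
        exact (mΦ.comp (f := fun ζ : EuclideanSpace ℝ (Fin d) × EuclideanSpace ℝ (Fin d) => ((x, ω), ζ)) (by fun_prop)).aemeasurable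
    _ = ∫⁻ z : EuclideanSpace ℝ (Fin d) × EuclideanSpace ℝ (Fin d), ∫⁻ ζ : EuclideanSpace ℝ (Fin d) × EuclideanSpace ℝ (Fin d), Φ (z, ζ) ∂(volume.prod volume) ∂(volume.prod volume) := by
        have h := mΦ.lintegral_prod_right' (ν := (volume : Measure (EuclideanSpace ℝ (Fin d))).prod volume)
        rw [lintegral_prod _ h.aemeasurable]
    _ = ∫⁻ ζ : EuclideanSpace ℝ (Fin d) × EuclideanSpace ℝ (Fin d), ∫⁻ z : EuclideanSpace ℝ (Fin d) × EuclideanSpace ℝ (Fin d), Φ (z, ζ) ∂(volume.prod volume) ∂(volume.prod volume) :=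
        lintegral_lintegral_swap mΦ.aemeasurable
    _ = _ := by rw [hΦ]
end

section
variable {d : ℕ}

theorem invR_le_one {p : ℝ≥0∞} (hp : 1 ≤ p) : invR p ≤ 1 := by
  unfold invR
  have : p⁻¹ ≤ 1 := ENNReal.inv_le_one.2 hp
  exact ENNReal.toReal_mono ENNReal.one_ne_top this

theorem count_repr {ι : Type*} [Countable ι] [MeasurableSpace ι] [MeasurableSingletonClass ι]
    {s : ℝ≥0∞} (hs : 1 ≤ s) (A : ι → ℝ≥0∞) (hA : lqNorm Measure.count s A ≠ ∞) {s1 : ℝ} (s10 : 0 ≤ s1)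
    (h1 : s1 ≤ invR s) :
    ∃ m : ι → ℝ≥0∞, ∑' i, m i ≤ 1 ∧ ∀ i, A i ≤ lqNorm Measure.count s A * m i ^ s1 := by
  obtain ⟨g1, g2⟩ := lq_repr_le hs (measurable_of_countable A) hA
  have g3 : ∀ i, A i ≤ _ := fun i => (Measure.ae_count_iff.1 g2) i
  rcases g1 with g1 | g1
  · rw [lintegral_count] at g1
    refine ⟨_, g1, fun i => (g3 i).trans ?_⟩
    refine mul_le_mul' le_rfl ?_
    exact ENNReal.rpow_le_rpow_of_exponent_ge ((ENNReal.le_tsum i).trans g1) h1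
  · refine ⟨fun _ => 0, by simp, fun i => ?_⟩
    have hi : invR s = 0 := by rw [g1]; simp [invR]
    have : s1 = 0 := by linarith
    have := g3 i
    rw [hi] at this
    simpa [‹s1 = 0›] using this

theorem core2 {p0 q τ σ s : ℝ≥0∞} (hp0 : 1 < p0) (hq : 1 ≤ q) (hqt : q ≠ ∞) (hpq : invR p0 ≤ invR q)
    (h1 : 1 ≤ τ) (h2 : τ ≠ ∞) (hσ : 1 ≤ σ) (hs : 1 ≤ s) {s1 s2 : ℝ} (s10 : 0 ≤ s1) (s20 : 0 ≤ s2)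
    (s1le : s1 ≤ invR s) (s2le : s2 ≤ 1 - invR s) (s1p : s1 ≤ 1 - invR p0) (s2p : s2 ≤ 1 - invR p0)
    (hss : s1 + s2 = (1 - invR p0) + (1 - invR q))
    (hap : invR σ ≤ 1 - invR p0) (hbp : 1 - invR τ ≤ 1 - invR p0)
    (hab : invR σ + (1 - invR τ) = (1 - invR p0) + (1 - invR q))
    (a : 𝓢(EuclideanSpace ℝ (Fin d ⊕ Fin d), ℂ)) (f : 𝓢(EuclideanSpace ℝ (Fin d), ℂ))
    (A : (Fin d → ℤ) → ℝ≥0∞)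
    (hA : ∀ y, lqNorm volume σ (fun w => ‖STFT f y w‖ₑ) ≤ A (flr y))
    (hM : lqNorm Measure.count s A ≠ ∞ ∨ modNorm p0 q a = 0)
    {w : (Fin d → ℤ) → ℝ≥0∞} (hw : ∑' n, w n ≤ 1) :
    ∑' n, (∫⁻ x in unitCube d, lqNorm volume τ (knBp a f (x + ev n))) * w n ^ (1 - invR s) ≤
      lqNorm Measure.count s A * modNorm p0 q a := by
  obtain ⟨k, mk, ik, H⟩ := core1 (s := s) h1 h2 s2le a f hw
  refine H.trans ?_
  have hV := (knV_meas a).enorm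
  have hmod : modNorm p0 q a = lqNorm ((volume : Measure (EuclideanSpace ℝ (Fin d))).prod volume) q fun ζ =>
      lqNorm ((volume : Measure (EuclideanSpace ℝ (Fin d))).prod volume) p0 fun z =>
        ‖knV a z.1 z.2 ζ.1 ζ.2‖ₑ := by
    unfold modNorm
    rw [lq_pair]
    congr 1
    funext ζ
    rw [lq_pair]
    rfl
  by_cases h0 : modNorm p0 q a = 0
  · rw [h0, mul_zero, nonpos_iff_eq_zero]
    rw [hmod] at h0
    have mi := measurable_lq_param (V := fun v : (EuclideanSpace ℝ (Fin d) × EuclideanSpace ℝ (Fin d)) × (EuclideanSpace ℝ (Fin d) × EuclideanSpace ℝ (Fin d)) => ‖knV a v.1.1 v.1.2 v.2.1 v.2.2‖ₑ) ((volume : Measure (EuclideanSpace ℝ (Fin d))).prod volume) p0 hV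
    have z1 := lq_eq_zero_ae hq mi h0
    refine (lintegral_congr_ae (g := fun _ => 0) ?_).trans lintegral_zero
    filter_upwards [z1] with ζ hζ
    have z2 := lq_eq_zero_ae hp0.le (hV.comp (f := fun z : EuclideanSpace ℝ (Fin d) × EuclideanSpace ℝ (Fin d) => (z, ζ)) (by fun_prop)) hζ
    refine (lintegral_congr_ae (g := fun _ => 0) ?_).trans lintegral_zero
    filter_upwards [z2] with z hz
    have hz' : ‖knV a z.1 z.2 ζ.1 ζ.2‖ₑ = 0 := hz
    rw [hz', zero_mul]
  have hM := hM.resolve_right h0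
  obtain ⟨mf, hmf, hAm⟩ := count_repr hs A hM s10 s1le
  obtain ⟨M, hMM⟩ : ∃ M, M = lqNorm Measure.count s A := ⟨_, rfl⟩
  rw [← hMM] at hM hAm ⊢
  have mF := stft_enorm_measurable f
  have mN : Measurable fun y : EuclideanSpace ℝ (Fin d) => lqNorm volume σ (fun w => ‖STFT f y w‖ₑ) := by
    have h := mF.comp (f := fun z : EuclideanSpace ℝ (Fin d) × EuclideanSpace ℝ (Fin d) => (z.2, z.1)) (by fun_prop)
    exact measurable_lq_param (V := fun z : EuclideanSpace ℝ (Fin d) × EuclideanSpace ℝ (Fin d) => ‖STFT f z.2 z.1‖ₑ) volume σ h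
  have mFy : ∀ y, Measurable fun w => ‖STFT f y w‖ₑ := fun y =>
    mF.comp (f := fun w => (y, w)) (by fun_prop)
  have mflr : ∀ v : (Fin d → ℤ) → ℝ≥0∞, Measurable fun x : EuclideanSpace ℝ (Fin d) => v (flr x) := fun v =>
    (measurable_of_countable v).comp flr_measurable
  have iflr : ∀ v : (Fin d → ℤ) → ℝ≥0∞, ∫⁻ x : EuclideanSpace ℝ (Fin d), v (flr x) = ∑' n, v n := by
    intro v
    rw [lint_cubes (fun x => v (flr x))]
    congr 1
    funext n
    calc _ = ∫⁻ x in unitCube d, v n := by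
          refine setLIntegral_congr_fun cube_measurable fun x hx => ?_
          simp only [(flr_add x n).2 hx]
      _ = v n := by rw [lintegral_const, measure_univ, mul_one]
  have hmf1 : ∀ n, mf n ≤ 1 := fun n => (ENNReal.le_tsum n).trans hmf
  have hNt : ∀ y, lqNorm volume σ (fun w => ‖STFT f y w‖ₑ) ≠ ∞ := by
    intro y
    refine ne_top_of_le_ne_top ?_ ((hA y).trans (hAm _))
    refine ENNReal.mul_ne_top hM (ne_top_of_le_ne_top ENNReal.one_ne_top (ENNReal.rpow_le_one (hmf1 _) s10))
  obtain ⟨u, hu⟩ : ∃ u : EuclideanSpace ℝ (Fin d) × EuclideanSpace ℝ (Fin d) → ℝ≥0∞, u = fun z =>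
    ‖STFT f z.1 z.2‖ₑ ^ σ.toReal / lqNorm volume σ (fun w => ‖STFT f z.1 w‖ₑ) ^ σ.toReal := ⟨_, rfl⟩
  have mu : Measurable u := by
    rw [hu]
    exact (mF.pow_const _).div ((mN.comp measurable_fst).pow_const _)
  have iu : invR σ = 0 ∨ ∀ x, ∫⁻ y, u (x, y) ≤ 1 := by
    by_cases hst : σ = ∞
    · left; rw [hst]; simp [invR]
    · right; intro x; rw [hu]
      exact ((lq_repr_le hσ (mFy x) (hNt x)).1).resolve_right hst
  have hF : ∀ y, ∀ᵐ ω, ‖STFT f y ω‖ₑ ≤ M * (mf (flr y) ^ s1 * u (y, ω) ^ invR σ) := by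
    intro y
    filter_upwards [(lq_repr_le hσ (mFy y) (hNt y)).2] with ω hω
    rw [← mul_assoc]
    refine hω.trans ?_
    rw [hu]
    exact mul_le_mul' ((hA y).trans (hAm _)) le_rfl
  have T := trilin (volume : Measure (EuclideanSpace ℝ (Fin d))) hp0 hq hqt hpq hV
    (mflr mf) (mflr w) mu mk ((iflr mf).le.trans hmf) ((iflr w).le.trans hw)
    s10 s20 (invR_nonneg σ) (b := 1 - invR τ) (sub_nonneg.2 (invR_le_one h1)) iu (Or.inr ik) s1p s2p hap hbp hss hab
  rw [← hmod] at T
  refine le_trans ?_ (mul_le_mul' (le_refl M) T)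
  rw [← lintegral_const_mul' _ _ hM]
  refine lintegral_mono fun ζ => ?_
  rw [← lintegral_const_mul' _ _ hM]
  have mk2 := mk.comp (f := fun z : EuclideanSpace ℝ (Fin d) × EuclideanSpace ℝ (Fin d) => (z.1, z.2 + ζ.1)) (by fun_prop)
  have mu2 := mu.comp (f := fun z : EuclideanSpace ℝ (Fin d) × EuclideanSpace ℝ (Fin d) => (z.1 + ζ.2, z.2)) (by fun_prop)
  have mF2 := mF.comp (f := fun z : EuclideanSpace ℝ (Fin d) × EuclideanSpace ℝ (Fin d) => (z.1 + ζ.2, z.2)) (by fun_prop)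
  have mV2 := hV.comp (f := fun z : EuclideanSpace ℝ (Fin d) × EuclideanSpace ℝ (Fin d) => (z, ζ)) (by fun_prop)
  have mw2 := (mflr w).comp (f := fun z : EuclideanSpace ℝ (Fin d) × EuclideanSpace ℝ (Fin d) => z.1) (by fun_prop)
  have mm2 := (mflr mf).comp (f := fun z : EuclideanSpace ℝ (Fin d) × EuclideanSpace ℝ (Fin d) => z.1 + ζ.2) (by fun_prop)
  have mL : Measurable fun z : EuclideanSpace ℝ (Fin d) × EuclideanSpace ℝ (Fin d) => ‖knV a z.1 z.2 ζ.1 ζ.2‖ₑ * (‖STFT f (z.1 + ζ.2) z.2‖ₑ * w (flr z.1) ^ s2 *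
          k (z.1, z.2 + ζ.1) ^ (1 - invR τ)) :=
    mV2.mul ((mF2.mul (mw2.pow_const _)).mul (mk2.pow_const _))
  have mR : Measurable fun z : EuclideanSpace ℝ (Fin d) × EuclideanSpace ℝ (Fin d) => M * (‖knV a z.1 z.2 ζ.1 ζ.2‖ₑ *
      (mf (flr (z.1 + ζ.2)) ^ s1 * u (z.1 + ζ.2, z.2) ^ invR σ * w (flr z.1) ^ s2 *
          k (z.1, z.2 + ζ.1) ^ (1 - invR τ))) :=
    (mV2.mul ((((mm2.pow_const _).mul (mu2.pow_const _)).mul (mw2.pow_const _)).mul (mk2.pow_const _))).const_mul M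
  rw [lintegral_prod _ mL.aemeasurable, lintegral_prod _ mR.aemeasurable]
  refine lintegral_mono fun x => lintegral_mono_ae ?_
  filter_upwards [hF (x + ζ.2)] with ω hω
  calc _ ≤ ‖knV a x ω ζ.1 ζ.2‖ₑ * ((M * (mf (flr (x + ζ.2)) ^ s1 * u (x + ζ.2, ω) ^ invR σ)) * w (flr x) ^ s2 *
          k (x, ω + ζ.1) ^ (1 - invR τ)) := by gcongr
    _ = _ := by ring
end

section

theorem invR_dual {p : ℝ≥0∞} (hp : 1 ≤ p) : invR (dualExp p) = 1 - invR p := by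
  unfold dualExp
  split_ifs with h h'
  · rw [h]; simp [invR]
  · rw [h']; simp [invR]
  · have h1 := one_le_toReal hp h'
    have h2 : p.toReal ≠ 1 := by
      intro e
      exact h ((ENNReal.toReal_eq_one_iff p).1 e)
    have h3 : 1 < p.toReal := lt_of_le_of_ne h1 (Ne.symm h2)
    rw [invR_eq, invR_eq, ENNReal.toReal_ofReal (div_nonneg (by linarith) (by linarith))]
    have : p.toReal - 1 ≠ 0 := by linarith
    field_simp

theorem invR_anti {p q : ℝ≥0∞} (hp : 1 ≤ p) (h : p ≤ q) : invR q ≤ invR p := by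
  unfold invR
  refine ENNReal.toReal_mono ?_ (ENNReal.inv_le_inv.2 h)
  exact ENNReal.inv_ne_top.2 (zero_lt_one.trans_le hp).ne'

theorem le_of_invR {p q : ℝ≥0∞} (hp : 1 ≤ p) (hq : 1 ≤ q) (h : invR q ≤ invR p) : p ≤ q := by
  unfold invR at h
  have h1 := (ENNReal.toReal_le_toReal (ENNReal.inv_ne_top.2 (zero_lt_one.trans_le hq).ne')
    (ENNReal.inv_ne_top.2 (zero_lt_one.trans_le hp).ne')).1 h
  exact ENNReal.inv_le_inv.1 h1

theorem exists_exp {t : ℝ} (h0 : 0 ≤ t) (h1 : t ≤ 1) : ∃ e : ℝ≥0∞, 1 ≤ e ∧ invR e = t := by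
  refine ⟨(ENNReal.ofReal t)⁻¹, ?_, ?_⟩
  · rw [ENNReal.one_le_inv]
    exact ENNReal.ofReal_le_one.2 h1
  · rw [invR, inv_inv, ENNReal.toReal_ofReal h0]

theorem final_est (d : ℕ) (p q r s : ℝ≥0∞)
    (hp : 1 ≤ p) (hq : 1 ≤ q) (hr : 1 ≤ r) (hs : 1 ≤ s)
    (h1 : |invR r - 1 / 2| + invR (dualExp q) ≤ invR p)
    (h2 : q ≤ min (min r (dualExp r)) (min s (dualExp s))) :
    ∃ C : ℝ, 0 < C ∧
      ∀ (a : SchwartzMap (EuclideanSpace ℝ (Fin d ⊕ Fin d)) ℂ)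
        (f : SchwartzMap (EuclideanSpace ℝ (Fin d)) ℂ),
        wNorm d r s (KNop ⇑a ⇑f) ≤
          ENNReal.ofReal C * modNorm p q ⇑a * wNorm d r s ⇑f := by
  rw [invR_dual hq] at h1
  simp only [le_min_iff] at h2
  obtain ⟨⟨k1, k2⟩, k3, k4⟩ := h2
  replace k1 := invR_anti hq k1
  replace k2 := invR_anti hq k2
  replace k3 := invR_anti hq k3
  replace k4 := invR_anti hq k4
  rw [invR_dual hr] at k2
  rw [invR_dual hs] at k4
  have hQ1 := invR_le_one hq
  have hS1 := invR_le_one hs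
  have hS0 := invR_nonneg s
  have hR1 := invR_le_one hr
  have hR0 := invR_nonneg r
  obtain ⟨R, hR⟩ : ∃ R, R = invR r := ⟨_, rfl⟩
  obtain ⟨S, hS⟩ : ∃ S, S = invR s := ⟨_, rfl⟩
  obtain ⟨Q, hQ⟩ : ∃ Q, Q = invR q := ⟨_, rfl⟩
  rw [← hR] at k1 k2 hR1 hR0 h1
  rw [← hS] at k3 k4 hS1 hS0
  rw [← hQ] at k1 k2 k3 k4 hQ1 h1
  have hab1 : |R - 1 / 2| ≤ Q - 1 / 2 := abs_le.2 ⟨by linarith, by linarith⟩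
  have hab0 := abs_nonneg (R - 1 / 2)
  obtain ⟨p0, hp0, ep0⟩ := exists_exp (t := |R - 1 / 2| + (1 - Q)) (by linarith) (by linarith)
  have i2 : invR 2 = 1 / 2 := by simp [invR]
  have i1 : invR 1 = 1 := by simp [invR]
  have m1 : max R (1 / 2) ≤ 1 := max_le hR1 (by norm_num)
  have m2 : 1 / 2 ≤ max R (1 / 2) := le_max_right _ _
  have m3 : max (1 - R) (1 / 2) ≤ 1 := max_le (by linarith) (by norm_num)
  have m4 : 1 / 2 ≤ max (1 - R) (1 / 2) := le_max_right _ _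
  obtain ⟨θ, hθ, eθ⟩ := exists_exp (t := max R (1 / 2)) (by linarith) m1
  obtain ⟨σ, hσ, eσ⟩ := exists_exp (t := 1 - max R (1 / 2)) (by linarith) (by linarith)
  obtain ⟨τ, hτ, eτ⟩ := exists_exp (t := max (1 - R) (1 / 2)) (by linarith) m3
  obtain ⟨ρ, hρ, eρ⟩ := exists_exp (t := 1 - max (1 - R) (1 / 2)) (by linarith) (by linarith)
  have one2 : (1 : ℝ≥0∞) ≤ 2 := by norm_num
  have τ2 : τ ≤ 2 := le_of_invR hτ one2 (by rw [i2, eτ]; exact m4)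
  have θ2 : θ ≤ 2 := le_of_invR hθ one2 (by rw [i2, eθ]; exact m2)
  obtain ⟨C1, hC1, H1⟩ := out_est d hτ τ2 hρ (by rw [eτ, eρ]; ring) hr
    (le_of_invR hr hρ (by rw [eρ, ← hR]; have := le_max_left (1 - R) (1 / 2); linarith))
  obtain ⟨C2, hC2, H2⟩ := in_est d hθ θ2 hσ (by rw [eθ, eσ]; ring) (r := r) (s := s)
    (le_of_invR hθ hr (by rw [eθ, ← hR]; exact le_max_left _ _)) hs
  obtain ⟨C3, hC3, H3⟩ := mod_embed (Fin d ⊕ Fin d) hp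
    (le_of_invR hp hp0 (by rw [ep0]; exact h1)) hq
  have hp01 : 1 < p0 := by
    refine lt_of_le_of_ne hp0 fun h => ?_
    rw [← h, i1] at ep0
    linarith
  have hqt : q ≠ ∞ := by
    intro h
    rw [h] at hQ
    simp [invR] at hQ
    linarith
  have eab : (1 - max R (1 / 2)) + (1 - max (1 - R) (1 / 2)) = 1 - |R - 1 / 2| := by
    rcases le_total R (1 / 2) with h | h
    · rw [max_eq_right h, max_eq_left (by linarith), abs_of_nonpos (by linarith)]; ring
    · rw [max_eq_left h, max_eq_right (by linarith), abs_of_nonneg (by linarith)]; ring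
  obtain ⟨s1, es1⟩ : ∃ s1, s1 = max (1 - Q) (S - |R - 1 / 2|) := ⟨_, rfl⟩
  have s1a : 1 - Q ≤ s1 := by rw [es1]; exact le_max_left _ _
  have s1b : S - |R - 1 / 2| ≤ s1 := by rw [es1]; exact le_max_right _ _
  have s1c : s1 ≤ S := by rw [es1]; exact max_le (by linarith) (by linarith)
  have s1d : s1 ≤ Q - |R - 1 / 2| := by rw [es1]; exact max_le (by linarith) (by linarith)
  have hCt : C1 * C2 * C3 + 1 ≠ ∞ :=
    ENNReal.add_ne_top.2 ⟨ENNReal.mul_ne_top (ENNReal.mul_ne_top hC1 hC2) hC3, ENNReal.one_ne_top⟩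
  refine ⟨(C1 * C2 * C3 + 1).toReal, ENNReal.toReal_pos (by simp) hCt, fun a f => ?_⟩
  rw [ENNReal.ofReal_toReal hCt]
  by_cases hinf : wNorm d r s f = ∞ ∧ modNorm p q a ≠ 0
  · rw [hinf.1, ENNReal.mul_top]
    · exact le_top
    · exact mul_ne_zero (by simp) hinf.2
  obtain ⟨A, hA1, hA2⟩ := H2 f
  have hM : lqNorm Measure.count s A ≠ ∞ ∨ modNorm p0 q a = 0 := by
    by_cases hW : wNorm d r s f = ∞
    · right
      have h0 : modNorm p q a = 0 := by
        by_contra h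
        exact hinf ⟨hW, h⟩
      have := H3 a
      rw [h0, mul_zero] at this
      exact le_antisymm this zero_le
    · left
      exact ne_top_of_le_ne_top (ENNReal.mul_ne_top hC2 hW) hA1
  calc wNorm d r s (KNop a f) ≤ C1 * C2 * C3 * modNorm p q a * wNorm d r s f := by
        refine lq_count_dual hs _ _ fun w hw => ?_
        calc _ ≤ ∑' n : Fin d → ℤ, C1 * ((∫⁻ x in unitCube d, lqNorm volume τ (knBp a f (x + ev n))) * w n ^ (1 - invR s)) := by
              refine ENNReal.tsum_le_tsum fun n => ?_
              rw [← mul_assoc]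
              exact mul_le_mul' (H1 a f n) le_rfl
          _ = C1 * ∑' n : Fin d → ℤ, (∫⁻ x in unitCube d, lqNorm volume τ (knBp a f (x + ev n))) * w n ^ (1 - invR s) := ENNReal.tsum_mul_left
          _ ≤ C1 * (lqNorm Measure.count s A * modNorm p0 q a) := by
              gcongr
              refine core2 (s1 := s1) (s2 := (1 - |R - 1 / 2|) - s1) (σ := σ) hp01 hq hqt ?_ hτ
                (ne_top_of_le_ne_top (by norm_num) τ2) hσ hs ?_ ?_ ?_ ?_ ?_ ?_ ?_ ?_ ?_ ?_ a f A hA2 hM hw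
              · rw [ep0, ← hQ]; linarith
              · linarith
              · linarith
              · rw [← hS]; exact s1c
              · rw [← hS]; linarith
              · rw [ep0]; linarith
              · rw [ep0]; linarith
              · rw [ep0, ← hQ]; ring
              · rw [ep0, eσ]; linarith
              · rw [ep0, eτ]; linarith
              · rw [ep0, ← hQ, eσ, eτ, eab]; ring
          _ ≤ C1 * ((C2 * wNorm d r s f) * (C3 * modNorm p q a)) := by
              gcongr
              exact H3 a
          _ = _ := by ring
    _ ≤ _ := by
        gcongr
        exact le_self_add
end

/-- if `1/p ≥ |1/r − 1/2| + 1/q'` and `q ≤ min{r,r',s,s'}`, then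
symbols in `M^{p,q}` give operators bounded on `W(L^r,L^s)`. -/
theorem kn_Mpq_bounded_on_amalgam (d : ℕ) (p q r s : ℝ≥0∞)
    (hp : 1 ≤ p) (hq : 1 ≤ q) (hr : 1 ≤ r) (hs : 1 ≤ s)
    (h1 : |invR r - 1 / 2| + invR (dualExp q) ≤ invR p)
    (h2 : q ≤ min (min r (dualExp r)) (min s (dualExp s))) :
    ∃ C : ℝ, 0 < C ∧
      ∀ (a : SchwartzMap (EuclideanSpace ℝ (Fin d ⊕ Fin d)) ℂ)
        (f : SchwartzMap (EuclideanSpace ℝ (Fin d)) ℂ),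
        wNorm d r s (KNop ⇑a ⇑f) ≤
          ENNReal.ofReal C * modNorm p q ⇑a * wNorm d r s ⇑f := by
  exact final_est d p q r s hp hq hr hs h1 h2
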